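/- arXiv:2412.21048 — 2 statements merged into one kernel-verified Lean document; each statement's English description precedes it below -/
import Mathlib

section
/- There exists a constant C (depending only on Ω, ω, n) such that for every f : ℝⁿ → ℝ which is bounded, Hölder continuous of some exponent β ∈ (0,1), supported in the closure of Ω, and satisfies ∫_{ℝⁿ} f = 0, the Bogovskiĭ field u of f is continuously differentiable on ℝⁿ, vanishes outside the closure of Ω, satisfies div u = f on Ω, and for all indices 1 ≤ i, j ≤ n one has ‖∂u_i/∂x_j‖_{bmo} ≤ C ‖f‖_{bmo}. -/
open MeasureTheory Metric Set Filter Topology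

/-- The local BMO norm
`‖g‖_{bmo} = sup_{0 < r ≤ 1} ⨍_{B(x,r)} |g − g_{B(x,r)}| + sup_{r > 1} ⨍_{B(x,r)} |g|`. -/
noncomputable def bmoNorm (n : ℕ) (g : EuclideanSpace ℝ (Fin n) → ℝ) : ℝ :=
  (⨆ p : {p : EuclideanSpace ℝ (Fin n) × ℝ // 0 < p.2 ∧ p.2 ≤ 1},
    ⨍ y in Metric.ball p.1.1 p.1.2, |g y - ⨍ z in Metric.ball p.1.1 p.1.2, g z|) +
  ⨆ p : {p : EuclideanSpace ℝ (Fin n) × ℝ // 1 < p.2},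
    ⨍ y in Metric.ball p.1.1 p.1.2, |g y|

set_option linter.unusedSectionVars false

namespace Bog

/-- Euclidean space. -/
abbrev E (n : ℕ) := EuclideanSpace ℝ (Fin n)

/-- Regularity of kernels: continuous, bounded, compactly supported in the second variable and
Lipschitz. -/
structure Ker {n : ℕ} {F : Type*} [NormedAddCommGroup F] [NormedSpace ℝ F]
    (Ψ : E n → E n → F) (A R : ℝ) : Prop where
  cont : Continuous (fun p : E n × E n => Ψ p.1 p.2)
  bound : ∀ y w, ‖Ψ y w‖ ≤ A
  supp : ∀ y w, R ≤ ‖w‖ → Ψ y w = 0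
  lip : ∀ y y' w w', ‖Ψ y w - Ψ y' w'‖ ≤ A * (‖y - y'‖ + ‖w - w'‖)
  posA : 0 < A
  posR : 0 < R

/-- The operator at scale `s`. -/
noncomputable def q {n : ℕ} {F : Type*} [NormedAddCommGroup F] [NormedSpace ℝ F]
    (Ψ : E n → E n → F) (f : E n → ℝ) (s : ℝ) (x : E n) : F :=
  ∫ w, f (x - s • w) • Ψ (x - s • w) w

/-- Volume of the ball of radius `r`. -/
noncomputable def V (n : ℕ) (r : ℝ) : ℝ := volume.real (ball (0 : E n) r)

section A
variable {n : ℕ} {F : Type*} [NormedAddCommGroup F] [NormedSpace ℝ F]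

lemma vol_ball (x : E n) (r : ℝ) : volume.real (ball x r) = V n r := by
  unfold V
  exact Measure.addHaar_real_ball_center volume x r

lemma V_nonneg (r : ℝ) : 0 ≤ V n r := measureReal_nonneg

lemma V_pos {r : ℝ} (hr : 0 < r) : 0 < V n r := by
  unfold V
  exact ENNReal.toReal_pos (measure_ball_pos _ _ hr).ne' measure_ball_lt_top.ne

lemma V_scale {r : ℝ} (hr : 0 < r) : V n r = r ^ n * V n 1 := by
  unfold V
  have := Measure.addHaar_ball_of_pos (volume : Measure (E n)) 0 hr
  unfold Measure.real
  rw [this, ENNReal.toReal_mul, ENNReal.toReal_ofReal (by positivity)]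
  simp

lemma V_mono {r r' : ℝ} (h : r ≤ r') : V n r ≤ V n r' := by
  unfold V
  exact measureReal_mono (ball_subset_ball h) measure_ball_lt_top.ne

lemma norm_integral_le_of_ball {g : E n → F} {c R : ℝ}
    (h : ∀ w, ‖w‖ < R → ‖g w‖ ≤ c) (h0 : ∀ w, R ≤ ‖w‖ → g w = 0) :
    ‖∫ w, g w‖ ≤ c * V n R := by
  have e : ∫ w in ball (0 : E n) R, g w = ∫ w, g w := by
    apply setIntegral_eq_integral_of_forall_compl_eq_zero
    intro w hw
    apply h0
    simpa using hw
  rw [← e]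
  unfold V
  apply norm_setIntegral_le_of_norm_le_const measure_ball_lt_top
  intro w hw
  exact h w (by simpa using hw)

lemma integrable_of_ball {g : E n → F} {R : ℝ} (hg : Continuous g)
    (h0 : ∀ w, R ≤ ‖w‖ → g w = 0) : Integrable g := by
  apply hg.integrable_of_hasCompactSupport
  apply HasCompactSupport.of_support_subset_isCompact (isCompact_closedBall (0 : E n) R)
  intro w hw
  simp only [mem_closedBall, dist_zero_right]
  by_contra hc
  exact hw (h0 w (not_le.1 hc).le)

variable {Ψ : E n → E n → F} {A R : ℝ} {f : E n → ℝ}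

lemma Ker.cont_comp (hΨ : Ker Ψ A R) {X : Type*} [TopologicalSpace X] {a b : X → E n}
    (ha : Continuous a) (hb : Continuous b) : Continuous (fun x => Ψ (a x) (b x)) :=
  hΨ.cont.comp (ha.prodMk hb)

lemma q_integrable (hΨ : Ker Ψ A R) (hf : Continuous f) (s : ℝ) (x : E n) :
    Integrable (fun w => f (x - s • w) • Ψ (x - s • w) w) := by
  apply integrable_of_ball (R := R)
  · apply Continuous.smul (by fun_prop)
    exact hΨ.cont_comp (by fun_prop) (by fun_prop)
  · intro w hw
    rw [hΨ.supp _ _ hw, smul_zero]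

lemma q_norm_le (hΨ : Ker Ψ A R) {M : ℝ} (hM : ∀ x, |f x| ≤ M) (s : ℝ) (x : E n) :
    ‖q Ψ f s x‖ ≤ M * A * V n R := by
  apply norm_integral_le_of_ball
  · intro w _
    rw [norm_smul]
    have h0 : 0 ≤ M := (abs_nonneg _).trans (hM 0)
    exact mul_le_mul (hM _) (hΨ.bound _ _) (norm_nonneg _) h0
  · intro w hw
    rw [hΨ.supp _ _ hw, smul_zero]

lemma q_hoelder (hΨ : Ker Ψ A R) (h0 : ∀ y, ∫ w, Ψ y w = 0) {M K β : ℝ}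
    (hM : ∀ x, |f x| ≤ M) (hf : Continuous f) (hβ : 0 < β) (hβ1 : β < 1) (hK0 : 0 ≤ K)
    (hK : ∀ x y, |f x - f y| ≤ K * ‖x - y‖ ^ β) {s : ℝ} (hs : 0 < s) (hs1 : s ≤ 1) (x : E n) :
    ‖q Ψ f s x‖ ≤ ((K * R ^ β + M * R) * A * V n R) * s ^ β := by
  have hM0 : 0 ≤ M := (abs_nonneg _).trans (hM 0)
  have hA := hΨ.posA
  have hR := hΨ.posR
  have e : q Ψ f s x = ∫ w, (f (x - s • w) • Ψ (x - s • w) w - f x • Ψ x w) := by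
    rw [integral_sub (q_integrable hΨ hf s x), integral_smul, h0, smul_zero, sub_zero]
    · rfl
    · have := q_integrable hΨ hf 0 x
      simpa using this
  rw [e]
  have : ((K * R ^ β + M * R) * A * V n R) * s ^ β
      = ((K * R ^ β + M * R) * A * s ^ β) * V n R := by ring
  rw [this]
  apply norm_integral_le_of_ball
  · intro w hw
    have e2 : f (x - s • w) • Ψ (x - s • w) w - f x • Ψ x w
        = (f (x - s • w) - f x) • Ψ (x - s • w) w + f x • (Ψ (x - s • w) w - Ψ x w) := by
      simp only [sub_smul, smul_sub]; abel
    have hn : ‖x - s • w - x‖ ≤ s * R := by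
      rw [sub_sub_cancel_left, norm_neg, norm_smul, Real.norm_of_nonneg hs.le]
      exact mul_le_mul_of_nonneg_left hw.le hs.le
    have hss : s ≤ s ^ β := by
      conv_lhs => rw [← Real.rpow_one s]
      exact Real.rpow_le_rpow_of_exponent_ge hs hs1 hβ1.le
    have h1 : ‖(f (x - s • w) - f x) • Ψ (x - s • w) w‖ ≤ K * (s * R) ^ β * A := by
      rw [norm_smul]
      apply mul_le_mul _ (hΨ.bound _ _) (norm_nonneg _) (by positivity)
      exact (hK _ _).trans (mul_le_mul_of_nonneg_left
        (Real.rpow_le_rpow (norm_nonneg _) hn hβ.le) hK0)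
    have h2 : ‖f x • (Ψ (x - s • w) w - Ψ x w)‖ ≤ M * (A * (s * R)) := by
      rw [norm_smul]
      apply mul_le_mul (hM _) _ (norm_nonneg _) hM0
      refine (hΨ.lip _ _ _ _).trans ?_
      rw [sub_self w, norm_zero, add_zero]
      exact mul_le_mul_of_nonneg_left hn hA.le
    rw [e2]
    refine (norm_add_le _ _).trans ((add_le_add h1 h2).trans ?_)
    rw [Real.mul_rpow hs.le hR.le]
    have : M * (A * (s * R)) ≤ M * (A * (s ^ β * R)) := by gcongr
    linarith
  · intro w hw
    simp [hΨ.supp _ _ hw]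

lemma q_cont (hΨ : Ker Ψ A R) {M : ℝ} (hM : ∀ x, |f x| ≤ M) (hf : Continuous f) :
    Continuous (fun p : ℝ × E n => q Ψ f p.1 p.2) := by
  have hM0 : 0 ≤ M := (abs_nonneg _).trans (hM 0)
  unfold q
  apply continuous_of_dominated (bound := (ball (0 : E n) R).indicator (fun _ => M * A))
  · intro p
    exact (q_integrable hΨ hf p.1 p.2).aestronglyMeasurable
  · intro p
    refine Eventually.of_forall fun w => ?_
    by_cases hw : ‖w‖ < R
    · rw [indicator_of_mem (by simpa using hw), norm_smul]
      exact mul_le_mul (hM _) (hΨ.bound _ _) (norm_nonneg _) hM0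
    · rw [hΨ.supp _ _ (not_lt.1 hw), smul_zero, norm_zero]
      exact indicator_nonneg (fun _ _ => mul_nonneg hM0 hΨ.posA.le) _
  · rw [integrable_indicator_iff measurableSet_ball]
    exact integrableOn_const measure_ball_lt_top.ne
  · refine Eventually.of_forall fun w => ?_
    apply Continuous.smul (by fun_prop)
    exact hΨ.cont_comp (by fun_prop) (by fun_prop)

/-- Change of variables. -/
lemma integral_cov (g : E n → F) {s : ℝ} (hs : 0 < s) (x : E n) :
    ∫ w, g (x - s • w) = (s ^ n)⁻¹ • ∫ y, g y := by
  rw [Measure.integral_comp_smul volume (fun w => g (x - w)) s, integral_sub_left_eq_self]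
  simp [abs_of_pos hs]

lemma q_eq (Ψ : E n → E n → F) (f : E n → ℝ) {s : ℝ} (hs : 0 < s) (x : E n) :
    q Ψ f s x = (s ^ n)⁻¹ • ∫ y, f y • Ψ y (s⁻¹ • (x - y)) := by
  rw [← integral_cov _ hs x]
  unfold q
  congr 1
  ext w
  congr 2
  simp [smul_smul, hs.ne']

end A
end Bog

set_option linter.unusedSectionVars false

namespace Bog

section B
variable {n : ℕ} {F : Type*} [NormedAddCommGroup F] [NormedSpace ℝ F] [CompleteSpace F]

lemma Ker.mono {Ψ : E n → E n → F} {A R A' R' : ℝ} (h : Ker Ψ A R) (hA : A ≤ A') (hR : R ≤ R') :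
    Ker Ψ A' R' where
  cont := h.cont
  bound y w := (h.bound y w).trans hA
  supp y w hw := h.supp y w (hR.trans hw)
  lip y y' w w' := (h.lip y y' w w').trans (mul_le_mul_of_nonneg_right hA (by positivity))
  posA := h.posA.trans_le hA
  posR := h.posR.trans_le hR

lemma ker_of_smooth {Θ : E n × E n → F} (hΘ : ContDiff ℝ 1 Θ) (hc : HasCompactSupport Θ) :
    ∃ A R, Ker (fun y w => Θ (y, w)) A R := by
  obtain ⟨C, hC⟩ := ContDiff.lipschitzWith_of_hasCompactSupport hc hΘ (by simp)
  obtain ⟨M, hM⟩ := hc.exists_bound_of_continuous hΘ.continuous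
  obtain ⟨R, hR⟩ := hc.isCompact.isBounded.subset_ball (0 : E n × E n)
  refine ⟨max (max C M) 1, max R 1, ?_, ?_, ?_, ?_, ?_, ?_⟩
  · exact hΘ.continuous
  · intro y w
    exact (hM _).trans ((le_max_right _ _).trans (le_max_left _ _))
  · intro y w hw
    by_contra hne
    have : (y, w) ∈ ball (0 : E n × E n) R := hR (subset_tsupport _ hne)
    rw [mem_ball_zero_iff, Prod.norm_mk] at this
    have h2 := (le_max_right ‖y‖ ‖w‖).trans_lt this
    exact absurd (le_max_left R 1) (not_le.2 (hw.trans_lt h2))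
  · intro y y' w w'
    have h1 := hC.norm_sub_le (y, w) (y', w')
    refine h1.trans ?_
    apply mul_le_mul
    · exact (le_max_left _ _).trans (le_max_left _ _)
    · rw [Prod.mk_sub_mk, Prod.norm_mk]
      exact max_le (le_add_of_nonneg_right (norm_nonneg _)) (le_add_of_nonneg_left (norm_nonneg _))
    · positivity
    · positivity
  · positivity
  · positivity

/-- partial derivative in the second variable -/
noncomputable def wd (Θ : E n × E n → F) (p : E n × E n) : E n →L[ℝ] F :=
  (fderiv ℝ Θ p).comp (ContinuousLinearMap.inr ℝ (E n) (E n))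

lemma wd_hasFDerivAt {Θ : E n × E n → F} (hΘ : ContDiff ℝ (⊤ : ℕ∞) Θ) (y w : E n) :
    HasFDerivAt (fun w => Θ (y, w)) (wd Θ (y, w)) w := by
  have h1 : HasFDerivAt Θ (fderiv ℝ Θ (y, w)) (y, w) :=
    (hΘ.differentiable (by simp) (y, w)).hasFDerivAt
  exact h1.comp w (hasFDerivAt_prodMk_right y w)

lemma wd_contDiff {Θ : E n × E n → F} (hΘ : ContDiff ℝ (⊤ : ℕ∞) Θ) :
    ContDiff ℝ (⊤ : ℕ∞) (wd Θ) := by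
  unfold wd
  have : ContDiff ℝ (⊤ : ℕ∞) (fderiv ℝ Θ) := hΘ.fderiv_right (by simp)
  exact this.clm_comp contDiff_const

lemma wd_compact {Θ : E n × E n → F} (hc : HasCompactSupport Θ) :
    HasCompactSupport (wd Θ) := by
  have := hc.fderiv ℝ
  exact this.comp_left (g := fun L : (E n × E n) →L[ℝ] F =>
    L.comp (ContinuousLinearMap.inr ℝ (E n) (E n))) (by simp)

lemma wd_mean {Θ : E n × E n → F} (hΘ : ContDiff ℝ (⊤ : ℕ∞) Θ) (hc : HasCompactSupport Θ)
    (y : E n) : ∫ w, wd Θ (y, w) = 0 := by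
  obtain ⟨A, R, hK⟩ := ker_of_smooth (hΘ.of_le (by norm_cast)) hc
  obtain ⟨A', R', hK'⟩ := ker_of_smooth ((wd_contDiff hΘ).of_le (by norm_cast)) (wd_compact hc)
  have hi : Integrable (fun w => wd Θ (y, w)) :=
    integrable_of_ball (hK'.cont_comp (continuous_const) continuous_id) (hK'.supp y)
  have hi2 : Integrable (fun w => Θ (y, w)) :=
    integrable_of_ball (hK.cont_comp (continuous_const) continuous_id) (hK.supp y)
  ext v
  rw [ContinuousLinearMap.integral_apply hi]
  have := integral_bilinear_hasFDerivAt_right_eq_neg_left_of_integrable (μ := (volume : Measure (E n)))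
    (f := fun _ : E n => (1 : ℝ)) (f' := fun _ => 0) (g := fun w => Θ (y, w))
    (g' := fun w => wd Θ (y, w)) (v := v) (B := ContinuousLinearMap.lsmul ℝ ℝ) (by simp)
    (by simpa using hi.apply_continuousLinearMap v) (by simpa using hi2)
    (fun x _ => hasFDerivAt_const _ _) (fun w _ => wd_hasFDerivAt hΘ y w)
  simpa using this

variable {Φ : E n → E n → F} {D : E n → E n → (E n →L[ℝ] F)} {A R A' R' : ℝ} {f : E n → ℝ}

lemma q_hasFDerivAt (hΦ : Ker Φ A R) (hD : Ker D A' R') (hd : ∀ y w, HasFDerivAt (Φ y) (D y w) w)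
    {M : ℝ} (hM : ∀ x, |f x| ≤ M) (hf : Continuous f) {s : ℝ} (hs : 0 < s) (x : E n) :
    HasFDerivAt (fun x => q Φ f s x) (s⁻¹ • q D f s x) x := by
  have hM0 : 0 ≤ M := (abs_nonneg _).trans (hM 0)
  have hc : ∀ x : E n, Continuous (fun y => f y • Φ y (s⁻¹ • (x - y))) := fun x =>
    hf.smul (hΦ.cont_comp (by fun_prop) (by fun_prop))
  have hc' : ∀ x : E n, Continuous (fun y => f y • (s⁻¹ • D y (s⁻¹ • (x - y)))) := fun x =>
    by
    have h1 : Continuous (fun y => D y (s⁻¹ • (x - y))) :=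
      hD.cont_comp continuous_id (by fun_prop)
    exact Continuous.smul hf (h1.const_smul s⁻¹)
  have far : ∀ x y : E n, ∀ r : ℝ, ‖x‖ + s * r ≤ ‖y‖ → r ≤ ‖s⁻¹ • (x - y)‖ := by
    intro x y r h
    rw [norm_smul, norm_inv, Real.norm_of_nonneg hs.le, ← div_eq_inv_mul, le_div_iff₀ hs]
    have := norm_sub_norm_le y x
    rw [norm_sub_rev] at this
    linarith
  have key : HasFDerivAt (fun x => ∫ y, f y • Φ y (s⁻¹ • (x - y)))
      (∫ y, f y • (s⁻¹ • D y (s⁻¹ • (x - y)))) x := by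
    apply hasFDerivAt_integral_of_dominated_of_fderiv_le (ball_mem_nhds x zero_lt_one)
      (bound := (ball (0 : E n) (‖x‖ + 1 + s * R')).indicator (fun _ => M * (s⁻¹ * A')))
    · exact Eventually.of_forall fun x => (hc x).aestronglyMeasurable
    · apply integrable_of_ball (R := ‖x‖ + s * R) (hc x)
      intro y hy
      rw [hΦ.supp _ _ (far x y R hy), smul_zero]
    · exact (hc' x).aestronglyMeasurable
    · refine Eventually.of_forall fun y z hz => ?_
      by_cases hy : ‖y‖ < ‖x‖ + 1 + s * R'
      · rw [indicator_of_mem (by simpa using hy), norm_smul, norm_smul, norm_inv,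
          Real.norm_of_nonneg hs.le]
        gcongr
        · exact hM y
        · exact hD.bound _ _
      · have h1 : ‖z‖ < ‖x‖ + 1 := by
          have := norm_sub_norm_le z x
          rw [mem_ball, dist_eq_norm] at hz
          linarith
        rw [hD.supp _ _ (far z y R' (by linarith)), smul_zero, smul_zero, norm_zero]
        exact indicator_nonneg (fun _ _ => by have := hD.posA; positivity) _
    · rw [integrable_indicator_iff measurableSet_ball]
      exact integrableOn_const measure_ball_lt_top.ne
    · refine Eventually.of_forall fun y z hz => ?_
      apply HasFDerivAt.fun_const_smul
      have h1 : HasFDerivAt (fun z : E n => s⁻¹ • (z - y))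
          (s⁻¹ • ContinuousLinearMap.id ℝ (E n)) z := by
        exact ((hasFDerivAt_id z).sub_const y).const_smul s⁻¹
      have := (hd y (s⁻¹ • (z - y))).comp z h1
      refine this.congr_fderiv ?_
      ext1 v
      simp
  have := key.const_smul ((s ^ n)⁻¹)
  have e1 : (fun x => q Φ f s x) = ((s ^ n)⁻¹ • fun x => ∫ y, f y • Φ y (s⁻¹ • (x - y))) := by
    funext z
    exact q_eq Φ f hs z
  rw [e1]
  refine this.congr_fderiv ?_
  · rw [q_eq D f hs x, smul_comm, ← integral_smul]
    simp_rw [smul_comm _ s⁻¹]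
    rw [integral_smul, integral_smul]

lemma integrable_rpow_Ioo {β : ℝ} (hβ : 0 < β) (C : ℝ) :
    Integrable (fun s : ℝ => C * s ^ (β - 1)) (volume.restrict (Ioo 0 1)) := by
  apply Integrable.const_mul
  have := (intervalIntegral.intervalIntegrable_rpow' (a := 0) (b := 1) (r := β - 1) (by linarith))
  rw [intervalIntegrable_iff_integrableOn_Ioo_of_le zero_le_one] at this
  exact this

lemma T_bound (hD : Ker D A' R') (h0 : ∀ y, ∫ w, D y w = 0)
    {M K β : ℝ} (hM : ∀ x, |f x| ≤ M) (hf : Continuous f) (hβ : 0 < β) (hβ1 : β < 1) (hK0 : 0 ≤ K)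
    (hK : ∀ x y, |f x - f y| ≤ K * ‖x - y‖ ^ β) {s : ℝ} (hs : s ∈ Ioo (0:ℝ) 1) (x : E n) :
    ‖s⁻¹ • q D f s x‖ ≤ ((K * R' ^ β + M * R') * A' * V n R') * s ^ (β - 1) := by
  have := q_hoelder hD h0 hM hf hβ hβ1 hK0 hK hs.1 hs.2.le x
  rw [norm_smul, norm_inv, Real.norm_of_nonneg hs.1.le, Real.rpow_sub_one hs.1.ne',
    ← mul_div_assoc, div_eq_inv_mul]
  exact mul_le_mul_of_nonneg_left this (inv_nonneg.2 hs.1.le)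

lemma q_meas_s {G : Type*} [NormedAddCommGroup G] [NormedSpace ℝ G] {Φ : E n → E n → G}
    (hΦ : Ker Φ A R) {M : ℝ} (hM : ∀ x, |f x| ≤ M) (hf : Continuous f) (x : E n) (S : Set ℝ) :
    AEStronglyMeasurable (fun s => q Φ f s x) (volume.restrict S) := by
  have : Continuous (fun s => q Φ f s x) :=
    (q_cont hΦ hM hf).comp (continuous_id.prodMk continuous_const)
  exact this.aestronglyMeasurable

lemma sq_meas_s {G : Type*} [NormedAddCommGroup G] [NormedSpace ℝ G] {Φ : E n → E n → G}
    (hΦ : Ker Φ A R) {M : ℝ} (hM : ∀ x, |f x| ≤ M) (hf : Continuous f) (x : E n) (S : Set ℝ) :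
    AEStronglyMeasurable (fun s : ℝ => s⁻¹ • q Φ f s x) (volume.restrict S) := by
  apply AEStronglyMeasurable.smul
  · exact (measurable_inv (G := ℝ)).aestronglyMeasurable
  · exact q_meas_s hΦ hM hf x S

theorem u_C1 (hΦ : Ker Φ A R) (hD : Ker D A' R') (hd : ∀ y w, HasFDerivAt (Φ y) (D y w) w)
    (h0 : ∀ y, ∫ w, D y w = 0)
    {M K β : ℝ} (hM : ∀ x, |f x| ≤ M) (hf : Continuous f) (hβ : 0 < β) (hβ1 : β < 1) (hK0 : 0 ≤ K)
    (hK : ∀ x y, |f x - f y| ≤ K * ‖x - y‖ ^ β) :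
    (∀ x, Integrable (fun s : ℝ => s⁻¹ • q D f s x) (volume.restrict (Ioo 0 1))) ∧
    (∀ x, HasFDerivAt (fun x => ∫ s in Ioo (0:ℝ) 1, q Φ f s x)
      (∫ s in Ioo (0:ℝ) 1, s⁻¹ • q D f s x) x) ∧
    Continuous (fun x => ∫ s in Ioo (0:ℝ) 1, s⁻¹ • q D f s x) := by
  have hb := fun (s : ℝ) (hs : s ∈ Ioo (0:ℝ) 1) (x : E n) =>
    T_bound hD h0 hM hf hβ hβ1 hK0 hK hs x
  have hbi := integrable_rpow_Ioo hβ ((K * R' ^ β + M * R') * A' * V n R')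
  refine ⟨fun x => ?_, fun x => ?_, ?_⟩
  · apply hbi.mono' (sq_meas_s hD hM hf x _)
    exact (ae_restrict_iff' measurableSet_Ioo).2 (Eventually.of_forall fun s hs => hb s hs x)
  · apply hasFDerivAt_integral_of_dominated_of_fderiv_le (ball_mem_nhds x zero_lt_one)
      (F' := fun x s => s⁻¹ • q D f s x)
      (bound := fun s => ((K * R' ^ β + M * R') * A' * V n R') * s ^ (β - 1))
    · exact Eventually.of_forall fun x => q_meas_s hΦ hM hf x _
    · apply Integrable.mono' (g := fun _ => M * A * V n R) (integrable_const _)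
        (q_meas_s hΦ hM hf x _)
      exact Eventually.of_forall fun s => q_norm_le hΦ hM s x
    · exact sq_meas_s hD hM hf x _
    · exact (ae_restrict_iff' measurableSet_Ioo).2
        (Eventually.of_forall fun s hs x _ => hb s hs x)
    · exact hbi
    · exact (ae_restrict_iff' measurableSet_Ioo).2
        (Eventually.of_forall fun s hs x _ => q_hasFDerivAt hΦ hD hd hM hf hs.1 x)
  · apply continuous_of_dominated
      (bound := fun s => ((K * R' ^ β + M * R') * A' * V n R') * s ^ (β - 1))
    · exact fun x => sq_meas_s hD hM hf x _
    · exact fun x => (ae_restrict_iff' measurableSet_Ioo).2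
        (Eventually.of_forall fun s hs => hb s hs x)
    · exact hbi
    · refine Eventually.of_forall fun s => ?_
      have h1 : Continuous (fun x => q D f s x) :=
        (q_cont hD hM hf).comp (continuous_const.prodMk continuous_id)
      fun_prop

end B
end Bog

set_option linter.unusedSectionVars false

namespace Bog

section JN
variable {X : Type*} [MeasurableSpace X] {μ : Measure X}

/-- bounded measurable functions are integrable on sets of finite measure -/
lemma intOn_of_bdd {g : X → ℝ} {S : Set X} {M : ℝ} (hg : AEStronglyMeasurable g (μ.restrict S))
    (hS : μ S ≠ ⊤) (hM : ∀ x, |g x| ≤ M) : IntegrableOn g S μ := by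
  have : IsFiniteMeasure (μ.restrict S) := ⟨by simpa using lt_top_iff_ne_top.2 hS⟩
  exact Integrable.mono' (integrable_const M) hg (Eventually.of_forall hM)

lemma avg_sub_le {f : X → ℝ} {S T : Set X} (hST : S ⊆ T) (hSm : μ T ≠ ⊤)
    (hfT : IntegrableOn f T μ) (c : ℝ) :
    |(⨍ x in S, f x ∂μ) - c| * μ.real S ≤ ∫ x in T, |f x - c| ∂μ := by
  have hSfin : μ S ≠ ⊤ := ne_top_of_le_ne_top hSm (measure_mono hST)
  have hiT : IntegrableOn (fun x => f x - c) T μ := hfT.sub (integrableOn_const hSm)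
  have hiS : IntegrableOn (fun x => f x - c) S μ := hiT.mono_set hST
  by_cases h0 : μ.real S = 0
  · rw [h0, mul_zero]
    exact integral_nonneg fun x => abs_nonneg _
  have e : ((⨍ x in S, f x ∂μ) - c) * μ.real S = ∫ x in S, (f x - c) ∂μ := by
    rw [integral_sub (hfT.mono_set hST) (integrableOn_const hSfin), setAverage_eq,
      setIntegral_const]
    simp only [smul_eq_mul]
    field_simp
  calc |(⨍ x in S, f x ∂μ) - c| * μ.real S = |∫ x in S, (f x - c) ∂μ| := by
        rw [← e, abs_mul, abs_of_nonneg (measureReal_nonneg (μ := μ) (s := S))]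
    _ ≤ ∫ x in S, |f x - c| ∂μ := abs_integral_le_integral_abs
    _ ≤ ∫ x in T, |f x - c| ∂μ := by
        apply setIntegral_mono_set hiT.abs (Eventually.of_forall fun x => abs_nonneg _)
        exact LE.le.eventuallyLE hST

lemma int_sq_decomp {f : X → ℝ} {S : Set X} (hSm : μ S ≠ ⊤)
    (hf : IntegrableOn f S μ) (hf2 : IntegrableOn (fun x => (f x) ^ 2) S μ) (c : ℝ) :
    ∫ x in S, (f x - c) ^ 2 ∂μ = (∫ x in S, (f x - ⨍ y in S, f y ∂μ) ^ 2 ∂μ)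
      + ((⨍ y in S, f y ∂μ) - c) ^ 2 * μ.real S := by
  have key : ∀ a : ℝ, ∫ x in S, (f x - a) ^ 2 ∂μ
      = (∫ x in S, (f x) ^ 2 ∂μ) - 2 * a * (∫ x in S, f x ∂μ) + a ^ 2 * μ.real S := by
    intro a
    have : ∀ x, (f x - a) ^ 2 = (f x) ^ 2 - 2 * a * f x + a ^ 2 := fun x => by ring
    simp_rw [this]
    have hh : IntegrableOn (fun x => f x ^ 2 - 2 * a * f x) S μ := hf2.sub (hf.const_mul _)
    rw [integral_add hh (integrableOn_const hSm),
      integral_sub hf2 (hf.const_mul _), integral_const_mul, setIntegral_const]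
    simp only [smul_eq_mul]
    ring
  rw [key, key, setAverage_eq]
  simp only [smul_eq_mul]
  by_cases h0 : μ.real S = 0
  · have : ∫ x in S, f x ∂μ = 0 := by
      apply setIntegral_measure_zero
      exact (measureReal_eq_zero_iff hSm).1 h0
    rw [h0, this]; ring
  · field_simp
    ring

lemma jn_core {f : X → ℝ} {M : ℝ} (hfm : AEStronglyMeasurable f μ) (hM : ∀ x, |f x| ≤ M)
    (L : ℕ → Set X → Prop) (kmax : ℕ)
    (hmeas : ∀ k Q, L k Q → MeasurableSet Q ∧ μ Q ≠ ⊤ ∧ 0 < μ.real Q)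
    (hsplit : ∀ k Q, L (k + 1) Q → ∃ Q1 Q2, L k Q1 ∧ L k Q2 ∧ Q = Q1 ∪ Q2 ∧ Disjoint Q1 Q2 ∧
      μ.real Q1 = μ.real Q / 2 ∧ μ.real Q2 = μ.real Q / 2)
    {b : ℝ} (hb0 : 0 < b)
    (hb : ∀ k Q, k ≤ kmax → L k Q → ∫ x in Q, |f x - ⨍ y in Q, f y ∂μ| ∂μ ≤ b * μ.real Q)
    (hosc : ∀ Q, L 0 Q → ∀ x ∈ Q, ∀ y ∈ Q, |f x - f y| ≤ b) :
    ∀ k Q, k ≤ kmax → L k Q →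
      ∫ x in Q, (f x - ⨍ y in Q, f y ∂μ) ^ 2 ∂μ ≤ 48 * b ^ 2 * μ.real Q := by
  have hM0 : ∀ x : X, 0 ≤ M := fun x => (abs_nonneg _).trans (hM x)
  have hi : ∀ Q, μ Q ≠ ⊤ → IntegrableOn f Q μ := fun Q hQ =>
    intOn_of_bdd hfm.restrict hQ hM
  have hi2 : ∀ Q, μ Q ≠ ⊤ → IntegrableOn (fun x => (f x) ^ 2) Q μ := fun Q hQ =>
    intOn_of_bdd (M := M ^ 2) (hfm.restrict.pow 2) hQ (fun x => by
      rw [abs_pow]; exact pow_le_pow_left₀ (abs_nonneg _) (hM x) 2)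
  have his : ∀ Q c, μ Q ≠ ⊤ → IntegrableOn (fun x => f x - c) Q μ := fun Q c hQ =>
    (hi Q hQ).sub (integrableOn_const hQ)
  have his2 : ∀ Q c, μ Q ≠ ⊤ → IntegrableOn (fun x => (f x - c) ^ 2) Q μ := fun Q c hQ => by
    have : ∀ x, (f x - c) ^ 2 = (f x) ^ 2 - 2 * c * f x + c ^ 2 := fun x => by ring
    simp_rw [this]
    exact ((hi2 Q hQ).sub ((hi Q hQ).const_mul _)).add (integrableOn_const hQ)
  -- the implication from the stopping claim to the square bound
  have hP : ∀ k, k ≤ kmax → (∀ Q c, L k Q → ∫ x in Q, |f x - c| ∂μ ≤ 2 * b * μ.real Q →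
      ∫ x in Q, (f x - c) ^ 2 ∂μ ≤ 16 * b ^ 2 * μ.real Q + 32 * b * ∫ x in Q, |f x - c| ∂μ) →
      ∀ Q, L k Q → ∫ x in Q, (f x - ⨍ y in Q, f y ∂μ) ^ 2 ∂μ ≤ 48 * b ^ 2 * μ.real Q := by
    intro k hk hcl Q hQ
    have h1 := hb k Q hk hQ
    have hpos := (hmeas k Q hQ).2.2
    have h2 := hcl Q (⨍ y in Q, f y ∂μ) hQ (by nlinarith)
    nlinarith
  have hcl : ∀ k, k ≤ kmax → ∀ Q c, L k Q → ∫ x in Q, |f x - c| ∂μ ≤ 2 * b * μ.real Q →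
      ∫ x in Q, (f x - c) ^ 2 ∂μ ≤ 16 * b ^ 2 * μ.real Q + 32 * b * ∫ x in Q, |f x - c| ∂μ := by
    intro k
    induction k with
    | zero =>
      intro _ Q c hQ hc
      obtain ⟨hQm, hQf, hQp⟩ := hmeas 0 Q hQ
      have hpt : ∀ x ∈ Q, |f x - c| ≤ 3 * b := by
        intro x hx
        have hh : IntegrableOn (fun y => |f y - c| + b) Q μ :=
          (his Q c hQf).abs.add (integrableOn_const hQf)
        have : ∫ y in Q, |f x - c| ∂μ ≤ ∫ y in Q, (|f y - c| + b) ∂μ := by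
          apply setIntegral_mono_on (integrableOn_const hQf) hh hQm
          intro y hy
          have h1 := hosc Q hQ x hx y hy
          have h2 := abs_sub_le (f x) (f y) c
          linarith
        rw [integral_add (his Q c hQf).abs (integrableOn_const hQf), setIntegral_const,
          setIntegral_const] at this
        simp only [smul_eq_mul] at this
        have : μ.real Q * |f x - c| ≤ μ.real Q * (3 * b) := by nlinarith
        exact le_of_mul_le_mul_left this hQp
      have h0 : 0 ≤ ∫ x in Q, |f x - c| ∂μ := integral_nonneg fun x => abs_nonneg _
      have : ∫ x in Q, (f x - c) ^ 2 ∂μ ≤ ∫ x in Q, 9 * b ^ 2 ∂μ := by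
        apply setIntegral_mono_on (his2 Q c hQf) (integrableOn_const hQf) hQm
        intro x hx
        have := hpt x hx
        rw [← sq_abs]
        nlinarith [abs_nonneg (f x - c)]
      rw [setIntegral_const] at this
      simp only [smul_eq_mul] at this
      have : 0 ≤ b ^ 2 * μ.real Q := by positivity
      nlinarith
    | succ k ih =>
      intro hk Q c hQ hc
      have hk' : k ≤ kmax := by omega
      have ih := ih hk'
      obtain ⟨Q1, Q2, hL1, hL2, hQe, hdis, hm1, hm2⟩ := hsplit k Q hQ
      obtain ⟨hQm, hQf, hQp⟩ := hmeas _ Q hQ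
      have child : ∀ Q', L k Q' → Q' ⊆ Q → μ.real Q' = μ.real Q / 2 →
          ∫ x in Q', (f x - c) ^ 2 ∂μ
            ≤ 16 * b ^ 2 * μ.real Q' + 32 * b * ∫ x in Q', |f x - c| ∂μ := by
        intro Q' hL' hsub hm
        obtain ⟨hQm', hQf', hQp'⟩ := hmeas _ Q' hL'
        by_cases hcase : ∫ x in Q', |f x - c| ∂μ ≤ 2 * b * μ.real Q'
        · exact ih Q' c hL' hcase
        · push Not at hcase
          have h1 := hP k hk' ih Q' hL'
          rw [int_sq_decomp hQf' (hi Q' hQf') (hi2 Q' hQf') c]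
          have h2 := avg_sub_le hsub hQf (hi Q hQf) c (μ := μ)
          have h3 : |(⨍ x in Q', f x ∂μ) - c| ≤ 4 * b := by
            have : |(⨍ x in Q', f x ∂μ) - c| * μ.real Q' ≤ (4 * b) * μ.real Q' := by
              rw [hm] at h2 ⊢
              linarith
            exact le_of_mul_le_mul_right this hQp'
          have h4 : ((⨍ x in Q', f x ∂μ) - c) ^ 2 ≤ 16 * b ^ 2 := by
            rw [← sq_abs]
            nlinarith [abs_nonneg ((⨍ x in Q', f x ∂μ) - c)]
          have h5 : ((⨍ x in Q', f x ∂μ) - c) ^ 2 * μ.real Q' ≤ 16 * b ^ 2 * μ.real Q' :=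
            mul_le_mul_of_nonneg_right h4 hQp'.le
          nlinarith
      have c1 := child Q1 hL1 (hQe ▸ subset_union_left) hm1
      have c2 := child Q2 hL2 (hQe ▸ subset_union_right) hm2
      have hf1 := (hmeas _ Q1 hL1).2.1
      have hf2 := (hmeas _ Q2 hL2).2.1
      have hQ2m := (hmeas _ Q2 hL2).1
      have e1 : ∫ x in Q, (f x - c) ^ 2 ∂μ
          = (∫ x in Q1, (f x - c) ^ 2 ∂μ) + ∫ x in Q2, (f x - c) ^ 2 ∂μ := by
        rw [hQe]
        exact setIntegral_union hdis hQ2m (his2 Q1 c hf1) (his2 Q2 c hf2)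
      have e2 : ∫ x in Q, |f x - c| ∂μ
          = (∫ x in Q1, |f x - c| ∂μ) + ∫ x in Q2, |f x - c| ∂μ := by
        rw [hQe]
        exact setIntegral_union hdis hQ2m (his Q1 c hf1).abs (his Q2 c hf2).abs
      rw [e1, e2]
      rw [hm1] at c1
      rw [hm2] at c2
      linarith
  intro k Q hk hQ
  exact hP k hk (hcl k hk) Q hQ

end JN
end Bog

set_option linter.unusedSectionVars false

namespace Bog

section D
variable {n : ℕ}

/-- The (unnormalised) local bmo hypothesis. -/
structure BM {n : ℕ} (f : E n → ℝ) (N : ℝ) : Prop where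
  small : ∀ x r, 0 < r → r ≤ 1 →
    ∫ y in ball x r, |f y - ⨍ z in ball x r, f z| ≤ N * V n r
  large : ∀ x r, 1 < r → ∫ y in ball x r, |f y| ≤ N * V n r
  pos : 0 < N

/-- dyadic-type boxes -/
def Box (a : E n) (d : ℝ) (k : ℕ) : Set (E n) :=
  {x | ∀ i, x i ∈ Ico (a i) (a i + d * 2 ^ ((k + (i : ℕ)) / n))}

lemma Box_eq (a : E n) (d : ℝ) (k : ℕ) : Box a d k =
    (WithLp.ofLp : E n → (Fin n → ℝ)) ⁻¹' (Set.pi univ fun i =>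
      Ico (a i) (a i + d * 2 ^ ((k + (i : ℕ)) / n))) := by
  ext x
  simp [Box]

lemma Box_meas (a : E n) (d : ℝ) (k : ℕ) : MeasurableSet (Box a d k) := by
  rw [Box_eq]
  exact (EuclideanSpace.volume_preserving_symm_measurableEquiv_toLp (Fin n)).measurable
    (MeasurableSet.univ_pi fun i => measurableSet_Ico)

lemma Box_vol (a : E n) (d : ℝ) (k : ℕ) :
    volume (Box a d k) = ∏ i : Fin n, ENNReal.ofReal (d * 2 ^ ((k + (i : ℕ)) / n)) := by
  rw [Box_eq]
  have := (EuclideanSpace.volume_preserving_symm_measurableEquiv_toLp (Fin n)).measure_preimage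
    (s := (Set.pi univ fun i => Ico (a i) (a i + d * 2 ^ ((k + (i : ℕ)) / n))))
    (MeasurableSet.univ_pi fun i => measurableSet_Ico).nullMeasurableSet
  refine this.trans ?_
  rw [Real.volume_pi_Ico]
  simp

lemma Box_volr (a : E n) {d : ℝ} (hd : 0 ≤ d) (k : ℕ) :
    volume.real (Box a d k) = ∏ i : Fin n, (d * 2 ^ ((k + (i : ℕ)) / n)) := by
  unfold Measure.real
  rw [Box_vol, ENNReal.toReal_prod]
  refine Finset.prod_congr rfl fun i _ => ENNReal.toReal_ofReal (by positivity)

lemma Box_fin (a : E n) (d : ℝ) (k : ℕ) : volume (Box a d k) ≠ ⊤ := by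
  rw [Box_vol]
  exact ENNReal.prod_ne_top fun i _ => ENNReal.ofReal_ne_top

lemma Box_split (hn : 0 < n) (a : E n) {d : ℝ} (hd : 0 < d) (k : ℕ) :
    ∃ a', Box a d (k + 1) = Box a d k ∪ Box a' d k ∧ Disjoint (Box a d k) (Box a' d k) := by
  obtain ⟨j, hj⟩ : ∃ j : Fin n, n ∣ (k + (j : ℕ)) + 1 := by
    have hlt := Nat.mod_lt (k + 1) hn
    by_cases h0 : (k + 1) % n = 0
    · exact ⟨⟨0, hn⟩, by simpa using Nat.dvd_of_mod_eq_zero h0⟩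
    · refine ⟨⟨n - (k + 1) % n, by omega⟩, ⟨(k + 1) / n + 1, ?_⟩⟩
      have := Nat.div_add_mod (k + 1) n
      simp only
      rw [mul_add]
      omega
  have huniq : ∀ i : Fin n, i ≠ j → ¬ n ∣ (k + (i : ℕ)) + 1 := by
    intro i hij hi
    have h1 : (k + 1 + (i : ℕ)) ≡ (k + 1 + (j : ℕ)) [MOD n] := by
      have e1 : k + 1 + (i : ℕ) = k + (i : ℕ) + 1 := by ring
      have e2 : k + 1 + (j : ℕ) = k + (j : ℕ) + 1 := by ring
      rw [e1, e2]
      exact ((Nat.modEq_zero_iff_dvd).2 hi).trans ((Nat.modEq_zero_iff_dvd).2 hj).symm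
    have h2 := Nat.ModEq.add_left_cancel' _ h1
    have h3 := Nat.ModEq.eq_of_lt_of_lt h2 i.2 j.2
    exact hij (Fin.ext h3)
  have s1 : ∀ i : Fin n, i ≠ j → (k + 1 + (i : ℕ)) / n = (k + (i : ℕ)) / n := by
    intro i hi
    have : k + 1 + (i : ℕ) = (k + (i : ℕ)) + 1 := by ring
    rw [this, Nat.succ_div, if_neg (huniq i hi), add_zero]
  have s2 : (k + 1 + (j : ℕ)) / n = (k + (j : ℕ)) / n + 1 := by
    have : k + 1 + (j : ℕ) = (k + (j : ℕ)) + 1 := by ring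
    rw [this, Nat.succ_div, if_pos hj]
  set l := d * 2 ^ ((k + (j : ℕ)) / n) with hl
  have hl0 : 0 < l := by positivity
  set a' : E n := a + EuclideanSpace.single j l with ha'
  have aj : a' j = a j + l := by simp [ha']
  have ai : ∀ i, i ≠ j → a' i = a i := by
    intro i hi
    simp [ha', hi]
  refine ⟨a', ?_, ?_⟩
  · ext x
    simp only [Box, mem_union, mem_setOf_eq]
    constructor
    · intro h
      by_cases hx : x j < a j + l
      · left
        intro i
        by_cases hi : i = j
        · subst hi
          exact ⟨(h i).1, hx⟩
        · have := h i
          rwa [s1 i hi] at this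
      · right
        intro i
        by_cases hi : i = j
        · subst hi
          have := (h i).2
          rw [s2, pow_succ] at this
          rw [aj]
          exact ⟨not_lt.1 hx, by rw [← hl]; rw [← mul_assoc, ← hl] at this; linarith⟩
        · have := h i
          rw [s1 i hi] at this
          rwa [ai i hi]
    · rintro (h | h) i
      · by_cases hi : i = j
        · subst hi
          have := h i
          rw [s2, pow_succ, ← mul_assoc, ← hl]
          rw [← hl] at this
          exact ⟨this.1, by linarith [this.2]⟩
        · rw [s1 i hi]; exact h i
      · by_cases hi : i = j
        · subst hi
          have := h i
          rw [s2, pow_succ, ← mul_assoc, ← hl]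
          rw [← hl, aj] at this
          exact ⟨by linarith [this.1], by linarith [this.2]⟩
        · have := h i
          rw [ai i hi] at this
          rwa [s1 i hi]
  · rw [Set.disjoint_left]
    intro x h1 h2
    have h3 := (h1 j).2
    have h4 := (h2 j).1
    rw [aj] at h4
    rw [← hl] at h3
    linarith

lemma div_cases (hn : 0 < n) (k : ℕ) (i : Fin n) :
    k / n ≤ (k + (i : ℕ)) / n ∧ (k + (i : ℕ)) / n ≤ k / n + 1 := by
  constructor
  · exact Nat.div_le_div_right (by omega)
  · have : (k + (i : ℕ)) / n ≤ (k + n) / n := Nat.div_le_div_right (by omega)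
    rwa [Nat.add_div_right _ hn] at this

lemma Box_vol_ge (hn : 0 < n) (a : E n) {d : ℝ} (hd : 0 < d) (k : ℕ) :
    (d * 2 ^ (k / n)) ^ n ≤ volume.real (Box a d k) := by
  rw [Box_volr a hd.le]
  calc (d * 2 ^ (k / n)) ^ n = ∏ i : Fin n, (d * 2 ^ (k / n)) := by simp
    _ ≤ _ := by
      apply Finset.prod_le_prod
      · intro i _; positivity
      · intro i _
        apply mul_le_mul_of_nonneg_left _ hd.le
        exact pow_le_pow_right₀ (by norm_num) (div_cases hn k i).1

lemma norm_le_sum (x : E n) : ‖x‖ ≤ ∑ i, |x i| := by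
  rw [EuclideanSpace.norm_eq]
  apply Real.sqrt_le_iff.2
  constructor
  · exact Finset.sum_nonneg fun i _ => abs_nonneg _
  · simp only [Real.norm_eq_abs]
    exact Finset.sum_sq_le_sq_sum_of_nonneg fun i _ => abs_nonneg _

lemma Box_sub_ball (hn : 0 < n) (a : E n) {d : ℝ} (hd : 0 < d) (k : ℕ) :
    Box a d k ⊆ ball a (3 * n * (d * 2 ^ (k / n))) := by
  intro x hx
  rw [mem_ball, dist_eq_norm]
  have hn' : (0 : ℝ) < n := by exact_mod_cast hn
  have hσ : 0 < d * 2 ^ (k / n) := by positivity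
  have h1 : ∀ i : Fin n, |(x - a) i| ≤ 2 * (d * 2 ^ (k / n)) := by
    intro i
    have h2 := hx i
    have h3 : d * 2 ^ ((k + (i : ℕ)) / n) ≤ d * 2 ^ (k / n + 1) := by
      apply mul_le_mul_of_nonneg_left _ hd.le
      exact pow_le_pow_right₀ (by norm_num) (div_cases hn k i).2
    rw [pow_succ] at h3
    have : (x - a) i = x i - a i := by simp
    rw [this, abs_le]
    constructor
    · linarith [h2.1]
    · linarith [h2.2]
  calc ‖x - a‖ ≤ ∑ i, |(x - a) i| := norm_le_sum _
    _ ≤ ∑ i : Fin n, 2 * (d * 2 ^ (k / n)) := Finset.sum_le_sum fun i _ => h1 i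
    _ = n * (2 * (d * 2 ^ (k / n))) := by simp
    _ < _ := by nlinarith

lemma intOn_ball {f : E n → ℝ} {M : ℝ} (hf : Continuous f) (hM : ∀ x, |f x| ≤ M) {S : Set (E n)}
    (hS : volume S ≠ ⊤) : IntegrableOn f S := intOn_of_bdd hf.aestronglyMeasurable hS hM

lemma osc_sub {X : Type*} [MeasurableSpace X] {μ : Measure X} {f : X → ℝ} {S T : Set X}
    (hST : S ⊆ T) (hT : μ T ≠ ⊤)
    (hf : IntegrableOn f T μ) (c : ℝ) :
    ∫ x in S, |f x - ⨍ y in S, f y ∂μ| ∂μ ≤ 2 * ∫ x in T, |f x - c| ∂μ := by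
  have hS : μ S ≠ ⊤ := ne_top_of_le_ne_top hT (measure_mono hST)
  have hi : IntegrableOn (fun x => f x - c) S μ := (hf.mono_set hST).sub (integrableOn_const hS)
  have hiT : IntegrableOn (fun x => f x - c) T μ := hf.sub (integrableOn_const hT)
  have hi2 : IntegrableOn (fun x => |f x - c| + |(⨍ y in S, f y ∂μ) - c|) S μ :=
    hi.abs.add (integrableOn_const hS)
  have hi3 : IntegrableOn (fun x => f x - ⨍ y in S, f y ∂μ) S μ :=
    (hf.mono_set hST).sub (integrableOn_const hS)
  have h1 : ∫ x in S, |f x - ⨍ y in S, f y ∂μ| ∂μ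
      ≤ ∫ x in S, (|f x - c| + |(⨍ y in S, f y ∂μ) - c|) ∂μ := by
    apply integral_mono hi3.abs hi2
    intro x
    have := abs_sub_le (f x) c (⨍ y in S, f y ∂μ)
    rwa [abs_sub_comm c] at this
  rw [integral_add hi.abs (integrableOn_const hS), setIntegral_const] at h1
  have h2 := avg_sub_le hST hT hf c
  have h3 : ∫ x in S, |f x - c| ∂μ ≤ ∫ x in T, |f x - c| ∂μ := by
    apply setIntegral_mono_set hiT.abs (Eventually.of_forall fun x => abs_nonneg _)
    exact LE.le.eventuallyLE hST
  simp only [smul_eq_mul] at h1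
  linarith

theorem jn_ball (n : ℕ) (hn : 0 < n) : ∃ CJ : ℝ, 0 < CJ ∧ ∀ (f : E n → ℝ) (M N : ℝ),
    UniformContinuous f → (∀ x, |f x| ≤ M) → BM f N → ∀ (x : E n) (ρ : ℝ), 0 < ρ →
    6 * n * ρ ≤ 1 →
    ∫ y in ball x ρ, (f y - ⨍ z in ball x ρ, f z) ^ 2 ≤ CJ * N ^ 2 * V n ρ := by
  have hV1 : 0 < V n 1 := V_pos one_pos
  have hn' : (0 : ℝ) < n := by exact_mod_cast hn
  refine ⟨48 * (2 * ((3 * n) ^ n * V n 1)) ^ 2 * (2 ^ n / V n 1), by positivity, ?_⟩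
  intro f M N huc hM hB x ρ hρ hρ1
  have hN := hB.pos
  set b : ℝ := N * (2 * ((3 * n) ^ n * V n 1)) with hb
  have hb0 : 0 < b := by positivity
  obtain ⟨δ, hδ, hδb⟩ := Metric.uniformContinuous_iff.1 huc b hb0
  obtain ⟨m, hm⟩ := exists_pow_lt_of_lt_one (show 0 < δ / (12 * n * ρ) by positivity)
    (show (1/2 : ℝ) < 1 by norm_num)
  set d : ℝ := 2 * ρ * (1/2) ^ m with hd
  have hd0 : 0 < d := by positivity
  have hdm : d * 2 ^ m = 2 * ρ := by
    rw [hd, mul_assoc, ← mul_pow]; norm_num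
  have hJ := jn_core (μ := (volume : Measure (E n))) (f := f) (M := M)
    huc.continuous.aestronglyMeasurable hM (fun k Q => ∃ a, Q = Box a d k) (n * m)
    (by
      rintro k Q ⟨a, rfl⟩
      exact ⟨Box_meas _ _ _, Box_fin _ _ _, lt_of_lt_of_le (by positivity) (Box_vol_ge hn a hd0 k)⟩)
    (by
      rintro k Q ⟨a, rfl⟩
      obtain ⟨a', h1, h2⟩ := Box_split hn a hd0 k
      have e : volume.real (Box a' d k) = volume.real (Box a d k) := by
        rw [Box_volr _ hd0.le, Box_volr _ hd0.le]
      have e2 : volume.real (Box a d (k + 1)) = volume.real (Box a d k)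
          + volume.real (Box a' d k) := by
        rw [h1]
        exact measureReal_union h2 (Box_meas _ _ _) (Box_fin _ _ _) (Box_fin _ _ _)
      exact ⟨_, _, ⟨a, rfl⟩, ⟨a', rfl⟩, h1, h2, by linarith, by linarith⟩)
    hb0
    (by
      rintro k Q hk ⟨a, rfl⟩
      have hkm : k / n ≤ m := by
        have := Nat.div_le_div_right (c := n) hk
        rwa [Nat.mul_div_cancel_left _ hn] at this
      set σ := d * 2 ^ (k / n) with hσ
      have hσ0 : 0 < σ := by positivity
      have hσ1 : σ ≤ 2 * ρ := by
        rw [← hdm]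
        apply mul_le_mul_of_nonneg_left _ hd0.le
        exact pow_le_pow_right₀ (by norm_num) hkm
      have hsub := Box_sub_ball hn a hd0 k
      rw [← hσ] at hsub
      have h1 := hB.small a (3 * n * σ) (by positivity) (by nlinarith)
      have h2 := osc_sub hsub measure_ball_lt_top.ne
        (intOn_ball huc.continuous hM measure_ball_lt_top.ne) (⨍ z in ball a (3 * n * σ), f z)
        (μ := volume)
      have h3 := Box_vol_ge hn a hd0 k
      rw [← hσ] at h3
      refine h2.trans ?_
      have h4 : V n (3 * n * σ) = (3 * n) ^ n * V n 1 * σ ^ n := by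
        rw [V_scale (by positivity), mul_pow]; ring
      rw [h4] at h1
      have h5 : b * σ ^ n ≤ b * volume.real (Box a d k) := mul_le_mul_of_nonneg_left h3 hb0.le
      refine le_trans ?_ h5
      rw [hb]
      linarith)
    (by
      rintro Q ⟨a, rfl⟩ y hy z hz
      have hsub := Box_sub_ball hn a hd0 0
      have h1 := hsub hy
      have h2 := hsub hz
      simp only [Nat.zero_div, pow_zero, mul_one] at h1 h2
      have h3 : dist y z < δ := by
        have := dist_triangle_right y z a
        rw [mem_ball] at h1 h2
        have h4 : 6 * n * d < δ := by
          rw [lt_div_iff₀ (by positivity)] at hm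
          rw [hd]
          linarith
        linarith
      have := hδb h3
      rw [Real.dist_eq] at this
      exact this.le)
  set a : E n := WithLp.toLp 2 (fun i => x i - ρ) with ha
  have hside : ∀ i : Fin n, d * 2 ^ ((n * m + (i : ℕ)) / n) = 2 * ρ := by
    intro i
    rw [Nat.mul_add_div hn, Nat.div_eq_of_lt i.2, add_zero, hdm]
  have hbs : ball x ρ ⊆ Box a d (n * m) := by
    intro y hy i
    rw [hside, ha]
    rw [mem_ball, dist_eq_norm] at hy
    have h1 : |(y - x) i| ≤ ‖y - x‖ := by
      have := PiLp.norm_apply_le (p := 2) (y - x) i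
      simpa using this
    have h2 : |y i - x i| < ρ := by
      have : (y - x) i = y i - x i := by simp
      rw [this] at h1
      linarith
    rw [abs_lt] at h2
    simp only [mem_Ico]
    constructor <;> linarith [h2.1, h2.2]
  have h1 := hJ (n * m) _ le_rfl ⟨a, rfl⟩
  have hvol : volume.real (Box a d (n * m)) = (2 ^ n / V n 1) * V n ρ := by
    rw [Box_volr _ hd0.le, V_scale hρ]
    simp_rw [hside]
    rw [Finset.prod_const, Finset.card_univ, Fintype.card_fin, mul_pow]
    field_simp
  set c := ⨍ y in Box a d (n * m), f y with hc
  have hbf : volume (ball x ρ) ≠ ⊤ := measure_ball_lt_top.ne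
  have hf2 : ∀ c, ∀ S : Set (E n), volume S ≠ ⊤ → IntegrableOn (fun y => (f y - c) ^ 2) S := by
    intro c S hS
    apply intOn_of_bdd (M := (M + |c|) ^ 2) _ hS
    · intro y
      rw [abs_pow]
      apply pow_le_pow_left₀ (abs_nonneg _)
      exact (abs_sub _ _).trans (by linarith [hM y])
    · exact ((huc.continuous.sub continuous_const).pow 2).aestronglyMeasurable
  have h2 := int_sq_decomp hbf (intOn_ball huc.continuous hM hbf)
    (by simpa using hf2 0 _ hbf) c
  have h3 : ∫ y in ball x ρ, (f y - c) ^ 2 ≤ ∫ y in Box a d (n * m), (f y - c) ^ 2 := by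
    apply setIntegral_mono_set (hf2 c _ (Box_fin _ _ _))
      (Eventually.of_forall fun x => sq_nonneg _)
    exact LE.le.eventuallyLE hbs
  have h4 : 0 ≤ ((⨍ y in ball x ρ, f y) - c) ^ 2 * volume.real (ball x ρ) := by positivity
  rw [hvol] at h1
  rw [hb] at h1
  calc _ ≤ ∫ y in ball x ρ, (f y - c) ^ 2 := by linarith
    _ ≤ _ := h3
    _ ≤ _ := h1
    _ = _ := by ring

lemma V_double {r : ℝ} (hr : 0 < r) : V n (2 * r) = 2 ^ n * V n r := by
  rw [V_scale (by positivity), V_scale hr, mul_pow]; ring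

lemma avg_bound {f : E n → ℝ} {M N : ℝ} (hf : Continuous f) (hM : ∀ x, |f x| ≤ M) (hB : BM f N)
    (x : E n) {r : ℝ} (hr : 0 < r) (hr1 : r ≤ 1) :
    |⨍ y in ball x r, f y| * r ≤ 2 ^ (n + 1) * N := by
  have hN := hB.pos
  have main : ∀ k : ℕ, ∀ r : ℝ, 0 < r → r ≤ 1 → (1/2 : ℝ) ^ (k + 1) < r →
      |⨍ y in ball x r, f y| * r ≤ 2 ^ (n + 1) * N := by
    intro k
    induction k with
    | zero =>
      intro r hr hr1 hk
      have h1 := hB.large x (2 * r) (by norm_num at hk; linarith)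
      have h2 := avg_sub_le (μ := volume) (ball_subset_ball (x := x) (by linarith : r ≤ 2 * r))
        measure_ball_lt_top.ne (intOn_ball hf hM measure_ball_lt_top.ne) 0
      simp only [sub_zero] at h2
      rw [vol_ball] at h2
      rw [V_double hr] at h1
      have hV := V_pos (n := n) hr
      have h3 : |⨍ y in ball x r, f y| ≤ 2 ^ n * N := by
        apply le_of_mul_le_mul_right _ hV
        linarith
      have h4 := abs_nonneg (⨍ y in ball x r, f y)
      have h5 : 0 < 2 ^ n * N := by positivity
      rw [pow_succ]
      nlinarith
    | succ k ih =>
      intro r hr hr1 hk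
      by_cases hh : 1/2 < r
      · have : (1/2 : ℝ) ^ (k + 1) < r := by
          refine lt_of_le_of_lt ?_ hh
          exact pow_le_of_le_one (by norm_num) (by norm_num) (by omega)
        exact ih r hr hr1 this
      · push Not at hh
        have h1 := ih (2 * r) (by linarith) (by linarith) (by
          rw [pow_succ] at hk; linarith)
        have h2 := avg_sub_le (μ := volume) (ball_subset_ball (x := x) (by linarith : r ≤ 2 * r))
          measure_ball_lt_top.ne (intOn_ball hf hM measure_ball_lt_top.ne)
          (⨍ y in ball x (2 * r), f y)
        have h3 := hB.small x (2 * r) (by linarith) (by linarith)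
        rw [vol_ball] at h2
        rw [V_double hr] at h3
        have hV := V_pos (n := n) hr
        have h4 : |(⨍ y in ball x r, f y) - ⨍ y in ball x (2 * r), f y| ≤ 2 ^ n * N := by
          apply le_of_mul_le_mul_right _ hV
          linarith
        have h5 := abs_sub_abs_le_abs_sub (⨍ y in ball x r, f y) (⨍ y in ball x (2 * r), f y)
        have h6 : |⨍ y in ball x r, f y| ≤ |⨍ y in ball x (2 * r), f y| + 2 ^ n * N := by linarith
        have h7 : 0 < 2 ^ n * N := by positivity
        rw [pow_succ] at h1 ⊢
        nlinarith
  obtain ⟨k, hk⟩ := exists_pow_lt_of_lt_one hr (show (1/2 : ℝ) < 1 by norm_num)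
  exact main k r hr hr1 (lt_of_le_of_lt (pow_le_pow_of_le_one (by norm_num) (by norm_num)
    (by omega)) hk)

lemma osc_exists {f : E n → ℝ} {M N : ℝ} (hf : Continuous f) (hM : ∀ x, |f x| ≤ M) (hB : BM f N)
    (x : E n) {r : ℝ} (hr : 0 < r) :
    ∃ c, |c| * r ≤ 2 ^ (n + 1) * N ∧ ∫ y in ball x r, |f y - c| ≤ N * V n r := by
  have hN := hB.pos
  by_cases h : r ≤ 1
  · exact ⟨_, avg_bound hf hM hB x hr h, hB.small x r hr h⟩
  · refine ⟨0, by simp; positivity, ?_⟩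
    simpa using hB.large x r (not_le.1 h)

end D
end Bog

set_option linter.unusedSectionVars false

namespace Bog

section EE
open FourierTransform SchwartzMap
variable {n : ℕ}

lemma fourier_flip {f g : E n → ℂ} (hf : Integrable f) (hg : Integrable g) :
    ∫ ξ, 𝓕 f ξ * g ξ = ∫ x, f x * 𝓕 g x := by
  have := VectorFourier.integral_fourierIntegral_smul_eq_flip (μ := (volume : Measure (E n)))
    (ν := (volume : Measure (E n))) (L := innerₗ (E n)) (f := f) (g := g)
    Real.continuous_fourierChar (by exact continuous_inner) hf hg
  rw [flip_innerₗ] at this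
  exact this

lemma plancherel {f : E n → ℂ} (hf : Integrable f) (hf2 : MemLp f 2) :
    MemLp (𝓕 f) 2 ∧ eLpNorm (𝓕 f) 2 volume = eLpNorm f 2 volume := by
  have hcont : Continuous (𝓕 f) :=
    VectorFourier.fourierIntegral_continuous Real.continuous_fourierChar
      (by exact continuous_inner) hf
  set F : Lp ℂ 2 (volume : Measure (E n)) := hf2.toLp f with hF
  set G : Lp ℂ 2 (volume : Measure (E n)) := 𝓕 F with hG
  have hGloc : LocallyIntegrable (G : E n → ℂ) volume :=
    (Lp.memLp G).locallyIntegrable (by norm_num)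
  have key : (G : E n → ℂ) =ᵐ[volume] 𝓕 f := by
    apply ae_eq_of_integral_contDiff_smul_eq hGloc hcont.locallyIntegrable
    intro g hg hgc
    have hg' : ContDiff ℝ (⊤ : ℕ∞) (fun x => (g x : ℂ)) := Complex.ofRealCLM.contDiff.comp hg
    have hgc' : HasCompactSupport (fun x => (g x : ℂ)) := hgc.comp_left (g := fun t : ℝ => (t : ℂ)) (by simp)
    set σ : 𝓢(E n, ℂ) := hgc'.toSchwartzMap hg' with hσ
    have h1 := Lp.fourier_toTemperedDistribution_eq F
    have h2 := congrArg (fun T => T σ) h1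
    simp only [TemperedDistribution.fourier_apply, Lp.toTemperedDistribution_apply] at h2
    have h3 : ∫ x, (𝓕 σ) x * f x = ∫ x, σ x * G x := by
      refine Eq.trans ?_ h2
      apply integral_congr_ae
      filter_upwards [hf2.coeFn_toLp] with x hx
      rw [hF, hx]; rfl
    have h4 : ∫ x, (𝓕 σ) x * f x = ∫ x, σ x * 𝓕 f x := by
      rw [SchwartzMap.fourier_coe]
      exact fourier_flip σ.integrable hf
    rw [h4] at h3
    have e : ∀ x, σ x = (g x : ℂ) := fun x => rfl
    simp_rw [e] at h3
    simpa using h3.symm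
  constructor
  · exact (memLp_congr_ae key).1 (Lp.memLp G)
  · rw [← eLpNorm_congr_ae key]
    have := Lp.norm_fourier_eq F
    rw [← hG, Lp.norm_def, Lp.norm_def, ENNReal.toReal_eq_toReal_iff' (Lp.eLpNorm_ne_top _) (Lp.eLpNorm_ne_top _)] at this
    rw [this]
    exact eLpNorm_congr_ae hf2.coeFn_toLp
end EE
end Bog

set_option linter.unusedSectionVars false

namespace Bog

section FF
open FourierTransform SchwartzMap
variable {n : ℕ}

lemma fourier_cont {f : E n → ℂ} (hf : Integrable f) : Continuous (𝓕 f) :=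
  VectorFourier.fourierIntegral_continuous Real.continuous_fourierChar
    (by exact continuous_inner) hf

/-- the character -/
noncomputable def ee (η w : E n) : ℂ := Complex.exp (2 * Real.pi * Complex.I * (inner ℝ w η : ℝ))

lemma ee_norm (η w : E n) : ‖ee η w‖ = 1 := by
  unfold ee
  have : 2 * Real.pi * Complex.I * ((inner ℝ w η : ℝ) : ℂ)
      = ((2 * Real.pi * inner ℝ w η : ℝ) : ℂ) * Complex.I := by push_cast; ring
  rw [this, Complex.norm_exp_ofReal_mul_I]

lemma ee_add (η w z : E n) : ee η (w + z) = ee η w * ee η z := by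
  unfold ee
  rw [← Complex.exp_add, inner_add_left]
  push_cast
  ring_nf

lemma ee_cont : Continuous (fun p : E n × E n => ee p.1 p.2) := by
  unfold ee
  have : Continuous (fun p : E n × E n => (inner ℝ p.2 p.1 : ℝ)) := continuous_snd.inner continuous_fst
  fun_prop

lemma fourier_ee (f : E n → ℂ) (ξ : E n) : 𝓕 f ξ = ∫ w, ee (-ξ) w * f w := by
  rw [Real.fourier_eq']
  congr 1
  ext w
  unfold ee
  simp only [smul_eq_mul, inner_neg_right]
  congr 2
  push_cast
  ring

lemma fourierInv_ee (f : E n → ℂ) (ξ : E n) : 𝓕⁻ f ξ = ∫ w, ee ξ w * f w := by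
  rw [Real.fourierInv_eq']
  congr 1
  ext w
  unfold ee
  simp only [smul_eq_mul]
  congr 2
  push_cast
  ring

lemma ee_symm (η w : E n) : ee η w = ee w η := by
  unfold ee; rw [real_inner_comm]

lemma ee_add_left (η ξ w : E n) : ee (η + ξ) w = ee η w * ee ξ w := by
  rw [ee_symm, ee_add, ee_symm w η, ee_symm w ξ]

lemma ee_smul (η w : E n) (s : ℝ) : ee η (s • w) = ee (s • η) w := by
  unfold ee
  rw [real_inner_smul_left, real_inner_smul_right]

lemma ee_contDiff (η : E n) : ContDiff ℝ (⊤ : ℕ∞) (fun w => ee η w) := by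
  unfold ee
  have h0 : ContDiff ℝ (⊤ : ℕ∞) (fun w : E n => (inner ℝ w η : ℝ)) :=
    contDiff_id.inner ℝ contDiff_const
  have h1 : ContDiff ℝ (⊤ : ℕ∞) (fun w : E n => ((inner ℝ w η : ℝ) : ℂ)) :=
    Complex.ofRealCLM.contDiff.comp h0
  exact (contDiff_const.mul h1).cexp

lemma ee_hasFDerivAt (η w v : E n) :
    fderiv ℝ (fun w => ee η w) w v = ee η w * (2 * Real.pi * Complex.I * (inner ℝ v η : ℝ)) := by
  have h1 : HasFDerivAt (fun w : E n => (inner ℝ w η : ℝ)) ((innerSL ℝ).flip η) w :=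
    ((innerSL ℝ).flip η).hasFDerivAt
  have h2 : HasFDerivAt (fun w : E n => ((inner ℝ w η : ℝ) : ℂ))
      (Complex.ofRealCLM.comp ((innerSL ℝ).flip η)) w :=
    Complex.ofRealCLM.hasFDerivAt.comp w h1
  have h3 := (h2.const_mul (2 * Real.pi * Complex.I)).cexp
  have : fderiv ℝ (fun w => ee η w) w = _ := h3.fderiv
  rw [this]
  simp [ee]
  exact real_inner_comm v η

lemma scale_flip (K : 𝓢(E n, ℂ)) {A : E n → ℂ} (hA : Integrable A) {s : ℝ} (hs : 0 < s) :
    ∫ w, (𝓕 K) w * A (s • w) = ∫ ξ, K (s • ξ) * 𝓕 A ξ := by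
  have hAs : Integrable (fun w => A (s • w)) := hA.comp_smul hs.ne'
  have h1 : ∫ w, (𝓕 K) w * A (s • w) = ∫ ξ, K ξ * 𝓕 (fun w => A (s • w)) ξ := by
    rw [SchwartzMap.fourier_coe]
    exact fourier_flip K.integrable hAs
  have h2 : ∀ ξ, 𝓕 (fun w => A (s • w)) ξ = (s ^ n)⁻¹ • 𝓕 A (s⁻¹ • ξ) := by
    intro ξ
    rw [fourier_ee, fourier_ee]
    have := Measure.integral_comp_smul (volume : Measure (E n))
      (fun z => ee (-(s⁻¹ • ξ)) z * A z) s
    simp only [finrank_euclideanSpace, Fintype.card_fin, abs_inv, abs_pow, abs_of_pos hs] at this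
    rw [← this]
    congr 1
    ext w
    rw [ee_smul, smul_neg, smul_smul, mul_inv_cancel₀ hs.ne', one_smul]
  rw [h1]
  simp_rw [h2]
  have := Measure.integral_comp_smul (volume : Measure (E n))
      (fun z => K z * (𝓕 A (s⁻¹ • z))) s
  simp only [finrank_euclideanSpace, Fintype.card_fin, abs_inv, abs_pow, abs_of_pos hs,
    smul_smul, inv_mul_cancel₀ hs.ne', one_smul] at this
  rw [this, ← integral_smul]
  congr 1
  ext z
  rw [mul_smul_comm]

lemma conv_corr {g φ : E n → ℂ} (hg : Integrable g) (hφ : Integrable φ) :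
    Integrable (fun z => ∫ y, g y * φ (y + z)) ∧
    ∀ ξ, 𝓕 (fun z => ∫ y, g y * φ (y + z)) ξ = 𝓕 g (-ξ) * 𝓕 φ ξ := by
  have e : (fun z => ∫ y, g y * φ (y + z))
      = MeasureTheory.convolution (fun y => g (-y)) φ (ContinuousLinearMap.mul ℂ ℂ) volume := by
    ext z
    unfold MeasureTheory.convolution
    rw [← integral_neg_eq_self]
    congr 1
    ext y
    simp only [ContinuousLinearMap.mul_apply']
    congr 2
    abel
  constructor
  · rw [e]
    exact hg.comp_neg.integrable_convolution _ hφ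
  · intro ξ
    rw [e, Real.fourier_mul_convolution_eq hg.comp_neg hφ]
    congr 1
    rw [fourier_ee, fourier_ee, ← integral_neg_eq_self]
    congr 1
    ext w
    simp [ee]

lemma kappa_exists {h : E n → ℂ} (hh : ContDiff ℝ (⊤ : ℕ∞) h) (hc : HasCompactSupport h)
    (η v : E n) (hv : ‖v‖ ≤ 1) :
    ∃ K : 𝓢(E n, ℂ), (∀ w, (𝓕 K) w = ee η w *
        (fderiv ℝ h w v + 2 * Real.pi * Complex.I * (inner ℝ v η : ℝ) * h w)) ∧
      ∀ ξ, ‖K ξ‖ ≤ 2 * Real.pi * ‖ξ‖ * ‖𝓕⁻ h (ξ + η)‖ := by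
  have h1 : ContDiff ℝ (⊤ : ℕ∞) (fun w => ee η w * h w) := (ee_contDiff η).mul hh
  have h2 : HasCompactSupport (fun w => ee η w * h w) := hc.mul_left
  set H : 𝓢(E n, ℂ) := h2.toSchwartzMap h1 with hH
  have e : ∀ w, H w = ee η w * h w := fun w => rfl
  have e' : (H : E n → ℂ) = fun w => ee η w * h w := rfl
  refine ⟨𝓕⁻ (LineDeriv.lineDerivOp v H), ?_, ?_⟩
  · intro w
    rw [fourier_fourierInv_eq, SchwartzMap.lineDerivOp_apply_eq_fderiv, e']
    have d1 : DifferentiableAt ℝ (fun w => ee η w) w :=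
      (ee_contDiff η).differentiable (by simp) w
    have d2 : DifferentiableAt ℝ h w := hh.differentiable (by simp) w
    rw [fderiv_fun_mul d1 d2]
    simp only [add_apply, smul_apply, ee_hasFDerivAt,
      smul_eq_mul]
    ring
  · intro ξ
    rw [SchwartzMap.fourierInv_lineDerivOp_eq]
    have ht : (fun x : E n => (inner ℝ x v : ℝ)).HasTemperateGrowth := by fun_prop
    simp only [smul_apply]
    rw [SchwartzMap.smulLeftCLM_apply_apply ht]
    have e3 : (𝓕⁻ H) ξ = 𝓕⁻ h (ξ + η) := by
      rw [SchwartzMap.fourierInv_coe, fourierInv_ee, fourierInv_ee]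
      congr 1
      ext w
      rw [e, ee_add_left]; ring
    rw [e3, norm_smul, norm_smul]
    have h4 : ‖-(2 * (Real.pi : ℂ) * Complex.I)‖ = 2 * Real.pi := by
      simp [abs_of_pos Real.pi_pos]
    rw [h4, ← mul_assoc]
    have h5 : ‖(inner ℝ ξ v : ℝ)‖ ≤ ‖ξ‖ := by
      refine (norm_inner_le_norm ξ v).trans ?_
      exact mul_le_of_le_one_right (norm_nonneg _) hv
    gcongr

lemma decay (h : 𝓢(E n, ℂ)) : ∃ C : ℝ, 0 < C ∧ ∀ ζ, ‖h ζ‖ ≤ C / (1 + ‖ζ‖ ^ 2) := by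
  obtain ⟨C0, hC0, h0⟩ := h.decay 0 0
  obtain ⟨C2, hC2, h2⟩ := h.decay 2 0
  refine ⟨C0 + C2, by positivity, fun ζ => ?_⟩
  have a := h0 ζ
  have b := h2 ζ
  simp only [norm_iteratedFDeriv_zero, pow_zero, one_mul] at a b
  rw [le_div_iff₀ (by positivity)]
  linarith

lemma lint_s {h : E n → ℂ} {C : ℝ} (hC : 0 < C) (hh : ∀ ζ, ‖h ζ‖ ≤ C / (1 + ‖ζ‖ ^ 2)) (ξ η : E n) :
    ∫⁻ s : ℝ, ENNReal.ofReal ‖ξ‖ * ‖h (s • ξ + η)‖ₑ ≤ ENNReal.ofReal (C * Real.pi) := by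
  by_cases hξ : ξ = 0
  · simp [hξ]
  have hξ0 : 0 < ‖ξ‖ := norm_pos_iff.2 hξ
  set b := inner ℝ ξ η / ‖ξ‖ with hb
  have key : ∀ s : ℝ, (‖ξ‖ * s + b) ^ 2 ≤ ‖s • ξ + η‖ ^ 2 := by
    intro s
    have h1 := abs_real_inner_le_norm ξ (s • ξ + η)
    rw [inner_add_right, real_inner_smul_right, real_inner_self_eq_norm_sq] at h1
    have h2 : ‖ξ‖ * s + b = (s * ‖ξ‖ ^ 2 + inner ℝ ξ η) / ‖ξ‖ := by
      rw [hb]; field_simp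
    have h3 : |‖ξ‖ * s + b| ≤ ‖s • ξ + η‖ := by
      rw [h2, abs_div, abs_of_pos hξ0, div_le_iff₀ hξ0]
      linarith
    rw [← sq_abs]
    exact pow_le_pow_left₀ (abs_nonneg _) h3 2
  have hpt : ∀ s : ℝ, ENNReal.ofReal ‖ξ‖ * ‖h (s • ξ + η)‖ₑ
      ≤ ENNReal.ofReal (‖ξ‖ * (C * (1 + (‖ξ‖ * s + b) ^ 2)⁻¹)) := by
    intro s
    rw [← ofReal_norm, ← ENNReal.ofReal_mul hξ0.le]
    apply ENNReal.ofReal_le_ofReal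
    apply mul_le_mul_of_nonneg_left _ hξ0.le
    refine (hh _).trans ?_
    rw [div_eq_mul_inv]
    have := key s
    gcongr
  have hIntg : Integrable (fun s : ℝ => ‖ξ‖ * (C * (1 + (‖ξ‖ * s + b) ^ 2)⁻¹)) := by
    have h1 : Integrable (fun t : ℝ => (1 + (t + b) ^ 2)⁻¹) :=
      integrable_inv_one_add_sq.comp_add_right b
    have h2 := h1.comp_mul_left' hξ0.ne'
    exact (h2.const_mul C).const_mul _
  calc _ ≤ ∫⁻ s : ℝ, ENNReal.ofReal (‖ξ‖ * (C * (1 + (‖ξ‖ * s + b) ^ 2)⁻¹)) := lintegral_mono hpt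
    _ = ENNReal.ofReal (∫ s : ℝ, ‖ξ‖ * (C * (1 + (‖ξ‖ * s + b) ^ 2)⁻¹)) := by
      rw [ofReal_integral_eq_lintegral_ofReal hIntg]
      exact Eventually.of_forall fun s => by positivity
    _ = ENNReal.ofReal (C * Real.pi) := by
      congr 1
      rw [integral_const_mul, integral_const_mul]
      have h3 : ∫ s : ℝ, (1 + (‖ξ‖ * s + b) ^ 2)⁻¹ = ‖ξ‖⁻¹ * Real.pi := by
        rw [Measure.integral_comp_mul_left (fun t : ℝ => (1 + (t + b) ^ 2)⁻¹) ‖ξ‖,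
          integral_add_right_eq_self (fun t : ℝ => (1 + t ^ 2)⁻¹) b, integral_univ_inv_one_add_sq]
        simp
      rw [h3]
      field_simp

end FF
end Bog

set_option linter.unusedSectionVars false

namespace Bog

section GG
open FourierTransform SchwartzMap
variable {n : ℕ}

/-- the real kernel `∂_v (h(w) ω(y+w))` -/
noncomputable def PsiK (h ω : E n → ℝ) (v : E n) (y w : E n) : ℝ :=
  fderiv ℝ h w v * ω (y + w) + h w * fderiv ℝ ω (y + w) v

lemma cast_contDiff {h : E n → ℝ} (hh : ContDiff ℝ (⊤ : ℕ∞) h) :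
    ContDiff ℝ (⊤ : ℕ∞) (fun x => (h x : ℂ)) := Complex.ofRealCLM.contDiff.comp hh

lemma cast_compact {h : E n → ℝ} (hh : HasCompactSupport h) :
    HasCompactSupport (fun x => (h x : ℂ)) :=
  hh.comp_left (g := fun t : ℝ => (t : ℂ)) (by simp)

lemma cast_fderiv {h : E n → ℝ} (hh : ContDiff ℝ (⊤ : ℕ∞) h) (w v : E n) :
    fderiv ℝ (fun x => (h x : ℂ)) w v = ((fderiv ℝ h w v : ℝ) : ℂ) := by
  have h1 : HasFDerivAt h (fderiv ℝ h w) w := (hh.differentiable (by simp) w).hasFDerivAt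
  have h2 : HasFDerivAt (fun x => (h x : ℂ)) (Complex.ofRealCLM.comp (fderiv ℝ h w)) w :=
    Complex.ofRealCLM.hasFDerivAt.comp w h1
  rw [h2.fderiv]
  rfl

lemma sch_inv (σ : 𝓢(E n, ℂ)) (x : E n) : σ x = ∫ η, ee η x * (𝓕 σ) η := by
  have h1 : 𝓕⁻ (𝓕 σ) = σ := fourierInv_fourier_eq σ
  calc σ x = (𝓕⁻ (𝓕 σ)) x := by rw [h1]
    _ = 𝓕⁻ ((𝓕 σ : 𝓢(E n, ℂ)) : E n → ℂ) x := by rw [SchwartzMap.fourierInv_coe]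
    _ = _ := by
      rw [fourierInv_ee]
      congr 1
      ext w
      rw [ee_symm]

lemma ee_mul_int {f : E n → ℂ} (hf : Integrable f) (x : E n) : Integrable (fun η => ee η x * f η) := by
  refine hf.norm.mono' ?_ (Eventually.of_forall fun η => by rw [norm_mul, ee_norm, one_mul])
  have : Continuous (fun η => ee η x) := ee_cont.comp (by fun_prop : Continuous fun η : E n => (η, x))
  exact this.aestronglyMeasurable.mul hf.aestronglyMeasurable

variable {h ω g φ : E n → ℝ} {v : E n}

lemma psi_expand (σ1 σ2 : 𝓢(E n, ℂ)) (hσ1 : ∀ x, (ω x : ℂ) = ∫ η, ee η x * σ1 η)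
    (hσ2 : ∀ x, (fderiv ℝ ω x v : ℂ) = ∫ η, ee η x * σ2 η) (y w : E n) :
    ((PsiK h ω v y w : ℝ) : ℂ) = ∫ η, ee η y * ee η w * (σ1 η * (fderiv ℝ h w v : ℝ) + σ2 η * (h w : ℝ)) := by
  have e : ∀ η, ee η y * ee η w * (σ1 η * (fderiv ℝ h w v : ℝ) + σ2 η * (h w : ℝ))
      = (ee η (y + w) * σ1 η) * (fderiv ℝ h w v : ℝ) + (ee η (y + w) * σ2 η) * (h w : ℝ) := by
    intro η
    rw [ee_add]; ring
  simp_rw [e]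
  rw [integral_add ((ee_mul_int σ1.integrable _).mul_const _)
    ((ee_mul_int σ2.integrable _).mul_const _), integral_mul_const, integral_mul_const,
    ← hσ1, ← hσ2]
  unfold PsiK
  push_cast
  ring

lemma majorant_int {G1 : E n → ℝ} (hG1 : Integrable G1) (C R : ℝ) :
    Integrable (fun p : E n × E n => G1 p.1 * (ball (0 : E n) R).indicator (fun _ => C) p.2) := by
  apply Integrable.mul_prod hG1
  rw [integrable_indicator_iff measurableSet_ball]
  exact integrableOn_const measure_ball_lt_top.ne

lemma int_bdd {g : E n → ℝ} (hg : Measurable g) {M L : ℝ} (hM : ∀ x, |g x| ≤ M)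
    (hL : ∀ x, L ≤ ‖x‖ → g x = 0) : Integrable g := by
  have h1 : IntegrableOn g (ball 0 L) := intOn_of_bdd hg.aestronglyMeasurable measure_ball_lt_top.ne hM
  have h2 : (ball (0 : E n) L).indicator g = g := by
    rw [indicator_eq_self]
    intro x hx
    by_contra hc
    exact hx (hL x (by simpa using hc))
  rw [← h2, integrable_indicator_iff measurableSet_ball]
  exact h1

lemma form_eq {Ψ : E n → E n → ℝ} {A R : ℝ} (hΨ : Ker Ψ A R) (hg : Measurable g)
    (hφ : Measurable φ) {M L : ℝ} (hgM : ∀ x, |g x| ≤ M) (hφM : ∀ x, |φ x| ≤ M)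
    (hgL : ∀ x, L ≤ ‖x‖ → g x = 0) (hφL : ∀ x, L ≤ ‖x‖ → φ x = 0) (s : ℝ) :
    Integrable (fun p : E n × E n => g p.1 * φ (p.1 + s • p.2) * Ψ p.1 p.2) ∧
    ∫ x, φ x * q Ψ g s x = ∫ p : E n × E n, g p.1 * φ (p.1 + s • p.2) * Ψ p.1 p.2 := by
  have hM0 : 0 ≤ M := (abs_nonneg _).trans (hgM 0)
  have hA := hΨ.posA
  have m1 : Measurable (fun p : E n × E n => Ψ p.1 p.2) := hΨ.cont.measurable
  have I1 : Integrable (fun p : E n × E n => g p.1 * φ (p.1 + s • p.2) * Ψ p.1 p.2) := by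
    apply (majorant_int (int_bdd hg hgM hgL).abs (M * A) R).mono'
    · have : Measurable (fun p : E n × E n => φ (p.1 + s • p.2)) := hφ.comp (by fun_prop)
      exact (((hg.comp measurable_fst).mul this).mul m1).aestronglyMeasurable
    · refine Eventually.of_forall fun p => ?_
      by_cases hw : ‖p.2‖ < R
      · rw [indicator_of_mem (by simpa using hw), norm_mul, norm_mul, mul_assoc]
        have h1 := hΨ.bound p.1 p.2
        have h2 := hφM (p.1 + s • p.2)
        simp only [Real.norm_eq_abs] at h1 ⊢
        gcongr
      · rw [hΨ.supp _ _ (not_lt.1 hw)]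
        simp only [mul_zero, norm_zero]
        exact mul_nonneg (abs_nonneg _) (indicator_nonneg (fun _ _ => by positivity) _)
  have I2 : Integrable (fun p : E n × E n => φ p.1 * (g (p.1 - s • p.2) * Ψ (p.1 - s • p.2) p.2)) := by
    apply (majorant_int (int_bdd hφ hφM hφL).abs (M * A) R).mono'
    · have h1 : Measurable (fun p : E n × E n => g (p.1 - s • p.2)) := hg.comp (by fun_prop)
      have h2 : Continuous (fun p : E n × E n => Ψ (p.1 - s • p.2) p.2) :=
        hΨ.cont_comp (by fun_prop) (by fun_prop)
      exact ((hφ.comp measurable_fst).mul (h1.mul h2.measurable)).aestronglyMeasurable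
    · refine Eventually.of_forall fun p => ?_
      by_cases hw : ‖p.2‖ < R
      · rw [indicator_of_mem (by simpa using hw), norm_mul, norm_mul]
        have h1 := hΨ.bound (p.1 - s • p.2) p.2
        have h2 := hgM (p.1 - s • p.2)
        simp only [Real.norm_eq_abs] at h1 ⊢
        gcongr
      · rw [hΨ.supp _ _ (not_lt.1 hw)]
        simp only [mul_zero, norm_zero]
        exact mul_nonneg (abs_nonneg _) (indicator_nonneg (fun _ _ => by positivity) _)
  refine ⟨I1, ?_⟩
  calc ∫ x, φ x * q Ψ g s x
      = ∫ x, ∫ w, φ x * (g (x - s • w) * Ψ (x - s • w) w) := by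
        congr 1
        ext x
        unfold q
        rw [integral_const_mul]
        rfl
    _ = ∫ w, ∫ x, φ x * (g (x - s • w) * Ψ (x - s • w) w) := integral_integral_swap I2
    _ = ∫ w, ∫ y, g y * φ (y + s • w) * Ψ y w := by
        congr 1
        ext w
        rw [← integral_add_right_eq_self _ (s • w)]
        congr 1
        ext y
        rw [add_sub_cancel_right]
        ring
    _ = _ := (integral_prod_symm _ I1).symm

theorem form_enorm_le (hh : ContDiff ℝ (⊤ : ℕ∞) h) (hhc : HasCompactSupport h)
    (hv : ‖v‖ ≤ 1) (σ1 σ2 : 𝓢(E n, ℂ)) (hσ1 : ∀ x, (ω x : ℂ) = ∫ η, ee η x * σ1 η)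
    (hσ2 : ∀ x, (fderiv ℝ ω x v : ℂ) = ∫ η, ee η x * σ2 η)
    (hσ : ∀ η, σ2 η = 2 * Real.pi * Complex.I * (inner ℝ v η : ℝ) * σ1 η)
    {A R : ℝ} (hΨ : Ker (PsiK h ω v) A R) (hg : Measurable g)
    (hφ : Measurable φ) {M L : ℝ} (hgM : ∀ x, |g x| ≤ M) (hφM : ∀ x, |φ x| ≤ M)
    (hgL : ∀ x, L ≤ ‖x‖ → g x = 0) (hφL : ∀ x, L ≤ ‖x‖ → φ x = 0) {s : ℝ} (hs : 0 < s) :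
    ‖∫ x, φ x * q (PsiK h ω v) g s x‖ₑ ≤ ∫⁻ η, ‖σ1 η‖ₑ * ∫⁻ ξ,
      ENNReal.ofReal (2 * Real.pi * s * ‖ξ‖) * ‖𝓕⁻ (fun x => (h x : ℂ)) (s • ξ + η)‖ₑ *
        (‖𝓕 (fun x => (g x : ℂ)) (-(ξ + η))‖ₑ * ‖𝓕 (fun x => (φ x : ℂ)) ξ‖ₑ) := by
  obtain ⟨hI, e1⟩ := form_eq hΨ hg hφ hgM hφM hgL hφL s
  have hM0 : 0 ≤ M := (abs_nonneg _).trans (hgM 0)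
  have gint := int_bdd hg hgM hgL
  have φint := int_bdd hφ hφM hφL
  have e2 : ((∫ x, φ x * q (PsiK h ω v) g s x : ℝ) : ℂ)
      = ∫ p : E n × E n, ∫ η, ((g p.1 * φ (p.1 + s • p.2) : ℝ) : ℂ) *
        (ee η p.1 * ee η p.2 * (σ1 η * (fderiv ℝ h p.2 v : ℝ) + σ2 η * (h p.2 : ℝ))) := by
    rw [e1, ← integral_complex_ofReal]
    congr 1
    ext p
    rw [integral_const_mul, ← psi_expand σ1 σ2 hσ1 hσ2]
    push_cast
    ring
  have hd : Continuous (fun w => fderiv ℝ h w v) :=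
    (hh.continuous_fderiv (by simp)).clm_apply continuous_const
  have hdc : HasCompactSupport (fun w => fderiv ℝ h w v) :=
    (hhc.fderiv ℝ).comp_left (g := fun T : E n →L[ℝ] ℝ => T v) (by simp)
  have hF : Integrable (Function.uncurry fun (p : E n × E n) (η : E n) =>
      ((g p.1 * φ (p.1 + s • p.2) : ℝ) : ℂ) *
        (ee η p.1 * ee η p.2 * (σ1 η * (fderiv ℝ h p.2 v : ℝ) + σ2 η * (h p.2 : ℝ)))) := by
    have i1 : Integrable (fun w => |fderiv ℝ h w v| + |h w|) :=
      (hd.integrable_of_hasCompactSupport hdc).abs.add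
        (hh.continuous.integrable_of_hasCompactSupport hhc).abs
    have i2 : Integrable (fun η => ‖σ1 η‖ + ‖σ2 η‖) := σ1.integrable.norm.add σ2.integrable.norm
    have i3 := (Integrable.mul_prod (gint.abs.mul_const M) i1).mul_prod i2
    apply i3.mono'
    · have c1 : Continuous (fun p : (E n × E n) × E n => ee p.2 p.1.1) :=
        ee_cont.comp (by fun_prop : Continuous fun p : (E n × E n) × E n => (p.2, p.1.1))
      have c2 : Continuous (fun p : (E n × E n) × E n => ee p.2 p.1.2) :=
        ee_cont.comp (by fun_prop : Continuous fun p : (E n × E n) × E n => (p.2, p.1.2))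
      have c3 : Continuous (fun p : (E n × E n) × E n =>
          (σ1 p.2 * (fderiv ℝ h p.1.2 v : ℝ) + σ2 p.2 * (h p.1.2 : ℝ) : ℂ)) := by
        have a1 := σ1.continuous
        have a2 := σ2.continuous
        have a3 := hh.continuous
        have a4 : Continuous (fun p : (E n × E n) × E n => fderiv ℝ h p.1.2 v) :=
          hd.comp (by fun_prop)
        have a5 : Continuous (fun p : (E n × E n) × E n => ((fderiv ℝ h p.1.2 v : ℝ) : ℂ)) :=
          Complex.continuous_ofReal.comp a4
        fun_prop
      have m1 : Measurable (fun p : (E n × E n) × E n => g p.1.1 * φ (p.1.1 + s • p.1.2)) :=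
        (hg.comp (by fun_prop)).mul (hφ.comp (by fun_prop))
      exact ((Complex.measurable_ofReal.comp m1).mul
        ((c1.mul c2).mul c3).measurable).aestronglyMeasurable
    · refine Eventually.of_forall fun p => ?_
      simp only [Function.uncurry]
      rw [norm_mul, norm_mul, norm_mul, ee_norm, ee_norm, one_mul, one_mul]
      have b1 : ‖((g p.1.1 * φ (p.1.1 + s • p.1.2) : ℝ) : ℂ)‖ ≤ |g p.1.1| * M := by
        rw [Complex.norm_real, norm_mul]
        exact mul_le_mul_of_nonneg_left (hφM _) (norm_nonneg _)
      have b2 : ‖σ1 p.2 * (fderiv ℝ h p.1.2 v : ℝ) + σ2 p.2 * (h p.1.2 : ℝ)‖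
          ≤ (|fderiv ℝ h p.1.2 v| + |h p.1.2|) * (‖σ1 p.2‖ + ‖σ2 p.2‖) := by
        refine (norm_add_le _ _).trans ?_
        rw [norm_mul, norm_mul, Complex.norm_real, Complex.norm_real, Real.norm_eq_abs,
          Real.norm_eq_abs]
        have q1 := norm_nonneg (σ1 p.2)
        have q2 := norm_nonneg (σ2 p.2)
        have q3 := abs_nonneg (fderiv ℝ h p.1.2 v)
        have q4 := abs_nonneg (h p.1.2)
        nlinarith [mul_nonneg q1 q4, mul_nonneg q2 q3]
      rw [mul_assoc]
      exact mul_le_mul b1 b2 (norm_nonneg _) (by positivity)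
  rw [integral_integral_swap hF] at e2
  have e3 : ‖∫ x, φ x * q (PsiK h ω v) g s x‖ₑ
      = ‖((∫ x, φ x * q (PsiK h ω v) g s x : ℝ) : ℂ)‖ₑ := by
    rw [← ofReal_norm, ← ofReal_norm, Complex.norm_real]
  rw [e3, e2]
  refine (enorm_integral_le_lintegral_enorm _).trans ?_
  apply lintegral_mono_ae
  filter_upwards [hF.prod_left_ae] with η hη
  simp only [Function.uncurry] at hη
  obtain ⟨K, hK1, hK2⟩ := kappa_exists (cast_contDiff hh) (cast_compact hhc) η v hv
  have ggint : Integrable (fun y => ee η y * (g y : ℂ)) := by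
    refine gint.abs.mono' ?_ (Eventually.of_forall fun y => by
      rw [norm_mul, ee_norm, one_mul, Complex.norm_real]; rfl)
    have : Continuous (fun y => ee η y) :=
      ee_cont.comp (by fun_prop : Continuous fun y : E n => (η, y))
    exact this.aestronglyMeasurable.mul gint.ofReal.aestronglyMeasurable
  have φintC : Integrable (fun x => (φ x : ℂ)) := φint.ofReal
  obtain ⟨hAi, hAf⟩ := conv_corr ggint φintC
  have e4 : ∫ p : E n × E n, ((g p.1 * φ (p.1 + s • p.2) : ℝ) : ℂ) *
        (ee η p.1 * ee η p.2 * (σ1 η * (fderiv ℝ h p.2 v : ℝ) + σ2 η * (h p.2 : ℝ)))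
      = σ1 η * ∫ ξ, K (s • ξ) * 𝓕 (fun z => ∫ y, (ee η y * (g y : ℂ)) * (φ (y + z) : ℂ)) ξ := by
    rw [← scale_flip K hAi hs, ← integral_const_mul]
    refine (integral_prod_symm _ hη).trans ?_
    congr 1
    ext w
    rw [hK1, hσ, cast_fderiv hh, ← integral_const_mul, ← integral_const_mul]
    congr 1
    ext y
    push_cast
    ring
  rw [e4, enorm_mul]
  gcongr
  refine (enorm_integral_le_lintegral_enorm _).trans ?_
  apply lintegral_mono
  intro ξ
  show ‖K (s • ξ) * _‖ₑ ≤ _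
  rw [hAf, enorm_mul, enorm_mul]
  have e5 : 𝓕 (fun y => ee η y * (g y : ℂ)) (-ξ) = 𝓕 (fun x => (g x : ℂ)) (-(ξ + η)) := by
    rw [fourier_ee, fourier_ee, neg_neg, neg_neg]
    congr 1
    ext w
    rw [ee_add_left]; ring
  rw [e5]
  beta_reduce
  refine mul_le_mul_left ?_ _
  rw [← ofReal_norm, ← ofReal_norm, ← ENNReal.ofReal_mul (by positivity)]
  apply ENNReal.ofReal_le_ofReal
  refine (hK2 _).trans ?_
  rw [norm_smul, Real.norm_of_nonneg hs.le]
  apply le_of_eq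
  ring

lemma memLp_bdd {g : E n → ℝ} (hg : Measurable g) {M L : ℝ} (hM : ∀ x, |g x| ≤ M)
    (hL : ∀ x, L ≤ ‖x‖ → g x = 0) : MemLp (fun x => (g x : ℂ)) 2 ∧
    eLpNorm (fun x => (g x : ℂ)) 2 volume = eLpNorm g 2 volume := by
  have e : eLpNorm (fun x => (g x : ℂ)) 2 volume = eLpNorm g 2 volume := by
    apply eLpNorm_congr_norm_ae
    exact Eventually.of_forall fun x => by simp
  refine ⟨⟨(Complex.measurable_ofReal.comp hg).aestronglyMeasurable, ?_⟩, e⟩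
  rw [e]
  have h2 : (ball (0 : E n) L).indicator g = g := by
    rw [indicator_eq_self]
    intro x hx
    by_contra hc
    exact hx (hL x (by simpa using hc))
  have : Fact (volume (ball (0 : E n) L) < ⊤) := ⟨measure_ball_lt_top⟩
  have h3 : MemLp g 2 (volume.restrict (ball 0 L)) :=
    MemLp.of_bound hg.aestronglyMeasurable M (Eventually.of_forall hM)
  rw [← h2, eLpNorm_indicator_eq_eLpNorm_restrict measurableSet_ball]
  exact h3.2

lemma eLp2 (f : E n → ℂ) : eLpNorm f 2 volume = (∫⁻ x, ‖f x‖ₑ ^ (2:ℝ)) ^ (1/2 : ℝ) := by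
  rw [eLpNorm_eq_lintegral_rpow_enorm_toReal (by norm_num) (by norm_num)]
  simp

lemma asc {a b c d : ENNReal} (h : a * b = c * d) (e f : ENNReal) :
    a * (b * e * f) = c * (d * e) * f := by
  rw [← mul_assoc, ← mul_assoc, h, mul_assoc c d e]

set_option maxHeartbeats 1000000 in
lemma tonelli_fin {hi G P σ1 : E n → ℂ} (hicont : Continuous hi) (Gcont : Continuous G)
    (Pcont : Continuous P) (σcont : Continuous σ1) {Cd : ℝ} (hCd : 0 < Cd)
    (hdec : ∀ ζ, ‖hi ζ‖ ≤ Cd / (1 + ‖ζ‖ ^ 2)) (H : ENNReal)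
    (hol : ∀ η, ∫⁻ ξ, ‖G (-(ξ + η))‖ₑ * ‖P ξ‖ₑ ≤ H) :
    ∫⁻ s : ℝ, ∫⁻ η, ‖σ1 η‖ₑ * ∫⁻ ξ, ENNReal.ofReal (2 * Real.pi) *
        (ENNReal.ofReal ‖ξ‖ * ‖hi (s • ξ + η)‖ₑ) * (‖G (-(ξ + η))‖ₑ * ‖P ξ‖ₑ)
    ≤ (∫⁻ η, ‖σ1 η‖ₑ) * (ENNReal.ofReal (2 * Real.pi) * ENNReal.ofReal (Cd * Real.pi) * H) := by
  have meas : Measurable (fun p : (ℝ × E n) × E n => ENNReal.ofReal (2 * Real.pi) *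
        (ENNReal.ofReal ‖p.2‖ * ‖hi (p.1.1 • p.2 + p.1.2)‖ₑ) *
          (‖G (-(p.2 + p.1.2))‖ₑ * ‖P p.2‖ₑ)) := by
    have m1 : Measurable (fun p : (ℝ × E n) × E n => ‖hi (p.1.1 • p.2 + p.1.2)‖ₑ) :=
      ((hicont.comp (by fun_prop : Continuous fun p : (ℝ × E n) × E n =>
        p.1.1 • p.2 + p.1.2)).enorm).measurable
    have m2 : Measurable (fun p : (ℝ × E n) × E n => ‖G (-(p.2 + p.1.2))‖ₑ) :=
      ((Gcont.comp (by fun_prop : Continuous fun p : (ℝ × E n) × E n =>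
        -(p.2 + p.1.2))).enorm).measurable
    have m3 : Measurable (fun p : (ℝ × E n) × E n => ‖P p.2‖ₑ) :=
      ((Pcont.comp continuous_snd).enorm).measurable
    have m4 : Measurable (fun p : (ℝ × E n) × E n => ENNReal.ofReal ‖p.2‖) := by fun_prop
    exact (measurable_const.mul (m4.mul m1)).mul (m2.mul m3)
  have meas2 : Measurable (fun p : ℝ × E n => ∫⁻ ξ, ENNReal.ofReal (2 * Real.pi) *
        (ENNReal.ofReal ‖ξ‖ * ‖hi (p.1 • ξ + p.2)‖ₑ) *
          (‖G (-(ξ + p.2))‖ₑ * ‖P ξ‖ₑ)) := Measurable.lintegral_prod_right' meas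
  have meas3 : Measurable (fun p : ℝ × E n => ‖σ1 p.2‖ₑ * ∫⁻ ξ, ENNReal.ofReal (2 * Real.pi) *
        (ENNReal.ofReal ‖ξ‖ * ‖hi (p.1 • ξ + p.2)‖ₑ) *
          (‖G (-(ξ + p.2))‖ₑ * ‖P ξ‖ₑ)) :=
    (σcont.comp continuous_snd).enorm.measurable.mul meas2
  rw [lintegral_lintegral_swap meas3.aemeasurable]
  have inner : ∀ η, ∫⁻ s : ℝ, ‖σ1 η‖ₑ * ∫⁻ ξ, ENNReal.ofReal (2 * Real.pi) *
        (ENNReal.ofReal ‖ξ‖ * ‖hi (s • ξ + η)‖ₑ) * (‖G (-(ξ + η))‖ₑ * ‖P ξ‖ₑ)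
      ≤ ‖σ1 η‖ₑ * (ENNReal.ofReal (2 * Real.pi) * ENNReal.ofReal (Cd * Real.pi) *
        H) := by
    intro η
    rw [lintegral_const_mul' _ _ enorm_ne_top]
    refine mul_le_mul_right ?_ _
    have mm : Measurable (fun p : ℝ × E n => ENNReal.ofReal (2 * Real.pi) *
        (ENNReal.ofReal ‖p.2‖ * ‖hi (p.1 • p.2 + η)‖ₑ) * (‖G (-(p.2 + η))‖ₑ * ‖P p.2‖ₑ)) :=
      meas.comp (g := fun p : (ℝ × E n) × E n => ENNReal.ofReal (2 * Real.pi) *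
        (ENNReal.ofReal ‖p.2‖ * ‖hi (p.1.1 • p.2 + p.1.2)‖ₑ) *
          (‖G (-(p.2 + p.1.2))‖ₑ * ‖P p.2‖ₑ)) (f := fun p : ℝ × E n => ((p.1, η), p.2))
        (by fun_prop)
    rw [lintegral_lintegral_swap mm.aemeasurable]
    calc _ ≤ ∫⁻ ξ, ENNReal.ofReal (2 * Real.pi) * ENNReal.ofReal (Cd * Real.pi) *
          (‖G (-(ξ + η))‖ₑ * ‖P ξ‖ₑ) := by
          apply lintegral_mono
          intro ξ
          show ∫⁻ s : ℝ, _ * _ * _ ≤ _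
          rw [lintegral_mul_const' _ _ (ENNReal.mul_ne_top enorm_ne_top enorm_ne_top),
            lintegral_const_mul' _ _ ENNReal.ofReal_ne_top]
          refine mul_le_mul_left ?_ _
          refine mul_le_mul_right ?_ _
          exact lint_s hCd hdec ξ η
      _ = ENNReal.ofReal (2 * Real.pi) * ENNReal.ofReal (Cd * Real.pi) *
          ∫⁻ ξ, (‖G (-(ξ + η))‖ₑ * ‖P ξ‖ₑ) := by
          rw [lintegral_const_mul' _ _ (ENNReal.mul_ne_top ENNReal.ofReal_ne_top ENNReal.ofReal_ne_top)]
      _ ≤ _ := mul_le_mul_right (hol η) _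
  refine (lintegral_mono inner).trans ?_
  rw [lintegral_mul_const _ σcont.enorm.measurable]

set_option maxHeartbeats 1000000 in
theorem l2_bound (hh : ContDiff ℝ (⊤ : ℕ∞) h) (hhc : HasCompactSupport h)
    (hω : ContDiff ℝ (⊤ : ℕ∞) ω) (hωc : HasCompactSupport ω) (hv : ‖v‖ ≤ 1)
    {A R : ℝ} (hΨ : Ker (PsiK h ω v) A R) :
    ∃ C : ℝ, 0 < C ∧ ∀ (g φ : E n → ℝ) (M L : ℝ), Measurable g → Measurable φ →
      (∀ x, |g x| ≤ M) → (∀ x, |φ x| ≤ M) → (∀ x, L ≤ ‖x‖ → g x = 0) →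
      (∀ x, L ≤ ‖x‖ → φ x = 0) →
      ∫⁻ s in Ioi (0:ℝ), ‖s⁻¹ * ∫ x, φ x * q (PsiK h ω v) g s x‖ₑ
        ≤ ENNReal.ofReal C * (eLpNorm g 2 volume * eLpNorm φ 2 volume) := by
  set σ : 𝓢(E n, ℂ) := (cast_compact hωc).toSchwartzMap (cast_contDiff hω) with hσ
  have σe : ∀ x, σ x = (ω x : ℂ) := fun x => rfl
  set σ1 : 𝓢(E n, ℂ) := 𝓕 σ with hσ1
  set σ2 : 𝓢(E n, ℂ) := 𝓕 (LineDeriv.lineDerivOp v σ) with hσ2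
  have k1 : ∀ x, (ω x : ℂ) = ∫ η, ee η x * σ1 η := fun x => by rw [← σe, sch_inv σ x]
  have k2 : ∀ x, (fderiv ℝ ω x v : ℂ) = ∫ η, ee η x * σ2 η := fun x => by
    rw [← cast_fderiv hω]
    exact sch_inv (LineDeriv.lineDerivOp v σ) x
  have k3 : ∀ η, σ2 η = 2 * Real.pi * Complex.I * (inner ℝ v η : ℝ) * σ1 η := by
    intro η
    rw [hσ2, SchwartzMap.fourier_lineDerivOp_eq]
    have ht : (fun x : E n => (inner ℝ x v : ℝ)).HasTemperateGrowth := by fun_prop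
    simp only [smul_apply]
    rw [SchwartzMap.smulLeftCLM_apply_apply ht, real_inner_comm, ← hσ1]
    simp only [smul_eq_mul, Complex.real_smul]
    ring
  set hS : 𝓢(E n, ℂ) := (cast_compact hhc).toSchwartzMap (cast_contDiff hh) with hhS
  obtain ⟨Cd, hCd, hdec⟩ := decay (𝓕⁻ hS)
  have hSe : ∀ ζ, (𝓕⁻ hS) ζ = 𝓕⁻ (fun x => (h x : ℂ)) ζ := by
    intro ζ
    rw [SchwartzMap.fourierInv_coe]
    rfl
  simp_rw [hSe] at hdec
  have hSigInt : ∫⁻ η, ‖σ1 η‖ₑ ≠ ⊤ := σ1.integrable.2.ne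
  refine ⟨2 * Real.pi * (Cd * Real.pi) * ((∫⁻ η, ‖σ1 η‖ₑ).toReal + 1), by positivity, ?_⟩
  intro g φ M L hg hφ hgM hφM hgL hφL
  have gint := int_bdd hg hgM hgL
  have φint := int_bdd hφ hφM hφL
  set hi := 𝓕⁻ (fun x => (h x : ℂ)) with hhi
  set G := 𝓕 (fun x => (g x : ℂ)) with hG
  set P := 𝓕 (fun x => (φ x : ℂ)) with hP
  have hicont : Continuous hi := by
    have e : hi = fun ζ => (𝓕⁻ hS) ζ := funext fun ζ => (hSe ζ).symm
    rw [e]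
    exact (𝓕⁻ hS).continuous
  have Gcont : Continuous G := fourier_cont gint.ofReal
  have Pcont : Continuous P := fourier_cont φint.ofReal
  have σcont := σ1.continuous
  have step1 : ∫⁻ s in Ioi (0:ℝ), ‖s⁻¹ * ∫ x, φ x * q (PsiK h ω v) g s x‖ₑ
      ≤ ∫⁻ s : ℝ, ∫⁻ η, ‖σ1 η‖ₑ * ∫⁻ ξ, ENNReal.ofReal (2 * Real.pi) *
        (ENNReal.ofReal ‖ξ‖ * ‖hi (s • ξ + η)‖ₑ) * (‖G (-(ξ + η))‖ₑ * ‖P ξ‖ₑ) := by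
    refine le_trans ?_ (setLIntegral_le_lintegral (Ioi 0) _)
    apply setLIntegral_mono_ae' measurableSet_Ioi
    refine Eventually.of_forall fun s hs => ?_
    have hs : 0 < s := hs
    rw [enorm_mul]
    refine (mul_le_mul_right (α := ENNReal) (form_enorm_le hh hhc hv σ1 σ2 k1 k2 k3 hΨ hg hφ hgM hφM hgL hφL hs)
      _).trans ?_
    rw [← lintegral_const_mul' _ _ enorm_ne_top]
    apply lintegral_mono
    intro η
    beta_reduce
    rw [mul_left_comm]
    refine mul_le_mul_right ?_ _
    rw [← lintegral_const_mul' _ _ enorm_ne_top]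
    apply lintegral_mono
    intro ξ
    beta_reduce
    have key : ‖s⁻¹‖ₑ * ENNReal.ofReal (2 * Real.pi * s * ‖ξ‖)
        = ENNReal.ofReal (2 * Real.pi) * ENNReal.ofReal ‖ξ‖ := by
      rw [← ofReal_norm, norm_inv, Real.norm_of_nonneg hs.le,
        ← ENNReal.ofReal_mul (by positivity), ← ENNReal.ofReal_mul (by positivity)]
      congr 1
      field_simp
    apply le_of_eq
    exact asc key _ _
  refine step1.trans ?_
  have hol : ∀ η, ∫⁻ ξ, ‖G (-(ξ + η))‖ₑ * ‖P ξ‖ₑ ≤ eLpNorm g 2 volume * eLpNorm φ 2 volume := by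
    intro η
    have gintC : Integrable (fun x => (g x : ℂ)) := gint.ofReal
    have φintC : Integrable (fun x => (φ x : ℂ)) := φint.ofReal
    have pg := (plancherel gintC (memLp_bdd hg hgM hgL).1).2
    have pp := (plancherel φintC (memLp_bdd hφ hφM hφL).1).2
    rw [(memLp_bdd hg hgM hgL).2, ← hG] at pg
    rw [(memLp_bdd hφ hφM hφL).2, ← hP] at pp
    have m2 : Measurable (fun ξ : E n => ‖G (-(ξ + η))‖ₑ) :=
      ((Gcont.comp (by fun_prop : Continuous fun ξ : E n => -(ξ + η))).enorm).measurable
    refine (ENNReal.lintegral_mul_le_Lp_mul_Lq volume Real.HolderConjugate.two_two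
      m2.aemeasurable Pcont.enorm.measurable.aemeasurable).trans ?_
    rw [← pg, ← pp, eLp2, eLp2]
    have e : ∫⁻ ξ : E n, ‖G (-(ξ + η))‖ₑ ^ (2:ℝ) = ∫⁻ ξ : E n, ‖G ξ‖ₑ ^ (2:ℝ) := by
      rw [lintegral_add_right_eq_self (fun ξ : E n => ‖G (-ξ)‖ₑ ^ (2:ℝ)) η]
      exact lintegral_neg_eq_self (fun ξ : E n => ‖G ξ‖ₑ ^ (2:ℝ))
    rw [e]
  refine (tonelli_fin hicont Gcont Pcont σcont hCd hdec _ hol).trans ?_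
  rw [← mul_assoc]
  refine mul_le_mul_left ?_ _
  rw [mul_comm, ← ENNReal.ofReal_mul (by positivity),
    ENNReal.ofReal_mul (p := 2 * Real.pi * (Cd * Real.pi)) (by positivity)]
  refine mul_le_mul_right ?_ _
  rw [← ENNReal.ofReal_toReal hSigInt, ENNReal.toReal_ofReal ENNReal.toReal_nonneg]
  exact ENNReal.ofReal_le_ofReal (by linarith)
end GG
end Bog

set_option linter.unusedSectionVars false

namespace Bog

section HH
variable {n : ℕ} {Ψ : E n → E n → ℝ} {A R : ℝ} {f : E n → ℝ}

lemma q_one_small (hΨ : Ker Ψ A R) (h0 : ∀ y, ∫ w, Ψ y w = 0) {s : ℝ} (hs : 0 < s) (x : E n) :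
    |q Ψ (fun _ => 1) s x| ≤ A * R * V n R * s := by
  have hA := hΨ.posA
  have hR := hΨ.posR
  have e : q Ψ (fun _ => 1) s x = ∫ w, (Ψ (x - s • w) w - Ψ x w) := by
    have i1 := q_integrable hΨ (continuous_const (y := (1:ℝ))) s x
    have i2 := q_integrable hΨ (continuous_const (y := (1:ℝ))) 0 x
    simp only [one_smul, zero_smul, sub_zero] at i1 i2
    rw [integral_sub i1 i2, h0, sub_zero]
    simp [q]
  rw [e, ← Real.norm_eq_abs]
  have : A * R * V n R * s = (A * (s * R)) * V n R := by ring
  rw [this]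
  apply norm_integral_le_of_ball
  · intro w hw
    refine (hΨ.lip _ _ _ _).trans ?_
    rw [sub_self w, norm_zero, add_zero, sub_sub_cancel_left, norm_neg, norm_smul,
      Real.norm_of_nonneg hs.le]
    gcongr
  · intro w hw
    simp [hΨ.supp _ _ hw]

lemma q_one_lip (hΨ : Ker Ψ A R) {s : ℝ} (x x' : E n) :
    |q Ψ (fun _ => 1) s x - q Ψ (fun _ => 1) s x'| ≤ A * V n R * ‖x - x'‖ := by
  have hA := hΨ.posA
  have e : q Ψ (fun _ => 1) s x - q Ψ (fun _ => 1) s x'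
      = ∫ w, (Ψ (x - s • w) w - Ψ (x' - s • w) w) := by
    have i1 := q_integrable hΨ (continuous_const (y := (1:ℝ))) s x
    have i2 := q_integrable hΨ (continuous_const (y := (1:ℝ))) s x'
    simp only [one_smul] at i1 i2
    rw [integral_sub i1 i2]
    simp [q]
  rw [e, ← Real.norm_eq_abs]
  have : A * V n R * ‖x - x'‖ = (A * ‖x - x'‖) * V n R := by ring
  rw [this]
  apply norm_integral_le_of_ball
  · intro w hw
    refine (hΨ.lip _ _ _ _).trans ?_
    rw [sub_self w, norm_zero, add_zero, sub_sub_sub_cancel_right]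
  · intro w hw
    simp [hΨ.supp _ _ hw]

lemma q_split (hΨ : Ker Ψ A R) (hf : Continuous f) (c s : ℝ) (x : E n) :
    q Ψ f s x = q Ψ (fun y => f y - c) s x + c * q Ψ (fun _ => 1) s x := by
  have i1 := q_integrable hΨ (f := fun y => f y - c) (hf.sub (continuous_const (y := c))) s x
  have i2 := q_integrable hΨ (continuous_const (y := (1:ℝ))) s x
  unfold q
  beta_reduce
  rw [← integral_const_mul, ← integral_add i1 (i2.const_mul c)]
  congr 1
  ext w
  simp only [smul_eq_mul]
  ring

lemma q_diff (hΨ : Ker Ψ A R) {M N : ℝ} (hf : Continuous f) (hM : ∀ x, |f x| ≤ M) (hB : BM f N)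
    {s : ℝ} (hs : 0 < s) {x x0 : E n} (hx : ‖x - x0‖ ≤ s) :
    |q Ψ f s x - q Ψ f s x0| ≤ (A * V n (R + 1) + 2 ^ (n + 1) * (A * V n R)) * N * (‖x - x0‖ / s) := by
  have hA := hΨ.posA
  have hR := hΨ.posR
  have hN := hB.pos
  have hVR := V_nonneg (n := n) R
  obtain ⟨c, hc1, hc2⟩ := osc_exists hf hM hB x0 (show 0 < (R + 1) * s by positivity)
  rw [q_split hΨ hf c s x, q_split hΨ hf c s x0]
  set d := ‖x - x0‖ with hd
  have hd0 : 0 ≤ d := norm_nonneg _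
  have g_c : Continuous (fun y => f y - c) := hf.sub continuous_const
  have i : ∀ z : E n, Integrable (fun y => (f y - c) • Ψ y (s⁻¹ • (z - y))) := by
    intro z
    apply integrable_of_ball (R := ‖z‖ + R * s)
    · exact g_c.smul (hΨ.cont_comp continuous_id (by fun_prop))
    · intro w hw
      rw [hΨ.supp, smul_zero]
      rw [norm_smul, norm_inv, Real.norm_of_nonneg hs.le, inv_mul_eq_div, le_div_iff₀ hs]
      have := norm_sub_norm_le w z
      rw [norm_sub_rev] at this
      linarith
  have h1 : |q Ψ (fun y => f y - c) s x - q Ψ (fun y => f y - c) s x0|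
      ≤ A * V n (R + 1) * N * (d / s) := by
    rw [q_eq Ψ _ hs, q_eq Ψ _ hs, ← smul_sub, ← integral_sub (i x) (i x0), smul_eq_mul, abs_mul,
      abs_of_nonneg (by positivity : 0 ≤ (s ^ n)⁻¹)]
    have e : ∫ y, ((f y - c) • Ψ y (s⁻¹ • (x - y)) - (f y - c) • Ψ y (s⁻¹ • (x0 - y)))
        = ∫ y in ball x0 ((R + 1) * s),
          ((f y - c) • Ψ y (s⁻¹ • (x - y)) - (f y - c) • Ψ y (s⁻¹ • (x0 - y))) := by
      rw [setIntegral_eq_integral_of_forall_compl_eq_zero]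
      intro y hy
      rw [mem_ball, not_lt, dist_eq_norm] at hy
      rw [hΨ.supp, hΨ.supp, sub_self]
      · rw [norm_smul, norm_inv, Real.norm_of_nonneg hs.le, inv_mul_eq_div, le_div_iff₀ hs,
          norm_sub_rev]
        nlinarith
      · rw [norm_smul, norm_inv, Real.norm_of_nonneg hs.le, inv_mul_eq_div, le_div_iff₀ hs,
          norm_sub_rev]
        have h3 : y - x0 = (y - x) + (x - x0) := by abel
        have h4 := norm_add_le (y - x) (x - x0)
        rw [← h3] at h4
        linarith
    rw [e]
    have h2 : |∫ y in ball x0 ((R + 1) * s),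
          ((f y - c) • Ψ y (s⁻¹ • (x - y)) - (f y - c) • Ψ y (s⁻¹ • (x0 - y)))|
        ≤ ∫ y in ball x0 ((R + 1) * s), |f y - c| * (A * (d / s)) := by
      rw [← Real.norm_eq_abs]
      apply norm_integral_le_of_norm_le
      · apply Integrable.mul_const
        exact (intOn_ball hf hM measure_ball_lt_top.ne).sub (integrableOn_const
          measure_ball_lt_top.ne) |>.abs
      · refine Eventually.of_forall fun y => ?_
        rw [← smul_sub, norm_smul, Real.norm_eq_abs]
        refine mul_le_mul_of_nonneg_left ((hΨ.lip _ _ _ _).trans ?_) (abs_nonneg _)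
        rw [sub_self y, norm_zero, zero_add, ← smul_sub, sub_sub_sub_cancel_right, norm_smul,
          norm_inv, Real.norm_of_nonneg hs.le, inv_mul_eq_div]
    rw [integral_mul_const] at h2
    have h3 : (∫ y in ball x0 ((R + 1) * s), |f y - c|) * (A * (d / s))
        ≤ (N * (s ^ n * V n (R + 1))) * (A * (d / s)) := by
      apply mul_le_mul_of_nonneg_right _ (by positivity)
      refine hc2.trans (le_of_eq ?_)
      rw [V_scale (show 0 < (R + 1) * s by positivity), V_scale (show 0 < R + 1 by positivity), mul_pow]
      ring
    calc _ ≤ (s ^ n)⁻¹ * ((N * (s ^ n * V n (R + 1))) * (A * (d / s))) :=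
          mul_le_mul_of_nonneg_left (h2.trans h3) (by positivity)
      _ = _ := by field_simp
  have h5 : |c * (q Ψ (fun _ => 1) s x - q Ψ (fun _ => 1) s x0)|
      ≤ 2 ^ (n + 1) * (A * V n R) * N * (d / s) := by
    rw [abs_mul]
    have h6 := q_one_lip hΨ (s := s) x x0
    have h7 : |c| ≤ 2 ^ (n + 1) * N / s := by
      rw [le_div_iff₀ hs]
      refine le_trans ?_ hc1
      have := abs_nonneg c
      have : |c| * (R * s) ≥ 0 := by positivity
      nlinarith
    calc _ ≤ (2 ^ (n + 1) * N / s) * (A * V n R * d) := by gcongr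
      _ = _ := by ring
  calc _ = |(q Ψ (fun y => f y - c) s x - q Ψ (fun y => f y - c) s x0)
        + c * (q Ψ (fun _ => 1) s x - q Ψ (fun _ => 1) s x0)| := by congr 1; ring
    _ ≤ _ := (abs_add_le _ _).trans (add_le_add h1 h5)
    _ = _ := by ring

lemma q_abs (hΨ : Ker Ψ A R) {M N : ℝ} (hf : Continuous f) (hM : ∀ x, |f x| ≤ M) (hB : BM f N)
    {s r0 : ℝ} (hr0 : 0 < r0) (hs : r0 ≤ s) (hs1 : s ≤ 1) (x : E n) :
    |q Ψ f s x| ≤ (r0 ^ n)⁻¹ * A * V n (R + 1) * N := by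
  have hA := hΨ.posA
  have hR := hΨ.posR
  have hN := hB.pos
  have hs0 : 0 < s := hr0.trans_le hs
  rw [q_eq Ψ _ hs0, smul_eq_mul, abs_mul, abs_of_nonneg (by positivity : 0 ≤ (s ^ n)⁻¹)]
  have e : ∫ y, f y • Ψ y (s⁻¹ • (x - y)) = ∫ y in ball x (R + 1), f y • Ψ y (s⁻¹ • (x - y)) := by
    rw [setIntegral_eq_integral_of_forall_compl_eq_zero]
    intro y hy
    rw [mem_ball, not_lt, dist_eq_norm] at hy
    rw [hΨ.supp, smul_zero]
    rw [norm_smul, norm_inv, Real.norm_of_nonneg hs0.le, inv_mul_eq_div, le_div_iff₀ hs0,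
          norm_sub_rev]
    nlinarith
  have h2 : |∫ y in ball x (R + 1), f y • Ψ y (s⁻¹ • (x - y))|
        ≤ ∫ y in ball x (R + 1), |f y| * A := by
      rw [← Real.norm_eq_abs]
      apply norm_integral_le_of_norm_le
      · apply Integrable.mul_const
        exact (intOn_ball hf hM measure_ball_lt_top.ne).abs
      · refine Eventually.of_forall fun y => ?_
        rw [norm_smul, Real.norm_eq_abs]
        exact mul_le_mul_of_nonneg_left (hΨ.bound _ _) (abs_nonneg _)
  rw [integral_mul_const] at h2
  have h3 := hB.large x (R + 1) (by linarith)
  rw [e]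
  have h4 : (s ^ n)⁻¹ ≤ (r0 ^ n)⁻¹ := by gcongr
  calc _ ≤ (r0 ^ n)⁻¹ * (N * V n (R + 1) * A) := by
        apply mul_le_mul h4 (h2.trans (by gcongr)) (abs_nonneg _) (by positivity)
    _ = _ := by ring

lemma Tr_bound (hD : Ker Ψ A R) (h0 : ∀ y, ∫ w, Ψ y w = 0)
    {M K β : ℝ} (hM : ∀ x, |f x| ≤ M) (hf : Continuous f) (hβ : 0 < β) (hβ1 : β < 1) (hK0 : 0 ≤ K)
    (hK : ∀ x y, |f x - f y| ≤ K * ‖x - y‖ ^ β) {s : ℝ} (hs : s ∈ Ioo (0:ℝ) 1) (x : E n) :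
    ‖s⁻¹ • q Ψ f s x‖ ≤ ((K * R ^ β + M * R) * A * V n R) * s ^ (β - 1) := by
  have := q_hoelder hD h0 hM hf hβ hβ1 hK0 hK hs.1 hs.2.le x
  rw [norm_smul, norm_inv, Real.norm_of_nonneg hs.1.le, Real.rpow_sub_one hs.1.ne',
    ← mul_div_assoc, div_eq_inv_mul]
  exact mul_le_mul_of_nonneg_left this (inv_nonneg.2 hs.1.le)

lemma T_cont (hD : Ker Ψ A R) (h0 : ∀ y, ∫ w, Ψ y w = 0)
    {M K β : ℝ} (hM : ∀ x, |f x| ≤ M) (hf : Continuous f) (hβ : 0 < β) (hβ1 : β < 1) (hK0 : 0 ≤ K)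
    (hK : ∀ x y, |f x - f y| ≤ K * ‖x - y‖ ^ β) {S : Set ℝ} (hS : S ⊆ Ioo 0 1)
    (hSm : MeasurableSet S) :
    (∀ x, IntegrableOn (fun s : ℝ => s⁻¹ • q Ψ f s x) S) ∧
    Continuous (fun x => ∫ s in S, s⁻¹ • q Ψ f s x) := by
  have hb := fun (s : ℝ) (hs : s ∈ Ioo (0:ℝ) 1) (x : E n) =>
    Tr_bound hD h0 hM hf hβ hβ1 hK0 hK hs x
  have hbi : IntegrableOn (fun s : ℝ => ((K * R ^ β + M * R) * A * V n R) * s ^ (β - 1)) S :=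
    IntegrableOn.mono_set (integrable_rpow_Ioo hβ ((K * R ^ β + M * R) * A * V n R)) hS
  refine ⟨fun x => ?_, ?_⟩
  · apply hbi.mono' (sq_meas_s hD hM hf x _)
    exact (ae_restrict_iff' hSm).2 (Eventually.of_forall fun s hs => hb s (hS hs) x)
  · apply continuous_of_dominated
      (bound := fun s => ((K * R ^ β + M * R) * A * V n R) * s ^ (β - 1))
    · exact fun x => sq_meas_s hD hM hf x _
    · exact fun x => (ae_restrict_iff' hSm).2
        (Eventually.of_forall fun s hs => hb s (hS hs) x)
    · exact hbi
    · refine Eventually.of_forall fun s => ?_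
      have h1 : Continuous (fun x => q Ψ f s x) :=
        (q_cont hD hM hf).comp (continuous_const.prodMk continuous_id)
      fun_prop

lemma cover {g : E n → ℝ} (hg : Continuous g) (hg0 : ∀ x, 0 ≤ g x) {r0 L : ℝ} (hr0 : 0 < r0)
    (h : ∀ z, ∫ y in ball z r0, g y ≤ L * V n r0) (x : E n) {r : ℝ} (hr : r0 ≤ r) :
    ∫ y in ball x r, g y ≤ 2 ^ n * L * V n r := by
  have hI : ∀ z ρ, IntegrableOn g (ball z ρ) := fun z ρ =>
    (hg.continuousOn.integrableOn_compact (isCompact_closedBall z ρ)).mono_set ball_subset_closedBall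
  have hL : 0 ≤ L := by
    have := (setIntegral_nonneg measurableSet_ball (fun y _ => hg0 y)).trans (h 0)
    exact nonneg_of_mul_nonneg_left this (V_pos hr0)
  have conv : ∀ z ρ, ENNReal.ofReal (∫ y in ball z ρ, g y)
      = ∫⁻ y in ball z ρ, ENNReal.ofReal (g y) := fun z ρ =>
    ofReal_integral_eq_lintegral_ofReal (hI z ρ) (Eventually.of_forall hg0)
  have volb : ∀ (z : E n) ρ, volume (ball z ρ) = ENNReal.ofReal (V n ρ) := by
    intro z ρ
    rw [← vol_ball z ρ, ofReal_measureReal measure_ball_lt_top.ne]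
  have mm : Measurable (fun p : E n × E n =>
      {p : E n × E n | dist p.1 p.2 < r0}.indicator (fun p => ENNReal.ofReal (g p.1)) p) := by
    apply Measurable.indicator
    · exact (ENNReal.measurable_ofReal.comp hg.measurable).comp measurable_fst
    · exact (isOpen_lt (by fun_prop) continuous_const).measurableSet
  have key : (∫⁻ y in ball x r, ENNReal.ofReal (g y)) * ENNReal.ofReal (V n r0)
      ≤ ENNReal.ofReal (L * V n r0) * ENNReal.ofReal (V n (2 * r)) := by
    calc _ = ∫⁻ y in ball x r, ∫⁻ z in ball x (2 * r),
          {p : E n × E n | dist p.1 p.2 < r0}.indicator (fun p => ENNReal.ofReal (g p.1)) (y, z) := by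
          rw [← lintegral_mul_const' _ _ ENNReal.ofReal_ne_top]
          apply setLIntegral_congr_fun measurableSet_ball
          intro y hy
          beta_reduce
          have e : (fun z => {p : E n × E n | dist p.1 p.2 < r0}.indicator
              (fun p => ENNReal.ofReal (g p.1)) (y, z))
              = (ball y r0).indicator (fun _ => ENNReal.ofReal (g y)) := by
            ext z
            by_cases hz : dist y z < r0
            · rw [indicator_of_mem (by exact hz), indicator_of_mem (by rwa [mem_ball'])]
            · rw [indicator_of_notMem (by exact hz), indicator_of_notMem (by rwa [mem_ball'])]
          rw [e, setLIntegral_indicator measurableSet_ball, setLIntegral_const,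
            inter_eq_left.2, volb]
          apply ball_subset_ball'
          rw [mem_ball] at hy
          linarith
      _ = ∫⁻ z in ball x (2 * r), ∫⁻ y in ball x r,
          {p : E n × E n | dist p.1 p.2 < r0}.indicator (fun p => ENNReal.ofReal (g p.1)) (y, z) :=
          lintegral_lintegral_swap mm.aemeasurable
      _ ≤ ∫⁻ z in ball x (2 * r), ENNReal.ofReal (L * V n r0) := by
          apply lintegral_mono
          intro z
          beta_reduce
          refine le_trans (setLIntegral_le_lintegral _ _) ?_
          have e : (fun y => {p : E n × E n | dist p.1 p.2 < r0}.indicator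
              (fun p => ENNReal.ofReal (g p.1)) (y, z))
              = (ball z r0).indicator (fun y => ENNReal.ofReal (g y)) := by
            ext y
            by_cases hz : dist y z < r0
            · rw [indicator_of_mem (by exact hz), indicator_of_mem (by rwa [mem_ball])]
            · rw [indicator_of_notMem (by exact hz), indicator_of_notMem (by rwa [mem_ball])]
          rw [e, lintegral_indicator measurableSet_ball, ← conv]
          exact ENNReal.ofReal_le_ofReal (h z)
      _ = _ := by rw [setLIntegral_const, volb]
  rw [← conv, ← ENNReal.ofReal_mul (setIntegral_nonneg measurableSet_ball fun y _ => hg0 y),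
    ← ENNReal.ofReal_mul (mul_nonneg hL (V_nonneg _)),
    ENNReal.ofReal_le_ofReal_iff (mul_nonneg (mul_nonneg hL (V_nonneg _)) (V_nonneg _)),
    V_double (hr0.trans_le hr)] at key
  apply le_of_mul_le_mul_right _ (V_pos (n := n) hr0)
  linarith

end HH
end Bog

set_option linter.unusedSectionVars false

namespace Bog

section II
variable {n : ℕ} {Ψ : E n → E n → ℝ} {A R : ℝ} {f : E n → ℝ}

/-- the `L²` bound for the truncated operators -/
def L2B (Ψ : E n → E n → ℝ) (C : ℝ) : Prop :=
  ∀ (g φ : E n → ℝ) (M L : ℝ), Measurable g → Measurable φ →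
      (∀ x, |g x| ≤ M) → (∀ x, |φ x| ≤ M) → (∀ x, L ≤ ‖x‖ → g x = 0) →
      (∀ x, L ≤ ‖x‖ → φ x = 0) →
      ∫⁻ s in Ioi (0:ℝ), ‖s⁻¹ * ∫ x, φ x * q Ψ g s x‖ₑ
        ≤ ENNReal.ofReal C * (eLpNorm g 2 volume * eLpNorm φ 2 volume)

lemma eLp2r {g : E n → ℝ} {S : Set (E n)} (hSm : MeasurableSet S) (hS : volume S ≠ ⊤)
    (hg : Measurable g) {M : ℝ} (hM : ∀ x, |g x| ≤ M) :
    eLpNorm (S.indicator g) 2 volume = ENNReal.ofReal (√(∫ x in S, g x ^ 2)) := by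
  rw [eLpNorm_indicator_eq_eLpNorm_restrict hSm]
  have : IsFiniteMeasure (volume.restrict S) := ⟨by rw [Measure.restrict_apply_univ]; exact hS.lt_top⟩
  have h3 : MemLp g 2 (volume.restrict S) :=
    MemLp.of_bound hg.aestronglyMeasurable M (Eventually.of_forall hM)
  rw [h3.eLpNorm_eq_integral_rpow_norm (by norm_num) (by norm_num)]
  congr 1
  rw [Real.sqrt_eq_rpow]
  norm_num

lemma phi_q_int (hΨ : Ker Ψ A R) {M : ℝ} (hf : Continuous f) (hM : ∀ x, |f x| ≤ M) {φ : E n → ℝ}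
    (hφ : Measurable φ) (h1 : ∀ x, |φ x| ≤ 1) {L : ℝ} (hL : ∀ x, L ≤ ‖x‖ → φ x = 0) (s : ℝ) :
    Integrable (fun x => φ x * q Ψ f s x) := by
  have hc : Continuous (fun x => q Ψ f s x) :=
        (q_cont hΨ hM hf).comp (continuous_const.prodMk continuous_id)
  apply int_bdd (M := 1 * (M * A * V n R)) (L := L) (hφ.mul hc.measurable)
  · intro x
    rw [Pi.mul_apply, abs_mul]
    exact mul_le_mul (h1 x) (q_norm_le hΨ hM s x) (abs_nonneg _) zero_le_one
  · intro x hx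
    rw [Pi.mul_apply, hL x hx, zero_mul]

set_option maxHeartbeats 1000000 in
lemma small_scale (hΨ : Ker Ψ A R) (h0 : ∀ y, ∫ w, Ψ y w = 0) {C2 CJ : ℝ} (hC2 : 0 < C2)
    (hL2 : L2B Ψ C2) (hCJ : 0 < CJ)
    {M K β N : ℝ} (hM : ∀ x, |f x| ≤ M) (hf : Continuous f) (hβ : 0 < β) (hβ1 : β < 1) (hK0 : 0 ≤ K)
    (hK : ∀ x y, |f x - f y| ≤ K * ‖x - y‖ ^ β) (hB : BM f N) (x0 : E n) {r : ℝ} (hr : 0 < r)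
    (hr1 : (1 + R) * r ≤ 1)
    (hJ : ∫ y in ball x0 ((1 + R) * r), (f y - ⨍ z in ball x0 ((1 + R) * r), f z) ^ 2
      ≤ CJ * N ^ 2 * V n ((1 + R) * r)) :
    ∫ x in ball x0 r, |∫ s in Ioo 0 r, s⁻¹ • q Ψ f s x|
      ≤ (C2 * √(CJ * (1 + R) ^ n) + 2 ^ (n + 1) * (A * R * V n R)) * N * V n r := by
  have hA := hΨ.posA
  have hR := hΨ.posR
  have hN := hB.pos
  have hVR := V_nonneg (n := n) R
  have hVr := V_pos (n := n) hr
  have hM0 : 0 ≤ M := (abs_nonneg _).trans (hM 0)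
  set ρ := (1 + R) * r with hρ
  have hrρ : r ≤ ρ := by nlinarith
  have hρ0 : 0 < ρ := by positivity
  set c := ⨍ z in ball x0 ρ, f z with hc
  have hcb : |c| * r ≤ 2 ^ (n + 1) * N := by
    refine le_trans ?_ (avg_bound hf hM hB x0 hρ0 hr1)
    exact mul_le_mul_of_nonneg_left hrρ (abs_nonneg _)
  have hsub : Ioo 0 r ⊆ Ioo (0:ℝ) 1 := Ioo_subset_Ioo_right (hrρ.trans hr1)
  obtain ⟨hSi, hSc⟩ := T_cont hΨ h0 hM hf hβ hβ1 hK0 hK hsub measurableSet_Ioo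
  set S : E n → ℝ := fun x => ∫ s in Ioo 0 r, s⁻¹ • q Ψ f s x with hS
  set φ : E n → ℝ := (ball x0 r).indicator (fun x => if 0 ≤ S x then (1:ℝ) else -1) with hφ
  set g : E n → ℝ := (ball x0 ρ).indicator (fun x => f x - c) with hg
  have phiMeas : Measurable (fun x => if 0 ≤ S x then (1:ℝ) else -1) :=
    Measurable.ite (measurableSet_le measurable_const hSc.measurable) measurable_const
      measurable_const
  have phiBd : ∀ x, |if 0 ≤ S x then (1:ℝ) else -1| ≤ 1 := by
    intro x; split_ifs <;> simp
  have φm : Measurable φ := phiMeas.indicator measurableSet_ball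
  have g0m : Measurable (fun x => f x - c) := hf.measurable.sub_const c
  have gm : Measurable g := g0m.indicator measurableSet_ball
  have φb : ∀ x, |φ x| ≤ 1 := by
    intro x
    rw [hφ]
    by_cases hx : x ∈ ball x0 r
    · rw [indicator_of_mem hx]; exact phiBd x
    · rw [indicator_of_notMem hx]; simp
  have g0b : ∀ x, |f x - c| ≤ M + |c| := fun x =>
    (abs_sub _ _).trans (add_le_add (hM x) le_rfl)
  have gb : ∀ x, |g x| ≤ M + |c| := by
    intro x
    rw [hg]
    by_cases hx : x ∈ ball x0 ρ
    · rw [indicator_of_mem hx]; exact g0b x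
    · rw [indicator_of_notMem hx]; simp; positivity
  have gL : ∀ x, ‖x0‖ + ρ ≤ ‖x‖ → g x = 0 := by
    intro x hx
    rw [hg, indicator_of_notMem]
    rw [mem_ball, dist_eq_norm]
    have := norm_sub_norm_le x x0
    linarith
  have φL : ∀ x, ‖x0‖ + ρ ≤ ‖x‖ → φ x = 0 := by
    intro x hx
    rw [hφ, indicator_of_notMem]
    rw [mem_ball, dist_eq_norm]
    have := norm_sub_norm_le x x0
    linarith
  have hl := hL2 g φ (1 + M + |c|) (‖x0‖ + ρ) gm φm
    (fun x => (gb x).trans (by linarith)) (fun x => (φb x).trans (by have := abs_nonneg c; linarith))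
    gL φL
  -- norms
  have ng : eLpNorm g 2 volume ≤ ENNReal.ofReal (√(CJ * (1 + R) ^ n) * N * √(V n r)) := by
    rw [hg, eLp2r measurableSet_ball measure_ball_lt_top.ne g0m g0b]
    apply ENNReal.ofReal_le_ofReal
    refine (Real.sqrt_le_sqrt hJ).trans (le_of_eq ?_)
    rw [← Real.sqrt_sq hN.le, ← Real.sqrt_mul (by positivity), ← Real.sqrt_mul (by positivity),
      Real.sqrt_sq hN.le, hρ, V_scale (show 0 < (1 + R) * r by positivity), V_scale hr, mul_pow]
    congr 1
    ring
  have nφ : eLpNorm φ 2 volume ≤ ENNReal.ofReal (√(V n r)) := by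
    rw [hφ, eLp2r measurableSet_ball measure_ball_lt_top.ne phiMeas phiBd]
    apply ENNReal.ofReal_le_ofReal
    apply Real.sqrt_le_sqrt
    have e : ∀ x, (if 0 ≤ S x then (1:ℝ) else -1) ^ 2 = 1 := by
      intro x; split_ifs <;> simp
    simp_rw [e]
    simp [vol_ball]
  have hl2 : ∫⁻ s in Ioi (0:ℝ), ‖s⁻¹ * ∫ x, φ x * q Ψ g s x‖ₑ
      ≤ ENNReal.ofReal (C2 * (√(CJ * (1 + R) ^ n) * N * V n r)) := by
    refine hl.trans ?_
    rw [ENNReal.ofReal_mul hC2.le]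
    refine mul_le_mul_right ((mul_le_mul' ng nφ).trans ?_) _
    rw [← ENNReal.ofReal_mul (by positivity), mul_assoc, Real.mul_self_sqrt hVr.le]
  -- splitting
  have split : ∀ s ∈ Ioo 0 r, ∫ x, φ x * q Ψ f s x
      = (∫ x, φ x * q Ψ g s x) + c * ∫ x, φ x * q Ψ (fun _ => 1) s x := by
    intro s hs
    have i1 := phi_q_int hΨ hf hM φm φb φL s
    have i2 := phi_q_int hΨ (continuous_const (y := (1:ℝ))) (M := 1) (by simp) φm φb φL s
    rw [← integral_const_mul, ← sub_eq_iff_eq_add, ← integral_sub i1 (i2.const_mul c)]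
    congr 1
    ext x
    by_cases hx : x ∈ ball x0 r
    · have e : q Ψ g s x = q Ψ (fun y => f y - c) s x := by
        unfold q
        congr 1
        ext w
        by_cases hw : ‖w‖ < R
        · rw [hg, indicator_of_mem]
          rw [mem_ball, dist_eq_norm] at hx ⊢
          have e1 : x - s • w - x0 = (x - x0) - s • w := by abel
          have := norm_sub_le (x - x0) (s • w)
          rw [norm_smul, Real.norm_of_nonneg hs.1.le] at this
          rw [e1]
          have : s * ‖w‖ ≤ r * R := mul_le_mul hs.2.le hw.le (norm_nonneg _) hr.le
          linarith
        · rw [hΨ.supp _ _ (not_lt.1 hw), smul_zero, smul_zero]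
      rw [e, q_split hΨ hf c s x]
      ring
    · have : φ x = 0 := by rw [hφ, indicator_of_notMem hx]
      rw [this]; ring
  have one_b : ∀ s ∈ Ioo 0 r, ‖s⁻¹ * (c * ∫ x, φ x * q Ψ (fun _ => 1) s x)‖ₑ
      ≤ ENNReal.ofReal (|c| * (A * R * V n R * V n r)) := by
    intro s hs
    rw [← ofReal_norm]
    apply ENNReal.ofReal_le_ofReal
    have e : ∫ x, φ x * q Ψ (fun _ => 1) s x = ∫ x in ball x0 r, φ x * q Ψ (fun _ => 1) s x := by
      rw [setIntegral_eq_integral_of_forall_compl_eq_zero]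
      intro x hx
      rw [hφ, indicator_of_notMem hx, zero_mul]
    have h3 : ‖∫ x in ball x0 r, φ x * q Ψ (fun _ => 1) s x‖ ≤ (A * R * V n R * s) * V n r := by
      rw [← vol_ball x0 r]
      apply norm_setIntegral_le_of_norm_le_const measure_ball_lt_top
      intro x _
      rw [norm_mul]
      calc _ ≤ 1 * (A * R * V n R * s) := mul_le_mul (φb x) (q_one_small hΨ h0 hs.1 x)
              (abs_nonneg _) zero_le_one
        _ = _ := one_mul _
    rw [norm_mul, norm_mul, e, norm_inv, Real.norm_of_nonneg hs.1.le, Real.norm_eq_abs c]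
    have hs0 := hs.1
    calc _ ≤ s⁻¹ * (|c| * ((A * R * V n R * s) * V n r)) := by gcongr
      _ = _ := by field_simp
  -- Fubini
  have fub : ∫ x in ball x0 r, |S x| = ∫ s in Ioo 0 r, s⁻¹ * ∫ x, φ x * q Ψ f s x := by
    have e1 : ∫ x in ball x0 r, |S x| = ∫ x, ∫ s in Ioo 0 r, φ x * (s⁻¹ * q Ψ f s x) := by
      rw [← integral_indicator measurableSet_ball]
      congr 1
      ext x
      rw [integral_const_mul]
      show _ = φ x * S x
      by_cases hx : x ∈ ball x0 r
      · rw [hφ, indicator_of_mem hx, indicator_of_mem hx]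
        split_ifs with h
        · rw [abs_of_nonneg h, one_mul]
        · rw [abs_of_neg (not_le.1 h)]; ring
      · rw [hφ, indicator_of_notMem hx, indicator_of_notMem hx, zero_mul]
    rw [e1, integral_integral_swap]
    · congr 1
      ext s
      rw [← integral_const_mul]
      congr 1
      ext x
      ring
    · have hbi : IntegrableOn (fun s : ℝ => ((K * R ^ β + M * R) * A * V n R) * s ^ (β - 1)) (Ioo 0 r) :=
        IntegrableOn.mono_set (integrable_rpow_Ioo hβ ((K * R ^ β + M * R) * A * V n R)) hsub
      have i1 : Integrable (fun x => |φ x|) := (int_bdd φm φb φL).abs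
      apply (i1.mul_prod hbi).mono'
      · have c1 : Continuous (fun p : E n × ℝ => q Ψ f p.2 p.1) :=
          (q_cont hΨ hM hf).comp (continuous_snd.prodMk continuous_fst)
        have m1 : Measurable (fun p : E n × ℝ => φ p.1 * (p.2⁻¹ * q Ψ f p.2 p.1)) :=
          (φm.comp measurable_fst).mul (measurable_snd.inv.mul c1.measurable)
        exact m1.aestronglyMeasurable
      · have em : (volume : Measure (E n)).prod (volume.restrict (Ioo 0 r))
            = (volume.prod volume).restrict (univ ×ˢ Ioo 0 r) := by
          rw [← Measure.prod_restrict, Measure.restrict_univ]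
        rw [em, ae_restrict_iff' (MeasurableSet.univ.prod measurableSet_Ioo)]
        refine Eventually.of_forall fun p hp => ?_
        simp only [Function.uncurry]
        rw [norm_mul]
        exact mul_le_mul_of_nonneg_left
          (Tr_bound hΨ h0 hM hf hβ hβ1 hK0 hK (hsub hp.2) p.1) (norm_nonneg _)
  have I0 : 0 ≤ ∫ x in ball x0 r, |S x| := integral_nonneg fun x => abs_nonneg _
  have fin : ENNReal.ofReal (∫ x in ball x0 r, |S x|)
      ≤ ENNReal.ofReal (C2 * (√(CJ * (1 + R) ^ n) * N * V n r)
        + |c| * (A * R * V n R * V n r) * r) := by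
    calc _ = ‖∫ s in Ioo 0 r, s⁻¹ * ∫ x, φ x * q Ψ f s x‖ₑ := by
          rw [← fub, ← ofReal_norm, Real.norm_of_nonneg I0]
      _ ≤ ∫⁻ s in Ioo 0 r, ‖s⁻¹ * ∫ x, φ x * q Ψ f s x‖ₑ := enorm_integral_le_lintegral_enorm _
      _ ≤ ∫⁻ s in Ioo 0 r, (‖s⁻¹ * ∫ x, φ x * q Ψ g s x‖ₑ
            + ENNReal.ofReal (|c| * (A * R * V n R * V n r))) := by
          apply setLIntegral_mono_ae' measurableSet_Ioo
          refine Eventually.of_forall fun s hs => ?_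
          rw [split s hs, mul_add]
          exact (enorm_add_le _ _).trans (add_le_add le_rfl (one_b s hs))
      _ = (∫⁻ s in Ioo 0 r, ‖s⁻¹ * ∫ x, φ x * q Ψ g s x‖ₑ)
            + ENNReal.ofReal (|c| * (A * R * V n R * V n r)) * ENNReal.ofReal r := by
          rw [lintegral_add_right _ measurable_const, setLIntegral_const, Real.volume_Ioo, sub_zero]
      _ ≤ _ := by
          rw [ENNReal.ofReal_add (by positivity) (by positivity),
            ← ENNReal.ofReal_mul (by positivity)]
          refine add_le_add ((lintegral_mono_set fun s hs => ?_).trans hl2) le_rfl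
          exact hs.1
  rw [ENNReal.ofReal_le_ofReal_iff (by positivity)] at fin
  refine fin.trans ?_
  have h9 : |c| * (A * R * V n R * V n r) * r ≤ 2 ^ (n + 1) * N * (A * R * V n R * V n r) := by
    calc _ = (|c| * r) * (A * R * V n R * V n r) := by ring
      _ ≤ _ := by gcongr
  linarith

end II
end Bog

set_option linter.unusedSectionVars false

namespace Bog

section JJ
variable {n : ℕ} {Ψ : E n → E n → ℝ} {A R : ℝ} {f : E n → ℝ}

lemma int_sq_tail {r : ℝ} (hr : 0 < r) :
    IntegrableOn (fun s : ℝ => s ^ (-2 : ℝ)) (Ioo r 1) ∧ ∫ s in Ioo r 1, s ^ (-2 : ℝ) ≤ r⁻¹ := by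
  have h1 := integrableOn_Ioi_rpow_of_lt (show (-2 : ℝ) < -1 by norm_num) hr
  refine ⟨h1.mono_set Ioo_subset_Ioi_self, ?_⟩
  have h2 := integral_Ioi_rpow_of_lt (show (-2 : ℝ) < -1 by norm_num) hr
  calc _ ≤ ∫ s in Ioi r, s ^ (-2 : ℝ) := by
        apply setIntegral_mono_set h1 _ (Eventually.of_forall Ioo_subset_Ioi_self)
        refine (ae_restrict_iff' measurableSet_Ioi).2 (Eventually.of_forall fun s hs => ?_)
        exact Real.rpow_nonneg (hr.trans hs).le _
    _ = r⁻¹ := by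
      rw [h2]
      norm_num
      rw [Real.rpow_neg_one]

lemma T_decomp {h : ℝ → ℝ} (hh : IntegrableOn h (Ioo 0 1)) {r : ℝ} (hr : 0 < r) (hr1 : r < 1) :
    ∫ s in Ioo 0 1, h s = (∫ s in Ioo 0 r, h s) + ∫ s in Ioo r 1, h s := by
  rw [← Ioc_union_Ioo_eq_Ioo hr.le hr1, setIntegral_union _ measurableSet_Ioo,
    integral_Ioc_eq_integral_Ioo]
  · exact hh.mono_set fun s hs => ⟨hs.1, hs.2.trans_lt hr1⟩
  · exact hh.mono_set fun s hs => ⟨hr.trans hs.1, hs.2⟩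
  · rw [Set.disjoint_left]
    intro s hs hs'
    exact absurd hs.2 (not_le.2 hs'.1)

set_option maxHeartbeats 1000000 in
theorem cz (hn : 0 < n) (hΨ : Ker Ψ A R) (h0 : ∀ y, ∫ w, Ψ y w = 0) {C2 : ℝ} (hC2 : 0 < C2)
    (hL2 : L2B Ψ C2) :
    ∃ C : ℝ, 0 < C ∧ ∀ (f : E n → ℝ) (M K β N : ℝ), (∀ x, |f x| ≤ M) → UniformContinuous f →
      0 < β → β < 1 → 0 ≤ K → (∀ x y, |f x - f y| ≤ K * ‖x - y‖ ^ β) → BM f N →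
      BM (fun x => ∫ s in Ioo (0:ℝ) 1, s⁻¹ • q Ψ f s x) (C * N) := by
  obtain ⟨CJ, hCJ, hjn⟩ := jn_ball n hn
  have hA := hΨ.posA
  have hR := hΨ.posR
  have hVR := V_nonneg (n := n) R
  have hVR1 := V_nonneg (n := n) (R + 1)
  have hn1 : (1:ℝ) ≤ n := by exact_mod_cast hn
  set r0 : ℝ := (6 * n * (1 + R))⁻¹ with hr0
  have hr0p : 0 < r0 := by positivity
  have hr0e : 6 * n * ((1 + R) * r0) = 1 := by rw [hr0]; field_simp
  have hRr : (1 + R) * r0 ≤ 1 / 6 := by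
    have : 0 < (1 + R) * r0 := by positivity
    nlinarith
  have hr01 : r0 < 1 := by nlinarith
  set Cs := C2 * √(CJ * (1 + R) ^ n) + 2 ^ (n + 1) * (A * R * V n R) with hCs
  have hCs0 : 0 < Cs := by
    have : 0 < √(CJ * (1 + R) ^ n) := Real.sqrt_pos.2 (by positivity)
    positivity
  set C4 := A * V n (R + 1) + 2 ^ (n + 1) * (A * V n R) with hC4
  have hC40 : 0 ≤ C4 := by positivity
  set C5 := (r0 ^ n)⁻¹ * A * V n (R + 1) with hC5
  have hC50 : 0 ≤ C5 := by positivity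
  set Ca := Cs + r0⁻¹ * C5 with hCa
  have hCa0 : 0 < Ca := by positivity
  refine ⟨2 * (Cs + C4) + 2 * (2 ^ n * Ca), by positivity, ?_⟩
  intro f M K β N hM huc hβ hβ1 hK0 hK hB
  have hf := huc.continuous
  have hN := hB.pos
  obtain ⟨hTi, hTc⟩ := T_cont hΨ h0 hM hf hβ hβ1 hK0 hK subset_rfl measurableSet_Ioo
  set T : E n → ℝ := fun x => ∫ s in Ioo (0:ℝ) 1, s⁻¹ • q Ψ f s x with hT
  have TI : ∀ z ρ, IntegrableOn T (ball z ρ) := fun z ρ =>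
    (hTc.continuousOn.integrableOn_compact (isCompact_closedBall z ρ)).mono_set ball_subset_closedBall
  have sm : ∀ x0 r, 0 < r → r ≤ r0 → IntegrableOn (fun x => |∫ s in Ioo 0 r, s⁻¹ • q Ψ f s x|) (ball x0 r)
      ∧ ∫ x in ball x0 r, |∫ s in Ioo 0 r, s⁻¹ • q Ψ f s x| ≤ Cs * N * V n r := by
    intro x0 r hr hrr
    have hrr' : (1 + R) * r ≤ (1 + R) * r0 := by gcongr
    constructor
    · have := (T_cont hΨ h0 hM hf hβ hβ1 hK0 hK
        (Ioo_subset_Ioo_right (hrr.trans hr01.le) : Ioo 0 r ⊆ Ioo (0:ℝ) 1) measurableSet_Ioo).2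
      exact ((this.abs).continuousOn.integrableOn_compact
        (isCompact_closedBall x0 r)).mono_set ball_subset_closedBall
    · apply small_scale hΨ h0 hC2 hL2 hCJ hM hf hβ hβ1 hK0 hK hB x0 hr (by linarith)
      apply hjn f M N huc hM hB x0 _ (by positivity)
      have hnn : (0:ℝ) ≤ 6 * n := by positivity
      nlinarith [mul_le_mul_of_nonneg_left hrr' hnn, hr0e]
  have bigint : ∀ r, 0 < r → ∀ x, IntegrableOn (fun s : ℝ => s⁻¹ • q Ψ f s x) (Ioo r 1) :=
    fun r hr x => (hTi x).mono_set (Ioo_subset_Ioo_left hr.le)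
  -- small balls
  have A1 : ∀ x0 r, 0 < r → r ≤ r0 →
      ∫ y in ball x0 r, |T y - ⨍ z in ball x0 r, T z| ≤ 2 * (Cs + C4) * N * V n r := by
    intro x0 r hr hrr
    have hr1 : r < 1 := hrr.trans_lt hr01
    refine (osc_sub subset_rfl measure_ball_lt_top.ne (TI x0 r)
      (∫ s in Ioo r 1, s⁻¹ • q Ψ f s x0)).trans ?_
    have hpt : ∀ x ∈ ball x0 r, |T x - ∫ s in Ioo r 1, s⁻¹ • q Ψ f s x0|
        ≤ |∫ s in Ioo 0 r, s⁻¹ • q Ψ f s x| + C4 * N := by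
      intro x hx
      rw [mem_ball, dist_eq_norm] at hx
      have e1 : T x = (∫ s in Ioo 0 r, s⁻¹ • q Ψ f s x) + ∫ s in Ioo r 1, s⁻¹ • q Ψ f s x :=
        T_decomp (hTi x) hr hr1
      rw [e1, add_sub_assoc, ← integral_sub (bigint r hr x) (bigint r hr x0)]
      refine (abs_add_le _ _).trans (add_le_add le_rfl ?_)
      obtain ⟨i1, i2⟩ := int_sq_tail hr
      have : |∫ s in Ioo r 1, (s⁻¹ • q Ψ f s x - s⁻¹ • q Ψ f s x0)|
          ≤ ∫ s in Ioo r 1, (C4 * N * r) * s ^ (-2 : ℝ) := by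
        rw [← Real.norm_eq_abs]
        apply norm_integral_le_of_norm_le (i1.const_mul _)
        refine (ae_restrict_iff' measurableSet_Ioo).2 (Eventually.of_forall fun s hs => ?_)
        have hs0 : 0 < s := hr.trans hs.1
        have h3 := q_diff hΨ hf hM hB hs0 (hx.le.trans hs.1.le)
        rw [← smul_sub, norm_smul, norm_inv, Real.norm_of_nonneg hs0.le, Real.norm_eq_abs]
        have h4 : C4 * N * (‖x - x0‖ / s) ≤ C4 * N * (r / s) := by gcongr
        have e2 : s ^ (-2 : ℝ) = s⁻¹ * s⁻¹ := by
          rw [show (-2 : ℝ) = ((-2 : ℤ) : ℝ) by norm_num, Real.rpow_intCast]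
          rw [show (-2 : ℤ) = -1 + -1 by norm_num, zpow_add₀ hs0.ne', zpow_neg_one]
        calc _ ≤ s⁻¹ * (C4 * N * (r / s)) :=
              mul_le_mul_of_nonneg_left (h3.trans h4) (by positivity)
          _ = _ := by rw [e2]; ring
      refine this.trans ?_
      rw [integral_const_mul]
      calc _ ≤ (C4 * N * r) * r⁻¹ := by gcongr
        _ = _ := by field_simp
    have s1 := sm x0 r hr hrr
    have h5 : ∫ x in ball x0 r, |T x - ∫ s in Ioo r 1, s⁻¹ • q Ψ f s x0|
        ≤ ∫ x in ball x0 r, (|∫ s in Ioo 0 r, s⁻¹ • q Ψ f s x| + C4 * N) := by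
      apply setIntegral_mono_on _ _ measurableSet_ball hpt
      · exact ((TI x0 r).sub (integrableOn_const measure_ball_lt_top.ne)).abs
      · exact s1.1.add (integrableOn_const measure_ball_lt_top.ne)
    rw [integral_add s1.1 (integrableOn_const measure_ball_lt_top.ne), setIntegral_const,
      vol_ball, smul_eq_mul] at h5
    linarith [s1.2]
  -- averages
  have A2 : ∀ z, ∫ y in ball z r0, |T y| ≤ (Ca * N) * V n r0 := by
    intro z
    have hpt : ∀ x ∈ ball z r0, |T x|
        ≤ |∫ s in Ioo 0 r0, s⁻¹ • q Ψ f s x| + r0⁻¹ * C5 * N := by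
      intro x _
      have e1 : T x = (∫ s in Ioo 0 r0, s⁻¹ • q Ψ f s x) + ∫ s in Ioo r0 1, s⁻¹ • q Ψ f s x :=
        T_decomp (hTi x) hr0p hr01
      rw [e1]
      refine (abs_add_le _ _).trans (add_le_add le_rfl ?_)
      have h3 : ‖∫ s in Ioo r0 1, s⁻¹ • q Ψ f s x‖ ≤ (r0⁻¹ * C5 * N) * volume.real (Ioo r0 1) := by
        apply norm_setIntegral_le_of_norm_le_const (by simp)
        intro s hs
        have hs0 : 0 < s := hr0p.trans hs.1
        rw [norm_smul, norm_inv, Real.norm_of_nonneg hs0.le, Real.norm_eq_abs, mul_assoc]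
        have h6 := q_abs hΨ hf hM hB hr0p hs.1.le hs.2.le x
        have h7 : s⁻¹ ≤ r0⁻¹ := inv_anti₀ hr0p hs.1.le
        exact mul_le_mul h7 h6 (abs_nonneg _) (by positivity)
      rw [Real.norm_eq_abs] at h3
      refine h3.trans ?_
      have : volume.real (Ioo r0 1) ≤ 1 := by
        rw [Real.volume_real_Ioo_of_le hr01.le]; linarith
      have h8 : 0 ≤ r0⁻¹ * C5 * N := by positivity
      nlinarith
    have s1 := sm z r0 hr0p le_rfl
    have h5 : ∫ x in ball z r0, |T x|
        ≤ ∫ x in ball z r0, (|∫ s in Ioo 0 r0, s⁻¹ • q Ψ f s x| + r0⁻¹ * C5 * N) := by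
      apply setIntegral_mono_on _ _ measurableSet_ball hpt
      · exact (TI z r0).abs
      · exact s1.1.add (integrableOn_const measure_ball_lt_top.ne)
    rw [integral_add s1.1 (integrableOn_const measure_ball_lt_top.ne), setIntegral_const,
      vol_ball, smul_eq_mul] at h5
    linarith [s1.2]
  have A3 : ∀ x r, r0 ≤ r → ∫ y in ball x r, |T y| ≤ 2 ^ n * (Ca * N) * V n r :=
    fun x r hr => cover hTc.abs (fun _ => abs_nonneg _) hr0p A2 x hr
  have P1 : 0 ≤ 2 * (Cs + C4) * N := by positivity
  have P2 : 0 ≤ 2 * (2 ^ n * Ca) * N := by positivity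
  refine ⟨fun x r hr hr1 => ?_, fun x r hr => ?_, by positivity⟩
  · have hV := V_nonneg (n := n) r
    by_cases h : r ≤ r0
    · refine (A1 x r hr h).trans ?_
      nlinarith [mul_nonneg P2 hV]
    · have h4 := A3 x r (not_le.1 h).le
      have h5 := osc_sub (μ := volume) (subset_refl (ball x r)) measure_ball_lt_top.ne (TI x r) 0
      simp only [sub_zero] at h5
      refine h5.trans ?_
      nlinarith [mul_nonneg P1 hV]
  · have hV := V_nonneg (n := n) r
    refine (A3 x r (hr01.trans hr).le).trans ?_
    nlinarith [mul_nonneg P1 hV, mul_nonneg P2 hV]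

end JJ
end Bog

set_option linter.unusedSectionVars false

namespace Bog
section K
variable {n : ℕ}

lemma avg_eq (g : E n → ℝ) (x : E n) (r : ℝ) :
    ⨍ y in ball x r, g y = (V n r)⁻¹ * ∫ y in ball x r, g y := by
  rw [setAverage_eq, vol_ball, smul_eq_mul]

lemma avg_le_iff (g : E n → ℝ) (x : E n) {r : ℝ} (hr : 0 < r) (N : ℝ) :
    ⨍ y in ball x r, g y ≤ N ↔ ∫ y in ball x r, g y ≤ N * V n r := by
  rw [avg_eq, inv_mul_le_iff₀ (V_pos hr), mul_comm]

lemma avg_le_const {g : E n → ℝ} {M : ℝ} (hM : ∀ x, |g x| ≤ M) (x : E n) {r : ℝ} (hr : 0 < r) :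
    |⨍ y in ball x r, g y| ≤ M := by
  rw [avg_eq, abs_mul, abs_of_pos (inv_pos.2 (V_pos hr)), inv_mul_le_iff₀ (V_pos hr), mul_comm]
  have := norm_setIntegral_le_of_norm_le_const (μ := volume) (s := ball x r) (f := g) (C := M)
    measure_ball_lt_top (fun y _ => hM y)
  rwa [vol_ball] at this

lemma bmo_nonneg (g : E n → ℝ) : 0 ≤ bmoNorm n g := by
  unfold bmoNorm
  apply add_nonneg
  · apply Real.iSup_nonneg
    intro p
    rw [avg_eq]
    exact mul_nonneg (inv_nonneg.2 (V_nonneg _)) (integral_nonneg fun _ => abs_nonneg _)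
  · apply Real.iSup_nonneg
    intro p
    rw [avg_eq]
    exact mul_nonneg (inv_nonneg.2 (V_nonneg _)) (integral_nonneg fun _ => abs_nonneg _)

lemma BM_of_bmo {f : E n → ℝ} {M : ℝ} (hM : ∀ x, |f x| ≤ M) {N : ℝ} (hN : bmoNorm n f < N) :
    BM f N := by
  have hM0 : 0 ≤ M := (abs_nonneg _).trans (hM 0)
  have i1 : 0 ≤ ⨆ p : {p : EuclideanSpace ℝ (Fin n) × ℝ // 0 < p.2 ∧ p.2 ≤ 1},
      ⨍ y in Metric.ball p.1.1 p.1.2, |f y - ⨍ z in Metric.ball p.1.1 p.1.2, f z| := by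
    apply Real.iSup_nonneg
    intro p
    rw [avg_eq]
    exact mul_nonneg (inv_nonneg.2 (V_nonneg _)) (integral_nonneg fun _ => abs_nonneg _)
  have i2 : 0 ≤ ⨆ p : {p : EuclideanSpace ℝ (Fin n) × ℝ // 1 < p.2},
      ⨍ y in Metric.ball p.1.1 p.1.2, |f y| := by
    apply Real.iSup_nonneg
    intro p
    rw [avg_eq]
    exact mul_nonneg (inv_nonneg.2 (V_nonneg _)) (integral_nonneg fun _ => abs_nonneg _)
  refine ⟨fun x r hr hr1 => ?_, fun x r hr => ?_, (bmo_nonneg f).trans_lt hN⟩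
  · rw [← avg_le_iff _ _ hr]
    have hb : BddAbove (range fun p : {p : EuclideanSpace ℝ (Fin n) × ℝ // 0 < p.2 ∧ p.2 ≤ 1} =>
      ⨍ y in Metric.ball p.1.1 p.1.2, |f y - ⨍ z in Metric.ball p.1.1 p.1.2, f z|) := by
      refine ⟨M + M, ?_⟩
      rintro _ ⟨p, rfl⟩
      refine (le_abs_self _).trans (avg_le_const (fun y => ?_) _ p.2.1)
      rw [abs_abs]
      exact (abs_sub _ _).trans (add_le_add (hM y) (avg_le_const hM _ p.2.1))
    have := le_ciSup hb ⟨(x, r), hr, hr1⟩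
    unfold bmoNorm at hN
    refine this.trans ?_
    linarith
  · have hr0 : 0 < r := by linarith
    rw [← avg_le_iff _ _ hr0]
    have hb : BddAbove (range fun p : {p : EuclideanSpace ℝ (Fin n) × ℝ // 1 < p.2} =>
      ⨍ y in Metric.ball p.1.1 p.1.2, |f y|) := by
      refine ⟨M, ?_⟩
      rintro _ ⟨p, rfl⟩
      refine (le_abs_self _).trans (avg_le_const (fun y => ?_) _ (zero_lt_one.trans p.2))
      rw [abs_abs]
      exact hM y
    have := le_ciSup hb ⟨(x, r), hr⟩
    unfold bmoNorm at hN
    refine this.trans ?_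
    linarith

lemma bmo_of_BM {f : E n → ℝ} {N : ℝ} (h : BM f N) : bmoNorm n f ≤ 2 * N := by
  unfold bmoNorm
  rw [two_mul]
  apply add_le_add
  · have : Nonempty {p : EuclideanSpace ℝ (Fin n) × ℝ // 0 < p.2 ∧ p.2 ≤ 1} :=
      ⟨⟨(0, 1), by norm_num⟩⟩
    apply ciSup_le
    intro p
    exact (avg_le_iff _ _ p.2.1 _).2 (h.small _ _ p.2.1 p.2.2)
  · have : Nonempty {p : EuclideanSpace ℝ (Fin n) × ℝ // 1 < p.2} :=
      ⟨⟨(0, 2), by norm_num⟩⟩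
    apply ciSup_le
    intro p
    exact (avg_le_iff _ _ (zero_lt_one.trans p.2) _).2 (h.large _ _ p.2)

lemma bmo_le {f g : E n → ℝ} {M C : ℝ} (hM : ∀ x, |f x| ≤ M)
    (h : ∀ N, BM f N → BM g (C * N)) : bmoNorm n g ≤ 2 * C * bmoNorm n f := by
  have key : ∀ N, bmoNorm n f < N → bmoNorm n g ≤ 2 * C * N := by
    intro N hN
    have := bmo_of_BM (h N (BM_of_bmo hM hN))
    linarith
  have t : Tendsto (fun N : ℝ => 2 * C * N) (𝓝[>] (bmoNorm n f)) (𝓝 (2 * C * bmoNorm n f)) :=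
    ((continuous_const.mul continuous_id).tendsto _).mono_left nhdsWithin_le_nhds
  exact ge_of_tendsto t (eventually_mem_nhdsWithin.mono fun N hN => key N hN)

end K
end Bog

set_option linter.unusedSectionVars false

namespace Bog
section L
variable {n : ℕ}

lemma zero_off {Ω B : Set (E n)} (hBo : IsOpen B) (hBne : B.Nonempty)
    (hstar : ∀ x ∈ Ω, ∀ y ∈ B, segment ℝ x y ⊆ Ω) {f : E n → ℝ} (hf : Continuous f)
    (hs : tsupport f ⊆ closure Ω) {x : E n} (hx : x ∉ Ω) : f x = 0 := by
  obtain ⟨c, hc⟩ := hBne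
  have key : ∀ t : ℝ, 1 < t → f (c + t • (x - c)) = 0 := by
    intro t ht
    apply image_eq_zero_of_notMem_tsupport
    intro hmem
    have hcl := hs hmem
    have ht0 : (0:ℝ) < t := by linarith
    have ht1 : t - 1 ≠ 0 := by linarith
    set g : E n → E n := fun z => (t - 1)⁻¹ • (t • x - z) with hg
    have hgc : Continuous g := by fun_prop
    have hgx : g (c + t • (x - c)) = c := by
      have : t • x - (c + t • (x - c)) = (t - 1) • c := by module
      rw [hg]; beta_reduce
      rw [this, smul_smul, inv_mul_cancel₀ ht1, one_smul]
    have hnb : g ⁻¹' B ∈ 𝓝 (c + t • (x - c)) :=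
      hgc.continuousAt.preimage_mem_nhds (by rw [hgx]; exact hBo.mem_nhds hc)
    obtain ⟨z, hz1, hz2⟩ := mem_closure_iff_nhds.1 hcl _ hnb
    apply hx
    apply hstar z hz2 (g z) hz1
    refine ⟨t⁻¹, 1 - t⁻¹, by positivity, ?_, by ring, ?_⟩
    · rw [sub_nonneg]; exact inv_le_one_of_one_le₀ ht.le
    · rw [hg]; beta_reduce
      rw [smul_smul]
      have e : (1 - t⁻¹) * (t - 1)⁻¹ = t⁻¹ := by field_simp
      rw [e, ← smul_add, add_sub_cancel, smul_smul, inv_mul_cancel₀ ht0.ne', one_smul]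
  have h1 : Continuous (fun t : ℝ => f (c + t • (x - c))) := by fun_prop
  have h2 : Tendsto (fun t : ℝ => f (c + t • (x - c))) (𝓝[>] 1) (𝓝 (f (c + (1:ℝ) • (x - c)))) :=
    (h1.tendsto 1).mono_left nhdsWithin_le_nhds
  have h3 : Tendsto (fun t : ℝ => f (c + t • (x - c))) (𝓝[>] 1) (𝓝 0) := by
    apply tendsto_const_nhds.congr'
    filter_upwards [self_mem_nhdsWithin] with t ht
    exact (key t ht).symm
  have := tendsto_nhds_unique h2 h3
  simpa using this

lemma Ker.norm {F : Type*} [NormedAddCommGroup F] [NormedSpace ℝ F] {Ψ : E n → E n → F} {A R : ℝ}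
    (h : Ker Ψ A R) : Ker (fun y w => ‖Ψ y w‖) A R where
  cont := h.cont.norm
  bound y w := by rw [norm_norm]; exact h.bound y w
  supp y w hw := by rw [h.supp y w hw, norm_zero]
  lip y y' w w' := (abs_norm_sub_norm_le _ _).trans (h.lip y y' w w')
  posA := h.posA
  posR := h.posR

lemma q_clm {F G : Type*} [NormedAddCommGroup F] [NormedSpace ℝ F] [NormedAddCommGroup G]
    [NormedSpace ℝ G] [CompleteSpace F] [CompleteSpace G] {Ψ : E n → E n → F} {A R : ℝ}
    (h : Ker Ψ A R) {f : E n → ℝ} (hf : Continuous f) (L : F →L[ℝ] G) (s : ℝ) (x : E n) :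
    q (fun y w => L (Ψ y w)) f s x = L (q Ψ f s x) := by
  unfold q
  rw [← L.integral_comp_comm (q_integrable h hf s x)]
  simp

lemma fubini {Φ : E n → E n → E n} {A R : ℝ} (hΦ : Ker Φ A R) {f : E n → ℝ} {M : ℝ}
    (hM : ∀ x, |f x| ≤ M) (hf : Continuous f) (x : E n) :
    ∫ y, ∫ s in Ioo (0:ℝ) 1, (s ^ n)⁻¹ • f y • Φ y (s⁻¹ • (x - y)) =
      ∫ s in Ioo (0:ℝ) 1, q Φ f s x := by
  set F : ℝ × E n → E n := fun p => (p.1 ^ n)⁻¹ • f p.2 • Φ p.2 (p.1⁻¹ • (x - p.2)) with hF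
  have hm : Measurable F := by
    have m1 : Measurable (fun p : ℝ × E n => (p.1 ^ n)⁻¹) := by fun_prop
    have m2 : Measurable (fun p : ℝ × E n => f p.2) := hf.measurable.comp measurable_snd
    have m3 : Measurable (fun p : ℝ × E n => Φ p.2 (p.1⁻¹ • (x - p.2))) :=
      hΦ.cont.measurable.comp (measurable_snd.prodMk (by fun_prop))
    exact m1.smul (m2.smul m3)
  have hi : Integrable F ((volume.restrict (Ioo (0:ℝ) 1)).prod volume) := by
    rw [integrable_prod_iff hm.aestronglyMeasurable]
    constructor
    · refine (ae_restrict_iff' measurableSet_Ioo).2 (Eventually.of_forall fun s hs => ?_)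
      have h1 := q_integrable hΦ hf s x
      have h2 : Integrable (fun y => f y • Φ y (s⁻¹ • (x - y))) := by
        have h3 := (h1.comp_smul (inv_ne_zero hs.1.ne')).comp_sub_left x
        refine h3.congr (Eventually.of_forall fun y => ?_)
        simp [smul_smul, hs.1.ne']
      exact h2.smul ((s ^ n)⁻¹)
    · refine Integrable.mono' (g := fun _ => M * A * V n R) (integrable_const _)
        hm.aestronglyMeasurable.norm.integral_prod_right' ?_
      refine (ae_restrict_iff' measurableSet_Ioo).2 (Eventually.of_forall fun s hs => ?_)
      have e : ∫ y, ‖F (s, y)‖ = q (fun y w => ‖Φ y w‖) (fun y => |f y|) s x := by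
        rw [q_eq _ _ hs.1, ← integral_smul]
        congr 1
        funext y
        simp only [hF, norm_smul, norm_inv, norm_pow, Real.norm_eq_abs, smul_eq_mul,
          abs_of_pos hs.1]
      rw [e]
      exact q_norm_le hΦ.norm (fun x => by rw [abs_abs]; exact hM x) s x
  have hsw := integral_integral_swap (f := fun s y => F (s, y)) hi
  rw [hF] at hsw
  beta_reduce at hsw
  rw [← hsw]
  refine setIntegral_congr_fun measurableSet_Ioo fun s hs => ?_
  beta_reduce
  rw [q_eq _ _ hs.1, ← integral_smul]

end L
end Bog

set_option linter.unusedSectionVars false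

namespace Bog
section M
variable {n : ℕ}

/-- the truncated scalar kernel -/
noncomputable def K0 (θ ω : E n → ℝ) (p : E n × E n) : ℝ := θ p.2 * ω (p.1 + p.2)

/-- the truncated vector kernel -/
noncomputable def KV (θ ω : E n → ℝ) (p : E n × E n) : E n := K0 θ ω p • p.2

lemma K0_contDiff {θ ω : E n → ℝ} (hθ : ContDiff ℝ (⊤ : ℕ∞) θ) (hω : ContDiff ℝ (⊤ : ℕ∞) ω) :
    ContDiff ℝ (⊤ : ℕ∞) (K0 θ ω) := by
  unfold K0
  exact (hθ.comp contDiff_snd).mul (hω.comp (contDiff_fst.add contDiff_snd))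

lemma KV_contDiff {θ ω : E n → ℝ} (hθ : ContDiff ℝ (⊤ : ℕ∞) θ) (hω : ContDiff ℝ (⊤ : ℕ∞) ω) :
    ContDiff ℝ (⊤ : ℕ∞) (KV θ ω) := by
  unfold KV
  exact (K0_contDiff hθ hω).smul contDiff_snd

lemma K0_compact {θ ω : E n → ℝ} (hθ : HasCompactSupport θ) (hω : HasCompactSupport ω) :
    HasCompactSupport (K0 θ ω) := by
  have hc : IsCompact (Set.image (fun p : E n × E n => (p.1 - p.2, p.2)) (tsupport ω ×ˢ tsupport θ)) :=
    (hω.isCompact.prod hθ.isCompact).image (by fun_prop)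
  refine HasCompactSupport.intro hc ?_
  rintro ⟨y, w⟩ hp
  by_contra hne
  apply hp
  unfold K0 at hne
  refine ⟨(y + w, w), ⟨subset_tsupport _ (right_ne_zero_of_mul hne),
    subset_tsupport _ (left_ne_zero_of_mul hne)⟩, by simp⟩

lemma KV_compact {θ ω : E n → ℝ} (hθ : HasCompactSupport θ) (hω : HasCompactSupport ω) :
    HasCompactSupport (KV θ ω) := (K0_compact hθ hω).smul_right

/-- component evaluation -/
noncomputable def ev (v : E n) (i : Fin n) : (E n →L[ℝ] E n) →L[ℝ] ℝ :=
  (EuclideanSpace.proj i : E n →L[ℝ] ℝ).comp (ContinuousLinearMap.apply ℝ (E n) v)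

lemma ev_apply (v : E n) (i : Fin n) (T : E n →L[ℝ] E n) : ev v i T = (T v) i := rfl

lemma hi_contDiff {θ : E n → ℝ} (hθ : ContDiff ℝ (⊤ : ℕ∞) θ) (i : Fin n) :
    ContDiff ℝ (⊤ : ℕ∞) (fun w : E n => θ w * w i) :=
  hθ.mul (EuclideanSpace.proj i : E n →L[ℝ] ℝ).contDiff

lemma ev_wd {θ ω : E n → ℝ} (hθ : ContDiff ℝ (⊤ : ℕ∞) θ) (hω : ContDiff ℝ (⊤ : ℕ∞) ω)
    (v : E n) (i : Fin n) (y w : E n) :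
    ev v i (wd (KV θ ω) (y, w)) = PsiK (fun w => θ w * w i) ω v y w := by
  have h1 := wd_hasFDerivAt (KV_contDiff hθ hω) y w
  have h2 := (EuclideanSpace.proj i : E n →L[ℝ] ℝ).hasFDerivAt.comp w h1
  have h3 : HasFDerivAt (fun w : E n => θ w * w i) (fderiv ℝ (fun w : E n => θ w * w i) w) w :=
    ((hi_contDiff hθ i).differentiable (by simp) w).hasFDerivAt
  have h4 : HasFDerivAt (fun w => ω (y + w)) (fderiv ℝ ω (y + w)) w := by
    have := (hω.differentiable (by simp) (y + w)).hasFDerivAt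
    exact (hasFDerivAt_comp_add_left y).2 this
  have e : (fun w : E n => (θ w * w i) * ω (y + w)) =
      ((EuclideanSpace.proj i : E n →L[ℝ] ℝ) ∘ fun w => KV θ ω (y, w)) := by
    funext w
    simp [KV, K0]
    ring
  have h5 := h3.fun_mul h4
  rw [e] at h5
  have e' := h2.unique h5
  have := congrArg (fun T : E n →L[ℝ] ℝ => T v) e'
  simp only [ContinuousLinearMap.comp_apply, ContinuousLinearMap.add_apply,
    ContinuousLinearMap.smul_apply, smul_eq_mul] at this
  rw [ev_apply]
  unfold PsiK
  rw [show (wd (KV θ ω) (y, w)) v i = (EuclideanSpace.proj i : E n →L[ℝ] ℝ) ((wd (KV θ ω) (y, w)) v)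
    from rfl, this]
  ring

lemma ker_Psi {θ ω : E n → ℝ} (hθ : ContDiff ℝ (⊤ : ℕ∞) θ) (hω : ContDiff ℝ (⊤ : ℕ∞) ω)
    (hθc : HasCompactSupport θ) (hωc : HasCompactSupport ω) (v : E n) (i : Fin n) :
    (∃ A R, Ker (PsiK (fun w => θ w * w i) ω v) A R) ∧
      ∀ y, ∫ w, PsiK (fun w => θ w * w i) ω v y w = 0 := by
  have hK := KV_contDiff hθ hω
  have hKc := KV_compact hθc hωc
  have e : (fun y w => ev v i (wd (KV θ ω) (y, w))) = PsiK (fun w => θ w * w i) ω v := by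
    funext y w
    exact ev_wd hθ hω v i y w
  constructor
  · rw [← e]
    exact ker_of_smooth (Θ := fun p => ev v i (wd (KV θ ω) p))
      (((ev v i).contDiff.comp (wd_contDiff hK)).of_le (by norm_cast))
      ((wd_compact hKc).comp_left (map_zero _))
  · intro y
    obtain ⟨A, R, hD⟩ := ker_of_smooth ((wd_contDiff hK).of_le (by norm_cast)) (wd_compact hKc)
    have hi : Integrable (fun w => wd (KV θ ω) (y, w)) :=
      integrable_of_ball (R := R) (hD.cont_comp continuous_const continuous_id)
        (fun w hw => hD.supp y w hw)
    rw [← e]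
    beta_reduce
    rw [(ev v i).integral_comp_comm hi, wd_mean hK hKc y, map_zero]

lemma div_ker {θ ω f : E n → ℝ} (hω : ContDiff ℝ (⊤ : ℕ∞) ω)
    (hfs : ∀ y w, f y ≠ 0 → y + w ∈ tsupport ω → θ =ᶠ[𝓝 w] 1) (y w : E n) :
    f y * ∑ i, PsiK (fun w => θ w * w i) ω (EuclideanSpace.single i 1) y w =
      f y * (n * ω (y + w) + fderiv ℝ ω (y + w) w) := by
  by_cases hy : f y = 0
  · simp [hy]
  congr 1
  by_cases hyw : y + w ∈ tsupport ω
  · have h1 := hfs y w hy hyw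
    have h2 : ∀ i, PsiK (fun w => θ w * w i) ω (EuclideanSpace.single i 1) y w =
        ω (y + w) + fderiv ℝ ω (y + w) (w i • EuclideanSpace.single i 1) := by
      intro i
      unfold PsiK
      have e : (fun w : E n => θ w * w i) =ᶠ[𝓝 w] (EuclideanSpace.proj i : E n →L[ℝ] ℝ) := by
        filter_upwards [h1] with z hz
        rw [hz]; simp
      rw [e.fderiv_eq, ContinuousLinearMap.fderiv, show (fun w : E n => θ w * w i) w = w i by
        beta_reduce; rw [h1.self_of_nhds]; simp]
      simp
    rw [Finset.sum_congr rfl fun i _ => h2 i, Finset.sum_add_distrib, ← map_sum]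
    congr 1
    · simp
    · congr 1
      have := (EuclideanSpace.basisFun (Fin n) ℝ).sum_repr w
      simpa using this
  · have h0 : ω (y + w) = 0 := image_eq_zero_of_notMem_tsupport hyw
    have h1 : fderiv ℝ ω (y + w) = 0 := by
      apply image_eq_zero_of_notMem_tsupport
      intro h
      exact hyw (tsupport_fderiv_subset ℝ h)
    unfold PsiK
    simp [h0, h1]

end M
end Bog

set_option linter.unusedSectionVars false

namespace Bog
section N
variable {n : ℕ}

lemma K0_mul {θ ω f : E n → ℝ}
    (hfs : ∀ y w, f y ≠ 0 → y + w ∈ tsupport ω → θ =ᶠ[𝓝 w] 1) (y w : E n) :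
    f y * K0 θ ω (y, w) = f y * ω (y + w) := by
  by_cases hy : f y = 0
  · simp [hy]
  by_cases hyw : y + w ∈ tsupport ω
  · have := (hfs y w hy hyw).self_of_nhds
    simp [K0, this]
  · simp [K0, image_eq_zero_of_notMem_tsupport hyw]

lemma om_deriv {ω : E n → ℝ} (hω : ContDiff ℝ (⊤ : ℕ∞) ω) (x y : E n) {s : ℝ} (hs : 0 < s) :
    HasDerivAt (fun s : ℝ => (s ^ n)⁻¹ * ω (y + s⁻¹ • (x - y)))
      (-(s⁻¹ * ((s ^ n)⁻¹ * (n * ω (y + s⁻¹ • (x - y)) +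
        fderiv ℝ ω (y + s⁻¹ • (x - y)) (s⁻¹ • (x - y)))))) s := by
  have h1 : HasDerivAt (fun s : ℝ => (s ^ n)⁻¹) (-(n * s ^ (n - 1)) / (s ^ n) ^ 2) s :=
    (hasDerivAt_pow n s).fun_inv (by positivity)
  have h2 : HasDerivAt (fun s : ℝ => y + s⁻¹ • (x - y)) ((-(s ^ 2)⁻¹) • (x - y)) s :=
    ((hasDerivAt_inv hs.ne').smul_const (x - y)).const_add y
  have h3 : HasDerivAt (fun s : ℝ => ω (y + s⁻¹ • (x - y)))
      (fderiv ℝ ω (y + s⁻¹ • (x - y)) ((-(s ^ 2)⁻¹) • (x - y))) s :=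
    ((hω.differentiable (by simp) (y + s⁻¹ • (x - y))).hasFDerivAt).comp_hasDerivAt s h2
  refine (h1.fun_mul h3).congr_deriv ?_
  rw [map_smul, map_smul, smul_eq_mul, smul_eq_mul]
  have e : (-(n * s ^ (n - 1)) / (s ^ n) ^ 2 : ℝ) = - (s⁻¹ * ((s ^ n)⁻¹ * n)) := by
    rcases Nat.eq_zero_or_pos n with h | h
    · subst h; simp
    · have : s ^ n = s ^ (n - 1) * s := by rw [← pow_succ]; congr 1; omega
      rw [this]
      field_simp
  rw [e]
  have hs' := hs.ne'
  field_simp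
  ring

theorem div_eq {θ ω f : E n → ℝ} (hθ : ContDiff ℝ (⊤ : ℕ∞) θ) (hω : ContDiff ℝ (⊤ : ℕ∞) ω)
    (hθc : HasCompactSupport θ) (hωc : HasCompactSupport ω) (hω1 : ∫ x, ω x = 1)
    (hfs : ∀ y w, f y ≠ 0 → y + w ∈ tsupport ω → θ =ᶠ[𝓝 w] 1)
    {M : ℝ} (hM : ∀ x, |f x| ≤ M) (hf : Continuous f) (hfi : Integrable f) (hf0 : ∫ x, f x = 0)
    {S : E n → E n → ℝ}
    (hSe : ∀ y w, S y w = ∑ i, PsiK (fun w => θ w * w i) ω (EuclideanSpace.single i 1) y w)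
    {A R : ℝ} (hS : Ker S A R) (x : E n)
    (hIntg : IntegrableOn (fun s : ℝ => s⁻¹ • q S f s x) (Ioo 0 1)) :
    ∫ s in Ioo (0:ℝ) 1, s⁻¹ • q S f s x = f x := by
  obtain ⟨A0, R0, hK⟩ := ker_of_smooth ((K0_contDiff hθ hω).of_le (by norm_cast)) (K0_compact hθc hωc)
  set J : ℝ → ℝ := fun s => q (fun y w => K0 θ ω (y, w)) f s x with hJ
  have hJc : Continuous J := (q_cont hK hM hf).comp (continuous_id.prodMk continuous_const)
  have hSm : ∀ y w, f y * S y w = f y * (n * ω (y + w) + fderiv ℝ ω (y + w) w) := fun y w => by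
    rw [hSe]; exact div_ker hω hfs y w
  have hJe : ∀ s : ℝ, 0 < s → J s = ∫ y, f y * ((s ^ n)⁻¹ * ω (y + s⁻¹ • (x - y))) := by
    intro s hs
    rw [hJ]; beta_reduce
    rw [q_eq _ _ hs, ← integral_smul]
    congr 1
    funext y
    rw [smul_eq_mul, smul_eq_mul, K0_mul hfs]
    ring
  have hJ0 : J 0 = f x := by
    rw [hJ]; beta_reduce
    unfold q
    simp only [zero_smul, sub_zero, smul_eq_mul, K0_mul hfs]
    rw [integral_const_mul, integral_add_left_eq_self ω x, hω1, mul_one]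
  have hJ1 : J 1 = 0 := by
    rw [hJe 1 one_pos]
    simp only [one_pow, inv_one, one_smul, one_mul, add_sub_cancel]
    rw [integral_mul_const, hf0, zero_mul]
  have hderiv : ∀ s ∈ Ioo (0:ℝ) 1, HasDerivAt J (-(s⁻¹ • q S f s x)) s := by
    intro s hs
    have hs0 := hs.1
    have hev : J =ᶠ[𝓝 s] fun s => ∫ y, f y * ((s ^ n)⁻¹ * ω (y + s⁻¹ • (x - y))) := by
      filter_upwards [Ioi_mem_nhds hs0] with t ht
      exact hJe t ht
    refine HasDerivAt.congr_of_eventuallyEq ?_ hev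
    have mF : ∀ t : ℝ, AEStronglyMeasurable
        (fun y => f y * ((t ^ n)⁻¹ * ω (y + t⁻¹ • (x - y)))) volume := by
      intro t
      apply Continuous.aestronglyMeasurable
      have := hω.continuous
      fun_prop
    have main := hasDerivAt_integral_of_dominated_loc_of_deriv_le (μ := (volume : Measure (E n)))
      (F := fun t y => f y * ((t ^ n)⁻¹ * ω (y + t⁻¹ • (x - y))))
      (F' := fun t y => f y * (-(t⁻¹ * ((t ^ n)⁻¹ * (n * ω (y + t⁻¹ • (x - y)) +
        fderiv ℝ ω (y + t⁻¹ • (x - y)) (t⁻¹ • (x - y)))))))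
      (x₀ := s) (s := ball s (s / 2)) (bound := fun y => (s / 2)⁻¹ * (((s / 2) ^ n)⁻¹ * A) * |f y|)
      (ball_mem_nhds s (half_pos hs0)) (Eventually.of_forall mF) ?_ ?_ ?_ ?_ ?_
    · refine main.2.congr_deriv ?_
      rw [q_eq _ _ hs0, ← integral_smul, ← integral_smul, ← integral_neg]
      congr 1
      funext y
      rw [smul_eq_mul, smul_eq_mul, smul_eq_mul, hSm]
      ring
    · obtain ⟨Mω, hMω⟩ := hωc.exists_bound_of_continuous hω.continuous
      refine Integrable.mono' (g := fun y => ((s ^ n)⁻¹ * Mω) * |f y|) (hfi.abs.const_mul _) (mF s) ?_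
      refine Eventually.of_forall fun y => ?_
      rw [norm_mul, norm_mul, mul_comm, Real.norm_of_nonneg (by positivity : 0 ≤ (s ^ n)⁻¹),
        Real.norm_eq_abs]
      have hMω0 : 0 ≤ Mω := (norm_nonneg _).trans (hMω 0)
      gcongr
      · exact hMω _
      · exact (Real.norm_eq_abs _).le
    · apply Continuous.aestronglyMeasurable
      have h1 := hω.continuous
      have h2 : Continuous (fderiv ℝ ω) := hω.continuous_fderiv (by simp)
      fun_prop
    · refine Eventually.of_forall fun y t ht => ?_
      have ht' : s / 2 < t := by
        rw [mem_ball, Real.dist_eq, abs_lt] at ht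
        linarith [ht.1]
      have ht0 : 0 < t := by linarith
      have e : f y * (-(t⁻¹ * ((t ^ n)⁻¹ * (n * ω (y + t⁻¹ • (x - y)) +
        fderiv ℝ ω (y + t⁻¹ • (x - y)) (t⁻¹ • (x - y)))))) =
          - (t⁻¹ * ((t ^ n)⁻¹ * S y (t⁻¹ • (x - y))) * f y) := by
        have := hSm y (t⁻¹ • (x - y))
        linear_combination (t⁻¹ * (t ^ n)⁻¹) * this
      beta_reduce
      rw [e, norm_neg, norm_mul, norm_mul, norm_mul, Real.norm_of_nonneg (by positivity : 0 ≤ t⁻¹),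
        Real.norm_of_nonneg (by positivity : 0 ≤ (t ^ n)⁻¹), Real.norm_eq_abs (f y)]
      have hA := hS.posA
      have hb := hS.bound y (t⁻¹ • (x - y))
      gcongr
    · exact hfi.abs.const_mul _
    · refine Eventually.of_forall fun y t ht => ?_
      have ht0 : 0 < t := by
        rw [mem_ball, Real.dist_eq, abs_lt] at ht
        linarith [ht.1]
      exact (om_deriv hω x y ht0).const_mul (f y)
  have hii : IntervalIntegrable (fun s => -(s⁻¹ • q S f s x)) volume 0 1 := by
    rw [intervalIntegrable_iff_integrableOn_Ioo_of_le zero_le_one]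
    exact hIntg.neg
  have := intervalIntegral.integral_eq_sub_of_hasDerivAt_of_tendsto zero_lt_one hderiv hii
    ((hJc.tendsto 0).mono_left nhdsWithin_le_nhds) ((hJc.tendsto 1).mono_left nhdsWithin_le_nhds)
  rw [hJ0, hJ1, intervalIntegral.integral_of_le zero_le_one, integral_Ioc_eq_integral_Ioo,
    integral_neg] at this
  linarith

end N
end Bog

set_option linter.unusedSectionVars false

namespace Bog
section O
variable {n : ℕ}

lemma hoelder_uc {f : E n → ℝ} {β K : ℝ} (hβ : 0 < β) (hK0 : 0 ≤ K)
    (hK : ∀ x y, |f x - f y| ≤ K * ‖x - y‖ ^ β) : UniformContinuous f := by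
  rw [Metric.uniformContinuous_iff]
  intro ε hε
  have hp : 0 < ε / (K + 1) := by positivity
  refine ⟨(ε / (K + 1)) ^ (1 / β), by positivity, ?_⟩
  intro a b hab
  rw [dist_eq_norm] at hab
  rw [Real.dist_eq]
  have h1 : ‖a - b‖ ^ β < ε / (K + 1) := by
    have := Real.rpow_lt_rpow (norm_nonneg _) hab hβ
    rwa [← Real.rpow_mul hp.le, one_div, inv_mul_cancel₀ hβ.ne', Real.rpow_one] at this
  calc |f a - f b| ≤ K * ‖a - b‖ ^ β := hK a b
    _ ≤ (K + 1) * ‖a - b‖ ^ β := by gcongr; linarith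
    _ < (K + 1) * (ε / (K + 1)) := by gcongr
    _ = ε := by field_simp

end O
end Bog

/-- For `f` bounded, Hölder continuous of some exponent `β ∈ (0,1)`,
supported in the closure of the star-shaped domain `Ω` and with zero integral, the
Bogovskiĭ field `u` is `C¹`, vanishes outside the closure of `Ω`, solves `div u = f`
on `Ω`, and its first derivatives are bounded in the `bmo` norm by the `bmo` norm of `f`. -/
theorem bogovskii_bmo_estimate
    (n : ℕ) (hn : 2 ≤ n)
    (Ω B : Set (EuclideanSpace ℝ (Fin n)))
    (hΩo : IsOpen Ω) (hΩb : Bornology.IsBounded Ω)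
    (hBball : ∃ c r, 0 < r ∧ B = Metric.ball c r)
    (hBΩ : B ⊆ Ω)
    (hstar : ∀ x ∈ Ω, ∀ y ∈ B, segment ℝ x y ⊆ Ω)
    (ω : EuclideanSpace ℝ (Fin n) → ℝ)
    (hω : ContDiff ℝ (⊤ : ℕ∞) ω) (hωc : HasCompactSupport ω)
    (hωsupp : tsupport ω ⊆ B) (hωint : ∫ x, ω x = 1)
    (G : EuclideanSpace ℝ (Fin n) → EuclideanSpace ℝ (Fin n) → EuclideanSpace ℝ (Fin n))
    (hG : ∀ x y, x ≠ y → G x y =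
      ∫ s in Set.Ioo (0:ℝ) 1, ((s ^ n)⁻¹ * ω (y + s⁻¹ • (x - y))) • (s⁻¹ • (x - y)))
    (hGdiag : ∀ x, G x x = 0) :
    ∃ C : ℝ,
      ∀ f : EuclideanSpace ℝ (Fin n) → ℝ,
        (∃ M : ℝ, ∀ x, |f x| ≤ M) →
        (∃ β : ℝ, 0 < β ∧ β < 1 ∧ ∃ K : ℝ, ∀ x y, |f x - f y| ≤ K * ‖x - y‖ ^ β) →
        tsupport f ⊆ closure Ω →
        (∫ x, f x) = 0 →
        ∀ u : EuclideanSpace ℝ (Fin n) → EuclideanSpace ℝ (Fin n),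
          (∀ x, u x = ∫ y in Ω, f y • G x y) →
          ContDiff ℝ 1 u ∧
          (∀ x, x ∉ closure Ω → u x = 0) ∧
          (∀ x ∈ Ω, ∑ i, fderiv ℝ u x (EuclideanSpace.single i 1) i = f x) ∧
          (∀ i j : Fin n,
            bmoNorm n (fun x => fderiv ℝ (fun x' => u x' i) x (EuclideanSpace.single j 1))
              ≤ C * bmoNorm n f) := by
  have hn0 : 0 < n := by omega
  obtain ⟨c, rB, hrB, hBe⟩ := hBball
  have hBo : IsOpen B := hBe ▸ isOpen_ball
  have hBne : B.Nonempty := ⟨c, by rw [hBe]; exact mem_ball_self hrB⟩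
  obtain ⟨R1, hR1⟩ := hΩb.subset_ball (0 : EuclideanSpace ℝ (Fin n))
  have hR1p : 0 < R1 := by
    have := hR1 (hBΩ hBne.choose_spec)
    rw [mem_ball] at this
    exact dist_nonneg.trans_lt this
  let bθ : ContDiffBump (0 : EuclideanSpace ℝ (Fin n)) := ⟨2 * R1, 2 * R1 + 1, by positivity, by linarith⟩
  obtain ⟨θ, hθ, hθc, hθ1⟩ : ∃ θ : EuclideanSpace ℝ (Fin n) → ℝ, ContDiff ℝ (⊤ : ℕ∞) θ ∧
      HasCompactSupport θ ∧ ∀ w, ‖w‖ < 2 * R1 → θ =ᶠ[𝓝 w] 1 :=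
    ⟨bθ, bθ.contDiff, bθ.hasCompactSupport, fun w hw =>
      bθ.eventuallyEq_one_of_mem_ball (by rw [mem_ball_zero_iff]; exact hw)⟩
  -- the kernels
  have hKV := Bog.KV_contDiff hθ hω
  have hKVc := Bog.KV_compact hθc hωc
  obtain ⟨AΦ, RΦ, hΦ⟩ := Bog.ker_of_smooth (hKV.of_le (by norm_cast)) hKVc
  obtain ⟨AD, RD, hD⟩ := Bog.ker_of_smooth ((Bog.wd_contDiff hKV).of_le (by norm_cast))
    (Bog.wd_compact hKVc)
  have hcz : ∀ i j : Fin n, ∃ C : ℝ, 0 < C ∧ ∀ (f : EuclideanSpace ℝ (Fin n) → ℝ) (M K β N : ℝ),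
      (∀ x, |f x| ≤ M) → UniformContinuous f →
      0 < β → β < 1 → 0 ≤ K → (∀ x y, |f x - f y| ≤ K * ‖x - y‖ ^ β) → Bog.BM f N →
      Bog.BM (fun x => ∫ s in Ioo (0:ℝ) 1, s⁻¹ • Bog.q
        (Bog.PsiK (fun w => θ w * w i) ω (EuclideanSpace.single j 1)) f s x) (C * N) := by
    intro i j
    obtain ⟨⟨A, R, hk⟩, h0⟩ := Bog.ker_Psi hθ hω hθc hωc (EuclideanSpace.single j 1) i
    obtain ⟨C2, hC2, hL2⟩ := Bog.l2_bound (Bog.hi_contDiff hθ i) hθc.mul_right hω hωc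
      (by simp) hk
    exact Bog.cz hn0 hk h0 hC2 hL2
  choose C hC0 hC using hcz
  refine ⟨∑ i, ∑ j, 2 * C i j, ?_⟩
  rintro f ⟨M, hM⟩ ⟨β, hβ, hβ1, K', hK'⟩ hsupp hf0 u hu
  obtain ⟨K, hK0, hK⟩ : ∃ K : ℝ, 0 ≤ K ∧ ∀ x y, |f x - f y| ≤ K * ‖x - y‖ ^ β :=
    ⟨max K' 0, le_max_right _ _, fun x y => (hK' x y).trans
      (mul_le_mul_of_nonneg_right (le_max_left _ _) (by positivity))⟩
  have huc := Bog.hoelder_uc hβ hK0 hK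
  have hf := huc.continuous
  have hoff : ∀ x, x ∉ Ω → f x = 0 := fun x hx => Bog.zero_off hBo hBne hstar hf hsupp hx
  have hfc : HasCompactSupport f := by
    apply HasCompactSupport.of_support_subset_isCompact hΩb.isCompact_closure
    exact (subset_tsupport f).trans hsupp
  have hfi : Integrable f := hf.integrable_of_hasCompactSupport hfc
  have hfs : ∀ y w, f y ≠ 0 → y + w ∈ tsupport ω → θ =ᶠ[𝓝 w] 1 := by
    intro y w hy hyw
    apply hθ1
    have h1 : y ∈ Ω := by by_contra h; exact hy (hoff y h)
    have h2 : y + w ∈ Ω := hBΩ (hωsupp hyw)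
    have h3 := hR1 h1
    have h4 := hR1 h2
    rw [mem_ball_zero_iff] at h3 h4
    calc ‖w‖ = ‖(y + w) - y‖ := by rw [add_sub_cancel_left]
      _ ≤ ‖y + w‖ + ‖y‖ := norm_sub_le _ _
      _ < 2 * R1 := by linarith
  -- the representation of the field
  have hrep : u = fun x => ∫ s in Ioo (0:ℝ) 1, Bog.q (fun y w => Bog.KV θ ω (y, w)) f s x := by
    funext x
    rw [hu x, ← Bog.fubini hΦ hM hf x, setIntegral_eq_integral_of_forall_compl_eq_zero
      (fun y hy => by rw [hoff y hy, zero_smul])]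
    apply integral_congr_ae
    have hne : ∀ᵐ y : EuclideanSpace ℝ (Fin n), y ≠ x := by
      have : Nonempty (Fin n) := ⟨⟨0, hn0⟩⟩
      have : Nontrivial (EuclideanSpace ℝ (Fin n)) := by infer_instance
      exact Measure.ae_ne volume x
    filter_upwards [hne] with y hy
    rw [hG x y hy.symm, ← integral_smul]
    congr 1
    funext s
    have := Bog.K0_mul hfs y (s⁻¹ • (x - y))
    simp only [Bog.KV]
    simp only [smul_smul]
    congr 1
    linear_combination -((s ^ n)⁻¹ * s⁻¹) * this
  obtain ⟨hI, hder, hcont⟩ := Bog.u_C1 hΦ hD (Bog.wd_hasFDerivAt hKV) (Bog.wd_mean hKV hKVc)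
    hM hf hβ hβ1 hK0 hK
  rw [← hrep] at hder
  have hfd : fderiv ℝ u = fun x => ∫ s in Ioo (0:ℝ) 1,
      s⁻¹ • Bog.q (fun y w => Bog.wd (Bog.KV θ ω) (y, w)) f s x := by
    funext x
    exact (hder x).fderiv
  have hLx : ∀ (L : (EuclideanSpace ℝ (Fin n) →L[ℝ] EuclideanSpace ℝ (Fin n)) →L[ℝ] ℝ) x,
      L (fderiv ℝ u x) = ∫ s in Ioo (0:ℝ) 1,
        s⁻¹ • Bog.q (fun y w => L (Bog.wd (Bog.KV θ ω) (y, w))) f s x := by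
    intro L x
    rw [hfd]
    beta_reduce
    rw [← L.integral_comp_comm (hI x)]
    congr 1
    funext s
    rw [map_smul, Bog.q_clm hD hf L s x]
  refine ⟨?_, ?_, ?_, ?_⟩
  · rw [contDiff_one_iff_fderiv]
    exact ⟨fun x => (hder x).differentiableAt, by rw [hfd]; exact hcont⟩
  · intro x hx
    have hxΩ : x ∉ Ω := fun h => hx (subset_closure h)
    rw [hrep]
    beta_reduce
    rw [setIntegral_congr_fun (g := fun _ => 0) measurableSet_Ioo, integral_zero]
    intro s hs
    beta_reduce
    unfold Bog.q
    rw [← integral_zero (EuclideanSpace ℝ (Fin n)) (EuclideanSpace ℝ (Fin n)) (μ := volume)]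
    congr 1
    funext w
    by_contra hne
    have h1 : f (x - s • w) ≠ 0 := left_ne_zero_of_smul hne
    have h2 : x - s • w ∈ Ω := by by_contra h; exact h1 (hoff _ h)
    have h3 : ω (x - s • w + w) ≠ 0 := by
      intro h
      apply hne
      simp [Bog.KV, Bog.K0, h]
    have h4 : x - s • w + w ∈ B := hωsupp (subset_tsupport _ h3)
    apply hxΩ
    apply hstar _ h2 _ h4
    refine ⟨1 - s, s, by linarith [hs.2], hs.1.le, by ring, ?_⟩
    module
  · intro x _
    set L : (EuclideanSpace ℝ (Fin n) →L[ℝ] EuclideanSpace ℝ (Fin n)) →L[ℝ] ℝ :=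
      ∑ i, Bog.ev (EuclideanSpace.single i 1) i with hL
    have hLa : ∀ T, L T = ∑ i, T (EuclideanSpace.single i 1) i := by
      intro T
      rw [hL, ContinuousLinearMap.sum_apply]
      rfl
    rw [← hLa, hLx L x]
    have hLi := L.integrable_comp (hI x)
    obtain ⟨A, R, hS⟩ := Bog.ker_of_smooth (Θ := fun p => L (Bog.wd (Bog.KV θ ω) p))
      ((L.contDiff.comp (Bog.wd_contDiff hKV)).of_le (by norm_cast))
      ((Bog.wd_compact hKVc).comp_left (map_zero _))
    refine Bog.div_eq hθ hω hθc hωc hωint hfs hM hf hfi hf0 ?_ hS x ?_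
    · intro y w
      rw [hL, ContinuousLinearMap.sum_apply]
      exact Finset.sum_congr rfl fun i _ => Bog.ev_wd hθ hω _ i y w
    · refine hLi.congr (Eventually.of_forall fun s => ?_)
      beta_reduce
      rw [map_smul, Bog.q_clm hD hf L s x]
  · intro i j
    have e : (fun x => fderiv ℝ (fun x' => u x' i) x (EuclideanSpace.single j 1)) =
        fun x => ∫ s in Ioo (0:ℝ) 1, s⁻¹ • Bog.q
        (Bog.PsiK (fun w => θ w * w i) ω (EuclideanSpace.single j 1)) f s x := by
      funext x
      have h1 := ((EuclideanSpace.proj i : EuclideanSpace ℝ (Fin n) →L[ℝ] ℝ).hasFDerivAt.comp x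
        (hder x).differentiableAt.hasFDerivAt).fderiv
      have h2 : fderiv ℝ (fun x' => u x' i) x = (EuclideanSpace.proj i :
        EuclideanSpace ℝ (Fin n) →L[ℝ] ℝ).comp (fderiv ℝ u x) := h1
      rw [h2]
      have h3 := hLx (Bog.ev (EuclideanSpace.single j 1) i) x
      have h4 : (fun y w => Bog.ev (EuclideanSpace.single j 1) i (Bog.wd (Bog.KV θ ω) (y, w))) =
          Bog.PsiK (fun w => θ w * w i) ω (EuclideanSpace.single j 1) := by
        funext y w
        exact Bog.ev_wd hθ hω _ i y w
      rw [h4] at h3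
      exact h3
    rw [e]
    refine (Bog.bmo_le hM (C := C i j)
      (fun N hN => hC i j f M K β N hM huc hβ hβ1 hK0 hK hN)).trans ?_
    refine mul_le_mul_of_nonneg_right ?_ (Bog.bmo_nonneg f)
    have p : ∀ a b, 0 ≤ 2 * C a b := fun a b => by have := hC0 a b; positivity
    exact (Finset.single_le_sum (f := fun j => 2 * C i j) (fun b _ => p i b)
      (Finset.mem_univ j)).trans
      (Finset.single_le_sum (f := fun a => ∑ j, 2 * C a j)
        (fun a _ => Finset.sum_nonneg fun b _ => p a b) (Finset.mem_univ i))
end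

section
/- Let φ : ℝⁿ → ℝ be a C^∞ function. Then for every y ∈ Ω, φ(y) − ∫_{ℝⁿ} φ(x) ω(x) dx = − ∫_Ω G(x,y) · ∇φ(x) dx, where · denotes the Euclidean inner product and the integral on the right converges absolutely. -/
open MeasureTheory Metric Set Filter Topology
open scoped RealInnerProductSpace

/-- Joint integrability and change of variables `x = y + s (z - y)`. -/
theorem bog_cov {n : ℕ} {F : Type} [NormedAddCommGroup F] [NormedSpace ℝ F]
    (y : EuclideanSpace ℝ (Fin n)) (H : EuclideanSpace ℝ (Fin n) × ℝ → F) (hH : Continuous H)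
    (K : Set (EuclideanSpace ℝ (Fin n))) (hK : IsCompact K)
    (hHK : ∀ z s, z ∉ K → H (z, s) = 0) :
    Integrable H (volume.prod (volume.restrict (Ioo (0:ℝ) 1))) ∧
    (∀ s ∈ Ioo (0:ℝ) 1, ∫ x, (s ^ n)⁻¹ • H (y + s⁻¹ • (x - y), s) = ∫ z, H (z, s)) ∧
    Integrable (fun p : EuclideanSpace ℝ (Fin n) × ℝ =>
      (p.2 ^ n)⁻¹ • H (y + p.2⁻¹ • (p.1 - y), p.2))
      (volume.prod (volume.restrict (Ioo (0:ℝ) 1))) := by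
  have hcov : ∀ {F' : Type} [NormedAddCommGroup F'] [NormedSpace ℝ F']
      (f : EuclideanSpace ℝ (Fin n) → F'), ∀ s ∈ Ioo (0:ℝ) 1,
      ∫ x, (s ^ n)⁻¹ • f (y + s⁻¹ • (x - y)) = ∫ z, f z := by
    intro F' _ _ f s hs
    have hs0 : 0 < s := hs.1
    rw [integral_smul, integral_sub_right_eq_self (fun x => f (y + s⁻¹ • x)) y,
      Measure.integral_comp_inv_smul volume (fun x => f (y + x)) s,
      integral_add_left_eq_self f y, finrank_euclideanSpace_fin, smul_smul,
      abs_of_pos (pow_pos hs0 n), inv_mul_cancel₀ (pow_pos hs0 n).ne', one_smul]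
  have h1 : Integrable H (volume.prod (volume.restrict (Ioo (0:ℝ) 1))) := by
    have h0 : IntegrableOn H (K ×ˢ Icc (0:ℝ) 1) (volume.prod volume) :=
      hH.continuousOn.integrableOn_compact (hK.prod isCompact_Icc)
    have h0' : IntegrableOn H (K ×ˢ Ioo (0:ℝ) 1) (volume.prod volume) :=
      h0.mono_set (prod_mono le_rfl Ioo_subset_Icc_self)
    have : IntegrableOn H (univ ×ˢ Ioo (0:ℝ) 1) (volume.prod volume) := by
      refine h0'.of_forall_sdiff_eq_zero (MeasurableSet.univ.prod measurableSet_Ioo) ?_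
      rintro ⟨z, s⟩ ⟨hz, hz'⟩
      apply hHK
      intro hzK
      exact hz' ⟨hzK, hz.2⟩
    rwa [IntegrableOn, ← Measure.prod_restrict, Measure.restrict_univ] at this
  refine ⟨h1, fun s hs => hcov (fun z => H (z, s)) s hs, ?_⟩
  have hmeas : AEStronglyMeasurable (fun p : EuclideanSpace ℝ (Fin n) × ℝ =>
      (p.2 ^ n)⁻¹ • H (y + p.2⁻¹ • (p.1 - y), p.2))
      (volume.prod (volume.restrict (Ioo (0:ℝ) 1))) := by
    have hE : (volume : Measure (EuclideanSpace ℝ (Fin n))).prod (volume.restrict (Ioo (0:ℝ) 1))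
        = (volume.prod volume).restrict (univ ×ˢ Ioo (0:ℝ) 1) := by
      rw [← Measure.prod_restrict, Measure.restrict_univ]
    rw [hE]
    refine ContinuousOn.aestronglyMeasurable ?_ (MeasurableSet.univ.prod measurableSet_Ioo)
    have hinv : ContinuousOn (fun p : EuclideanSpace ℝ (Fin n) × ℝ => p.2⁻¹)
        (univ ×ˢ Ioo (0:ℝ) 1) :=
      continuousOn_snd.inv₀ (fun p hp => hp.2.1.ne')
    refine ContinuousOn.smul ?_ ?_
    · exact (continuousOn_snd.pow n).inv₀ (fun p hp => (pow_pos hp.2.1 n).ne')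
    · refine hH.comp_continuousOn (ContinuousOn.prodMk ?_ continuousOn_snd)
      exact continuousOn_const.add (hinv.smul (continuousOn_fst.sub continuousOn_const))
  rw [integrable_prod_iff' hmeas]
  constructor
  · filter_upwards [ae_restrict_mem measurableSet_Ioo] with s hs
    have hs0 : 0 < s := hs.1
    have hi : Integrable (fun z => H (z, s)) := by
      refine Continuous.integrable_of_hasCompactSupport (by fun_prop) ?_
      exact HasCompactSupport.intro hK (fun z hz => hHK z s hz)
    have h2 := ((hi.comp_add_left y).comp_smul (R := s⁻¹) (inv_ne_zero hs0.ne')).comp_sub_right y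
    exact h2.smul _
  · have h3 := h1.norm.integral_prod_right
    refine h3.congr ?_
    filter_upwards [ae_restrict_mem measurableSet_Ioo] with s hs
    rw [← hcov (fun z => ‖H (z, s)‖) s hs]
    congr 1
    ext x
    rw [norm_smul, Real.norm_of_nonneg (inv_nonneg.2 (pow_pos hs.1 n).le), smul_eq_mul]

/-- Representation formula: for any smooth `φ` and `y ∈ Ω`,
`φ(y) − ∫ φ ω = − ∫_Ω G(x,y) · ∇φ(x) dx`, the integral converging absolutely. -/
theorem bogovskii_representation_formula
    (n : ℕ) (hn : 2 ≤ n)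
    (Ω B : Set (EuclideanSpace ℝ (Fin n)))
    (hΩo : IsOpen Ω) (hΩb : Bornology.IsBounded Ω)
    (hBball : ∃ c r, 0 < r ∧ B = Metric.ball c r)
    (hBΩ : B ⊆ Ω)
    (hstar : ∀ x ∈ Ω, ∀ y ∈ B, segment ℝ x y ⊆ Ω)
    (ω : EuclideanSpace ℝ (Fin n) → ℝ)
    (hω : ContDiff ℝ (⊤ : ℕ∞) ω) (hωc : HasCompactSupport ω)
    (hωsupp : tsupport ω ⊆ B) (hωint : ∫ x, ω x = 1)
    (G : EuclideanSpace ℝ (Fin n) → EuclideanSpace ℝ (Fin n) → EuclideanSpace ℝ (Fin n))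
    (hG : ∀ x y, x ≠ y → G x y =
      ∫ s in Set.Ioo (0:ℝ) 1, ((s ^ n)⁻¹ * ω (y + s⁻¹ • (x - y))) • (s⁻¹ • (x - y)))
    (hGdiag : ∀ x, G x x = 0)
    (φ : EuclideanSpace ℝ (Fin n) → ℝ) (hφ : ContDiff ℝ (⊤ : ℕ∞) φ) :
    ∀ y ∈ Ω,
      IntegrableOn (fun x => ⟪G x y, gradient φ x⟫) Ω ∧
      φ y - ∫ x, φ x * ω x = - ∫ x in Ω, ⟪G x y, gradient φ x⟫ := by
  intro y hy
  have hgrad : Continuous (gradient φ) := by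
    have : Continuous (fderiv ℝ φ) := hφ.continuous_fderiv (by simp)
    exact (InnerProductSpace.toDual ℝ (EuclideanSpace ℝ (Fin n))).symm.continuous.comp this
  have hωcont : Continuous ω := hω.continuous
  have hφcont : Continuous φ := hφ.continuous
  have hωK : ∀ z, z ∉ tsupport ω → ω z = 0 := fun z hz => image_eq_zero_of_notMem_tsupport hz
  obtain ⟨-, -, hi1⟩ := bog_cov y (fun p => ω p.1 • (p.1 - y)) (by fun_prop) (tsupport ω) hωc
    (fun z s hz => by simp [hωK z hz])
  obtain ⟨hi2, hc2, hi3⟩ := bog_cov y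
    (fun p => ω p.1 * ⟪p.1 - y, gradient φ (y + p.2 • (p.1 - y))⟫) (by fun_prop) (tsupport ω) hωc
    (fun z s hz => by simp [hωK z hz])
  -- the inner product with `G` as an integral
  have : Nonempty (Fin n) := ⟨⟨0, by omega⟩⟩
  have hne : ∀ᵐ x : EuclideanSpace ℝ (Fin n), x ≠ y := by
    have : Nontrivial (EuclideanSpace ℝ (Fin n)) := inferInstance
    exact Measure.ae_ne volume y
  have hGeq : (fun x => ⟪G x y, gradient φ x⟫) =ᵐ[volume] fun x =>
      ∫ s in Ioo (0:ℝ) 1, (s ^ n)⁻¹ • (ω (y + s⁻¹ • (x - y)) *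
        ⟪y + s⁻¹ • (x - y) - y, gradient φ (y + s • (y + s⁻¹ • (x - y) - y))⟫) := by
    filter_upwards [hne, hi1.prod_right_ae] with x hx hint
    rw [hG x y hx, real_inner_comm]
    have hint' : Integrable (fun s : ℝ => ((s ^ n)⁻¹ * ω (y + s⁻¹ • (x - y))) • (s⁻¹ • (x - y)))
        (volume.restrict (Ioo (0:ℝ) 1)) := by
      refine hint.congr (Eventually.of_forall fun s => ?_)
      simp [smul_smul, mul_assoc]
    rw [← integral_inner hint']
    refine setIntegral_congr_fun measurableSet_Ioo fun s hs => ?_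
    have hs0 : s ≠ 0 := hs.1.ne'
    have e1 : y + s • (y + s⁻¹ • (x - y) - y) = x := by
      rw [add_sub_cancel_left, smul_smul, mul_inv_cancel₀ hs0, one_smul, add_sub_cancel]
    beta_reduce
    rw [e1, add_sub_cancel_left, inner_smul_right, real_inner_comm, smul_eq_mul, mul_assoc]
  have hIG : Integrable (fun x => ⟪G x y, gradient φ x⟫) := hi3.integral_prod_left.congr hGeq.symm
  refine ⟨hIG.integrableOn, ?_⟩
  have hout : ∀ x, x ∉ Ω → ⟪G x y, gradient φ x⟫ = 0 := by
    intro x hx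
    have hxy : x ≠ y := fun h => hx (h ▸ hy)
    rw [hG x y hxy, setIntegral_eq_zero_of_forall_eq_zero, inner_zero_left]
    intro s hs
    have : ω (y + s⁻¹ • (x - y)) = 0 := by
      by_contra h0
      have hz : y + s⁻¹ • (x - y) ∈ B := hωsupp (subset_tsupport ω h0)
      apply hx
      refine hstar y hy _ hz ?_
      rw [segment_eq_image']
      refine ⟨s, ⟨hs.1.le, hs.2.le⟩, ?_⟩
      beta_reduce
      rw [add_sub_cancel_left, smul_smul, mul_inv_cancel₀ hs.1.ne', one_smul, add_sub_cancel]
    simp [this]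
  rw [setIntegral_eq_integral_of_forall_compl_eq_zero hout, integral_congr_ae hGeq,
    integral_integral_swap hi3, setIntegral_congr_fun measurableSet_Ioo hc2,
    ← integral_integral_swap hi2]
  have hline : ∀ z, ∫ s in Ioo (0:ℝ) 1, ω z * ⟪z - y, gradient φ (y + s • (z - y))⟫
      = φ z * ω z - φ y * ω z := by
    intro z
    rw [integral_const_mul, ← integral_Ioc_eq_integral_Ioo,
      ← intervalIntegral.integral_of_le zero_le_one,
      intervalIntegral.integral_eq_sub_of_hasDerivAt (f := fun s : ℝ => φ (y + s • (z - y)))]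
    · simp; ring
    · intro s _
      have hd : HasFDerivAt φ (fderiv ℝ φ (y + s • (z - y))) (y + s • (z - y)) :=
        ((hφ.differentiable (by simp)) _).hasFDerivAt
      have hl : HasDerivAt (fun s : ℝ => y + s • (z - y)) (z - y) s := by
        simpa using ((hasDerivAt_id s).smul_const (z - y)).const_add y
      have h := hd.comp_hasDerivAt s hl
      have e : ⟪z - y, gradient φ (y + s • (z - y))⟫ = fderiv ℝ φ (y + s • (z - y)) (z - y) := by
        rw [real_inner_comm, gradient, InnerProductSpace.toDual_symm_apply]
      rw [e]
      exact h
    · apply Continuous.intervalIntegrable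
      fun_prop
  simp only [hline]
  have hcs : ∀ f : EuclideanSpace ℝ (Fin n) → ℝ, Continuous f → Integrable (fun z => f z * ω z) :=
    fun f hf => (hf.mul hωcont).integrable_of_hasCompactSupport hωc.mul_left
  rw [integral_sub (hcs φ hφcont) (hcs (fun _ => φ y) continuous_const), integral_const_mul,
    hωint]
  ring
end
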